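/- Let ℓ be an odd prime, q a prime power coprime to ℓ, r and n_0 positive integers, and g ∈ GL(n_0, F_q). Then the proportion of irreducible complex characters χ of GL(n, F_q) such that ℓ^r does not divide χ(g) tends to 0 as n → ∞: lim_{n→∞} #{χ ∈ Irr(GL(n,q)) : ℓ^r ∤ χ(g)} / |Irr(GL(n,q))| = 0. -/

import Mathlib

open Matrix

noncomputable def blockOneHom (F : Type*) [Field F] (n₀ n : ℕ) (h : n₀ ≤ n) :
    Matrix (Fin n₀) (Fin n₀) F →* Matrix (Fin n) (Fin n) F :=
  (Matrix.reindexAlgEquiv F F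
      ((finSumFinEquiv (m := n₀) (n := n - n₀)).trans
        (finCongr (Nat.add_sub_cancel' h)))).toAlgHom.toMonoidHom.comp
    { toFun := fun A => Matrix.fromBlocks A 0 0 (1 : Matrix (Fin (n - n₀)) (Fin (n - n₀)) F)
      map_one' := by simp [Matrix.fromBlocks_one]
      map_mul' := fun A B => by
        simp [Matrix.fromBlocks_multiply] }

noncomputable def glEmbed {F : Type*} [Field F] {n₀ n : ℕ} (h : n₀ ≤ n) :
    GL (Fin n₀) F →* GL (Fin n) F :=
  Units.map (blockOneHom F n₀ n h)

def IsIrrChar (G : Type) [Group G] (f : G → ℂ) : Prop :=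
  ∃ V : FDRep ℂ G, CategoryTheory.Simple V ∧ FDRep.character V = f

/-- `d` divides the algebraic number `z`, i.e. `z / d` is an algebraic integer. -/
def NatDvdAlg (d : ℕ) (z : ℂ) : Prop := IsIntegral ℤ (z / (d : ℂ))

/-!
Parabolic induction and Jacquet restriction are organised as in Zelevinsky's theory, through the
multiplicity `jacquetMult σ τ χ` of `σ ⊗ τ` in the Jacquet restriction of `χ`. If `χ` involves a
cuspidal `σ` of size much larger than `n₀`, then `L ∣ χ(g)`. First, the Fitting decomposition of
`g - 1` together with the expansion of `χ` along two blocks without common eigenvalues reduces to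
`g = u ⊕ 1` with `u` unipotent. Then choose a matrix `c` of order `L` such that `c ^ j - 1` is
invertible for `0 < j < L`: the average of `χ` over the matrices `u ⊕ c ^ j ⊕ 1` is an algebraic
integer, and the terms with `j ≠ 0` are multiples of `L` by the block expansion and induction.

Hence all cuspidal constituents of a bad `χ` lie in a fixed finite set `T`, and it remains to see
that `T` supports few characters. By the Mackey formula the operators `U σ` of induction and `D σ`
of restriction by cuspidals satisfy `D ρ * U σ = δ + U σ * D ρ`. It follows that `[U ρ, U σ]`
commutes with its adjoint, which forces restrictions along distinct cuspidals to commute, and that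
the number of characters of `GL(n, F)` supported on `T` is `o(q ^ n)`. In contrast, `GL(n, F)` has
at least `q ^ n / 2` conjugacy classes, as one sees from characteristic polynomials.
-/

/-! ### Irreducible characters of a finite group -/

section FiniteGroups

open CategoryTheory Module

theorem trace_mulLeftRight_pi_matrix {R I : Type*} [CommRing R] [Fintype I] {m : I → Type*}
    [∀ i, Fintype (m i)] (X Y : ∀ i, Matrix (m i) (m i) R) :
    LinearMap.trace R _ (LinearMap.mulLeftRight R (X, Y)) = ∑ i, (X i).trace * (Y i).trace := by
  classical
  have repr_apply (i : I) (M : Matrix (m i) (m i) R) (a b : m i) :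
      (stdBasis R (m i) (m i)).repr M (a, b) = M a b := rfl
  rw [LinearMap.trace_eq_matrix_trace R (Pi.basis fun i => stdBasis R (m i) (m i))]
  simp only [Matrix.trace, diag, LinearMap.toMatrix_apply, Fintype.sum_sigma,
    Fintype.sum_prod_type, Finset.sum_mul_sum]
  refine Finset.sum_congr rfl fun i _ => Finset.sum_congr rfl fun a _ =>
    Finset.sum_congr rfl fun b _ => ?_
  simp only [Pi.basis_apply, stdBasis_eq_single, LinearMap.mulLeftRight_apply, Pi.basis_repr,
    Pi.mul_apply, Pi.single_eq_same, repr_apply]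
  simp [Matrix.mul_apply, single_apply, ite_and]

theorem trace_mulLeftRight_monoidAlgebra_of {R G : Type*} [CommRing R] [Group G] [Finite G]
    (x y : G) :
    LinearMap.trace R (MonoidAlgebra R G) (LinearMap.mulLeftRight R
      (MonoidAlgebra.of R G x, MonoidAlgebra.of R G y⁻¹)) = Nat.card {h : G // x * h = h * y} := by
  classical
  have := Fintype.ofFinite G
  have repr_apply (M : MonoidAlgebra R G) (h : G) :
      (MonoidAlgebra.basis G R).repr M h = M.coeff h := rfl
  rw [LinearMap.trace_eq_matrix_trace R (MonoidAlgebra.basis G R), Nat.card_eq_fintype_card,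
    Fintype.card_subtype, Finset.card_filter, Nat.cast_sum]
  simp only [Matrix.trace, diag, LinearMap.toMatrix_apply, repr_apply]
  refine Finset.sum_congr rfl fun h _ => ?_
  simp [LinearMap.mulLeftRight_apply, MonoidAlgebra.single_mul_single,
    MonoidAlgebra.coeff_single, Finsupp.single_apply, mul_inv_eq_iff_eq_mul]

/-- The irreducible complex characters of `G`. -/
abbrev Irr (G : Type) [Group G] := {χ : G → ℂ // IsIrrChar G χ}

section Wedderburn

variable {G : Type} [Group G] {n : ℕ} {d : Fin n → ℕ}
  (e : MonoidAlgebra ℂ G ≃ₐ[ℂ] Π i, Matrix (Fin (d i)) (Fin (d i)) ℂ)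

/-- The representation of `G` on the column space of the `i`-th matrix factor of a Wedderburn
decomposition of its group algebra. -/
noncomputable def wedderburnRep (i : Fin n) : FDRep ℂ G :=
  FDRep.of (V := Fin (d i) → ℂ) <|
    ((toLinAlgEquiv' (R := ℂ) (n := Fin (d i))).toAlgHom.comp
      ((Pi.evalAlgHom ℂ (fun i => Matrix (Fin (d i)) (Fin (d i)) ℂ) i).comp
        e.toAlgHom)).toMonoidHom.comp (MonoidAlgebra.of ℂ G)

theorem wedderburnRep_character (i : Fin n) (g : G) :
    (wedderburnRep e i).character g = (e (MonoidAlgebra.of ℂ G g) i).trace :=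
  trace_toLin'_eq _

theorem wedderburnRep_character_one (i : Fin n) : (wedderburnRep e i).character 1 = d i := by
  rw [wedderburnRep_character, map_one, map_one]
  simp

theorem sum_wedderburnRep_character_mul_inv [Finite G] (x y : G) :
    ∑ i, (wedderburnRep e i).character x * (wedderburnRep e i).character y⁻¹ =
      Nat.card {h : G // x * h = h * y} := by
  have conj_mulLeftRight : e.toLinearEquiv.conj (LinearMap.mulLeftRight ℂ
      (MonoidAlgebra.of ℂ G x, MonoidAlgebra.of ℂ G y⁻¹)) = LinearMap.mulLeftRight ℂ
        (e (MonoidAlgebra.of ℂ G x), e (MonoidAlgebra.of ℂ G y⁻¹)) :=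
    LinearMap.ext fun a => by simp [LinearEquiv.conj_apply, LinearMap.mulLeftRight_apply]
  simp_rw [wedderburnRep_character]
  rw [← trace_mulLeftRight_monoidAlgebra_of, ← LinearMap.trace_conj' _ e.toLinearEquiv,
    conj_mulLeftRight, trace_mulLeftRight_pi_matrix]

end Wedderburn

theorem sum_card_intertwiners_mul {G : Type*} [Group G] [Fintype G] {f : G → ℂ}
    (hf : ∀ g h, f (h * g * h⁻¹) = f g) (x : G) :
    ∑ y, (Nat.card {h : G // x * h = h * y} : ℂ) * f y = Nat.card G * f x := by
  classical
  have inner_sum (h : G) : ∑ y, (if x * h = h * y then f y else 0) = f x := by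
    rw [Finset.sum_eq_single (h⁻¹ * x * h)]
    · simpa [mul_assoc] using hf x h⁻¹
    · exact fun y _ hy => if_neg fun hxy => hy (by rw [mul_assoc, hxy, inv_mul_cancel_left])
    · simp
  simp_rw [Nat.card_eq_fintype_card, Fintype.card_subtype, Finset.card_filter, Nat.cast_sum,
    Finset.sum_mul, Nat.cast_ite, Nat.cast_one, Nat.cast_zero, ite_mul, one_mul, zero_mul]
  rw [Finset.sum_comm]
  simp [inner_sum]

theorem natCard_cast_ne_zero (G : Type*) [Nonempty G] [Finite G] : (Nat.card G : ℂ) ≠ 0 :=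
  Nat.cast_ne_zero.mpr Nat.card_pos.ne'

section CompleteFamily

variable {G : Type} [Group G]

theorem finrank_end_pos_of_character_one_ne_zero {V : FDRep ℂ G} (hV : V.character 1 ≠ 0) :
    0 < finrank ℂ (V ⟶ V) := by
  rw [FDRep.char_one, Nat.cast_ne_zero, ← Nat.pos_iff_ne_zero, finrank_pos_iff] at hV
  obtain ⟨v, hv⟩ := exists_ne (0 : V)
  have id_ne_zero : 𝟙 V ≠ 0 := fun h => hv (congrArg (fun f : V ⟶ V => f.hom v) h)
  have := nontrivial_of_ne _ _ id_ne_zero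
  exact finrank_pos

variable {I : Type*} [Fintype I] {V : I → FDRep ℂ G}

/-- A family of representations that satisfies the second orthogonality relation. By
`finrank_hom_eq_ite` and `exists_character_eq` it consists of one copy of each irreducible one,
provided it contains no zero representation. -/
def HasColumnOrthogonality (V : I → FDRep ℂ G) : Prop :=
  ∀ x y : G, ∑ i, (V i).character x * (V i).character y⁻¹ = Nat.card {h : G // x * h = h * y}

namespace HasColumnOrthogonality

variable [Finite G]

theorem character_eq_sum_finrank_mul (hV : HasColumnOrthogonality V) (W : FDRep ℂ G) (x : G) :
    W.character x = ∑ i, (finrank ℂ (V i ⟶ W) : ℂ) * (V i).character x := by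
  have := Fintype.ofFinite G
  have hG := natCard_cast_ne_zero G
  have := invertibleOfNonzero hG
  simp_rw [← FDRep.scalar_product_char_eq_finrank_equivariant]
  rw [← mul_right_inj' hG]
  calc (Nat.card G : ℂ) * W.character x
      = ∑ y, (∑ i, (V i).character x * (V i).character y⁻¹) * W.character y := by
        simp_rw [hV x]
        exact (sum_card_intertwiners_mul (fun g h => W.char_conj g h) x).symm
    _ = ∑ i, ∑ y, (V i).character x * (V i).character y⁻¹ * W.character y := by
        simp_rw [Finset.sum_mul]
        exact Finset.sum_comm
    _ = _ := by
        simp_rw [Finset.mul_sum, Finset.sum_mul, Finset.mul_sum]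
        refine Finset.sum_congr rfl fun i _ => Finset.sum_congr rfl fun y _ => ?_
        field_simp

theorem finrank_hom_eq_ite [DecidableEq I] (hV : HasColumnOrthogonality V)
    (h1 : ∀ i, (V i).character 1 ≠ 0) (i j : I) :
    finrank ℂ (V j ⟶ V i) = if j = i then 1 else 0 := by
  let N (j : I) : ℕ := finrank ℂ (V j ⟶ V i)
  let d (j : I) : ℕ := finrank ℂ (V j)
  have d_pos (j : I) : 0 < d j :=
    Nat.pos_of_ne_zero fun h => h1 j (by rw [FDRep.char_one]; exact_mod_cast h)
  have degree_eq : d i = ∑ j, N j * d j := by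
    have := hV.character_eq_sum_finrank_mul (V i) 1
    simp_rw [FDRep.char_one] at this
    exact_mod_cast this
  have le_self : 1 * d i ≤ N i * d i :=
    Nat.mul_le_mul_right _ (finrank_end_pos_of_character_one_ne_zero (h1 i))
  rw [← Finset.add_sum_erase _ _ (Finset.mem_univ i)] at degree_eq
  have rest_eq_zero : ∑ j ∈ Finset.univ.erase i, N j * d j = 0 := by lia
  split_ifs with hij
  · subst hij
    exact Nat.eq_of_mul_eq_mul_right (d_pos j) (by lia)
  · have term_eq_zero := Finset.sum_eq_zero_iff.mp rest_eq_zero j (by simp [hij])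
    exact (Nat.mul_eq_zero.mp term_eq_zero).resolve_right (d_pos j).ne'

theorem simple (hV : HasColumnOrthogonality V) (h1 : ∀ i, (V i).character 1 ≠ 0) (i : I) :
    Simple (V i) := by
  classical
  rw [FDRep.simple_iff_end_is_rank_one, hV.finrank_hom_eq_ite h1, if_pos rfl]

theorem character_injective (hV : HasColumnOrthogonality V)
    (h1 : ∀ i, (V i).character 1 ≠ 0) :
    Function.Injective fun i => (V i).character := by
  classical
  have := Fintype.ofFinite G
  have := invertibleOfNonzero (natCard_cast_ne_zero G)
  intro i j (hij : (V i).character = (V j).character)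
  have hi := FDRep.scalar_product_char_eq_finrank_equivariant (V j) (V i)
  rw [hij, FDRep.scalar_product_char_eq_finrank_equivariant, hV.finrank_hom_eq_ite h1,
    hV.finrank_hom_eq_ite h1, if_pos rfl, Nat.cast_inj] at hi
  by_contra hne
  simp [Ne.symm hne] at hi

theorem exists_character_eq (hV : HasColumnOrthogonality V)
    (h1 : ∀ i, (V i).character 1 ≠ 0) (W : FDRep ℂ G) [Simple W] :
    ∃ i, (V i).character = W.character := by
  have := Fintype.ofFinite G
  have hG := natCard_cast_ne_zero G
  have := invertibleOfNonzero hG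
  by_contra! hne
  have finrank_eq_zero (i : I) : (finrank ℂ (V i ⟶ W) : ℂ) = 0 := by
    have := hV.simple h1 i
    rw [← FDRep.scalar_product_char_eq_finrank_equivariant, FDRep.char_orthonormal, if_neg]
    rintro ⟨f⟩
    exact hne i (FDRep.char_iso f).symm
  have character_eq_zero : W.character = 0 := by
    ext x
    simp [hV.character_eq_sum_finrank_mul W x, finrank_eq_zero]
  have norm_one := (FDRep.simple_iff_char_is_norm_one W).mp inferInstance
  exact hG (by simpa [character_eq_zero] using norm_one.symm)

end HasColumnOrthogonality

end CompleteFamily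

theorem exists_bijective_irr_hasColumnOrthogonality (G : Type) [Group G] [Finite G] :
    ∃ (n : ℕ) (χ : Fin n → Irr G), Function.Bijective χ ∧ ∀ x y : G,
      ∑ i, (χ i).1 x * (χ i).1 y⁻¹ = Nat.card {h : G // x * h = h * y} := by
  obtain ⟨n, d, hd, ⟨e⟩⟩ :=
    IsSemisimpleRing.exists_algEquiv_pi_matrix_of_isAlgClosed ℂ (MonoidAlgebra ℂ G)
  have hV : HasColumnOrthogonality (wedderburnRep e) := sum_wedderburnRep_character_mul_inv e
  have character_one_ne_zero (i : Fin n) : (wedderburnRep e i).character 1 ≠ 0 := by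
    rw [wedderburnRep_character_one, Nat.cast_ne_zero]
    exact (hd i).out
  refine ⟨n, fun i => ⟨(wedderburnRep e i).character, _, hV.simple character_one_ne_zero i, rfl⟩,
    ⟨fun i j hij => hV.character_injective character_one_ne_zero (congrArg Subtype.val hij), ?_⟩,
    hV⟩
  rintro ⟨_, W, hW, rfl⟩
  obtain ⟨i, hi⟩ := hV.exists_character_eq character_one_ne_zero W
  exact ⟨i, Subtype.ext hi⟩

namespace Irr

variable {G : Type} [Group G]

instance [Finite G] : Finite (Irr G) := by
  obtain ⟨n, χ, hχ, -⟩ := exists_bijective_irr_hasColumnOrthogonality G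
  exact Finite.of_surjective χ hχ.2

noncomputable instance [Finite G] : Fintype (Irr G) := Fintype.ofFinite _

theorem column_orthogonality [Finite G] (x y : G) :
    ∑ χ : Irr G, χ.1 x * χ.1 y⁻¹ = Nat.card {h : G // x * h = h * y} := by
  obtain ⟨n, χ, hχ, orthogonality⟩ := exists_bijective_irr_hasColumnOrthogonality G
  rw [← (Equiv.ofBijective χ hχ).sum_comp]
  exact orthogonality x y

theorem row_orthogonality [Fintype G] [DecidableEq (Irr G)] (χ ψ : Irr G) :
    ∑ x, χ.1 x * ψ.1 x⁻¹ = if χ = ψ then (Nat.card G : ℂ) else 0 := by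
  have hG := natCard_cast_ne_zero G
  have := invertibleOfNonzero hG
  obtain ⟨_, V, hV, rfl⟩ := χ
  obtain ⟨_, W, hW, rfl⟩ := ψ
  split_ifs with hVW
  · have hVW : V.character = W.character := congrArg Subtype.val hVW
    simpa only [← hVW] using (FDRep.simple_iff_char_is_norm_one V).mp hV
  · have orthonormal := FDRep.char_orthonormal V W
    rw [if_neg fun ⟨f⟩ => hVW (Subtype.ext (FDRep.char_iso f))] at orthonormal
    exact (mul_eq_zero.mp orthonormal).resolve_left (inv_ne_zero hG)

theorem apply_conj (χ : Irr G) (g h : G) : χ.1 (h * g * h⁻¹) = χ.1 g := by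
  obtain ⟨_, V, -, rfl⟩ := χ
  exact V.char_conj g h

theorem card_eq_card_conjClasses (G : Type) [Group G] [Finite G] :
    Nat.card (Irr G) = Nat.card (ConjClasses G) := by
  classical
  have := Fintype.ofFinite G
  have card_commuting : ∑ x : G, Nat.card {h : G // x * h = h * x} =
      Nat.card {p : G × G // Commute p.1 p.2} := by
    rw [← Nat.card_sigma]
    exact Nat.card_congr ⟨fun p => ⟨(p.1, p.2.1), p.2.2⟩, fun p => ⟨p.1.1, p.1.2, p.2⟩,
      fun _ => rfl, fun _ => rfl⟩
  have sum_norm : ∑ x : G, ∑ χ : Irr G, χ.1 x * χ.1 x⁻¹ = Nat.card (Irr G) * Nat.card G := by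
    rw [Finset.sum_comm]
    simp [row_orthogonality]
  simp_rw [column_orthogonality] at sum_norm
  refine Nat.eq_of_mul_eq_mul_right (Nat.card_pos (α := G)) ?_
  rw [← card_comm_eq_card_conjClasses_mul_card, ← card_commuting]
  exact_mod_cast sum_norm.symm

/-- The average is the dimension of `Hom_P(σ ⊗ τ, χ)`. -/
theorem exists_nat_eq_average_mul_inv {P H K : Type} [Group P] [Fintype P] [Group H] [Group K]
    (φ : P →* G) (α : P →* H) (β : P →* K) (χ : Irr G) (σ : Irr H) (τ : Irr K) :
    ∃ m : ℕ, (Nat.card P : ℂ)⁻¹ * ∑ p, χ.1 (φ p) * (σ.1 (α p)⁻¹ * τ.1 (β p)⁻¹) = m := by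
  have := invertibleOfNonzero (natCard_cast_ne_zero P)
  obtain ⟨_, V, -, rfl⟩ := χ
  obtain ⟨_, W, -, rfl⟩ := σ
  obtain ⟨_, U, -, rfl⟩ := τ
  refine ⟨_, Eq.trans ?_ (FDRep.scalar_product_char_eq_finrank_equivariant
    (FDRep.of (Representation.tprod (W.ρ.comp α) (U.ρ.comp β))) (FDRep.of (V.ρ.comp φ)))⟩
  refine congrArg _ (Finset.sum_congr rfl fun p _ => congrArg _ (Eq.trans ?_
    (congrFun (Representation.char_tensor (W.ρ.comp α) (U.ρ.comp β)) p⁻¹).symm))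
  simp [Representation.character, FDRep.character]

theorem exists_degree [Finite G] (χ : Irr G) : ∃ d : ℕ, 0 < d ∧ χ.1 1 = d := by
  obtain ⟨_, V, hV, rfl⟩ := χ
  refine ⟨_, ?_, V.char_one⟩
  rw [finrank_pos_iff, ← not_subsingleton_iff_nontrivial]
  intro hsub
  exact id_nonzero V (by ext v; exact Subsingleton.elim _ _)

end Irr

theorem isIntegral_trace_of_pow_succ_eq_self {V : Type*} [AddCommGroup V] [Module ℂ V]
    [FiniteDimensional ℂ V] (A : End ℂ V) {s : ℕ} (hs : 0 < s) (hA : A ^ (s + 1) = A) :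
    IsIntegral ℤ (LinearMap.trace ℂ V A) := by
  rw [Module.End.trace_eq_sum_roots_charpoly_of_splits (IsAlgClosed.splits _)]
  refine IsIntegral.multiset_sum fun μ hμ => ?_
  have hasEigenvalue : A.HasEigenvalue μ := by
    rw [Module.End.hasEigenvalue_iff_isRoot_charpoly]
    exact Polynomial.isRoot_of_mem_roots hμ
  obtain ⟨v, hv⟩ := hasEigenvalue.exists_hasEigenvector
  have pow_apply := hv.pow_apply (s + 1)
  rw [hA, hv.apply_eq_smul] at pow_apply
  have eq_pow : μ = μ ^ (s + 1) := smul_left_injective ℂ hv.2 pow_apply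
  refine ⟨Polynomial.X ^ (s + 1) - Polynomial.X, Polynomial.monic_X_pow_sub ?_, ?_⟩
  · rw [Polynomial.degree_X]
    exact_mod_cast Nat.succ_lt_succ hs
  · simp [← eq_pow]

theorem isIdempotentElem_average_pow {A : Type*} [Ring A] [Algebra ℂ A] {c : A} {m : ℕ}
    (hm : 0 < m) (hc : c ^ m = 1) :
    IsIdempotentElem ((m : ℂ)⁻¹ • ∑ j ∈ Finset.range m, c ^ j) := by
  set e := (m : ℂ)⁻¹ • ∑ j ∈ Finset.range m, c ^ j with he
  have mul_average : c * e = e := by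
    simp only [he, mul_smul_comm, Finset.mul_sum, ← pow_succ']
    congr 1
    have := Finset.sum_range_succ (fun j => c ^ j) m
    rw [Finset.sum_range_succ'] at this
    simpa [hc] using this
  have pow_mul_average (j : ℕ) : c ^ j * e = e := by
    induction j with
    | zero => simp
    | succ j ih => rw [pow_succ, mul_assoc, mul_average, ih]
  have hm' : (m : ℂ) ≠ 0 := Nat.cast_ne_zero.mpr hm.ne'
  rw [IsIdempotentElem]
  nth_rewrite 1 [he]
  rw [smul_mul_assoc, Finset.sum_mul, Finset.sum_congr rfl fun j _ => pow_mul_average j,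
    Finset.sum_const, Finset.card_range, ← Nat.cast_smul_eq_nsmul ℂ, smul_smul,
    inv_mul_cancel₀ hm', one_smul]

namespace Irr

variable {G : Type} [Group G] [Finite G]

-- The average is the trace of `y` on the subspace of `c`-fixed vectors.
theorem isIntegral_average_mul_pow (χ : Irr G) {y c : G} (hyc : Commute y c) {m : ℕ}
    (hm : 0 < m) (hc : c ^ m = 1) :
    IsIntegral ℤ ((m : ℂ)⁻¹ * ∑ j ∈ Finset.range m, χ.1 (y * c ^ j)) := by
  obtain ⟨_, V, -, rfl⟩ := χ
  let e : End ℂ V := (m : ℂ)⁻¹ • ∑ j ∈ Finset.range m, V.ρ c ^ j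
  have he : IsIdempotentElem e := isIdempotentElem_average_pow hm (by rw [← map_pow, hc, map_one])
  have hye : Commute (V.ρ y) e :=
    (Commute.sum_right _ _ _ fun j _ => (hyc.map V.ρ).pow_right j).smul_right _
  have pow_succ_eq : (V.ρ y * e) ^ (Nat.card G + 1) = V.ρ y * e := by
    rw [hye.mul_pow, he.pow_succ_eq, ← map_pow, pow_succ, pow_card_eq_one', one_mul]
  convert isIntegral_trace_of_pow_succ_eq_self (V.ρ y * e) Nat.card_pos pow_succ_eq using 1
  simp [e, Finset.mul_sum, FDRep.character, map_sum]

end Irr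

end FiniteGroups

/-! ### Characters of all general linear groups over a field -/

section Framework

/-- An isomorphism `F^κ ≃ F^ι`, given as a pair of mutually inverse, possibly rectangular matrices.
It lets blocks of matrices be conjugated without choosing bijections between index types. -/
structure MatrixIso (F ι κ : Type*) [Field F] [Fintype ι] [DecidableEq ι] [Fintype κ]
    [DecidableEq κ] where
  mat : Matrix ι κ F
  inv : Matrix κ ι F
  mat_mul_inv : mat * inv = 1
  inv_mul_mat : inv * mat = 1

namespace MatrixIso

variable {F ι κ μ ν : Type*} [Field F] [Fintype ι] [DecidableEq ι] [Fintype κ] [DecidableEq κ]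
  [Fintype μ] [DecidableEq μ] [Fintype ν] [DecidableEq ν]

attribute [simp] mat_mul_inv inv_mul_mat

@[ext]
theorem ext {a b : MatrixIso F ι κ} (h : a.mat = b.mat) : a = b := by
  obtain ⟨A, A', hA, hA'⟩ := a
  obtain ⟨B, B', hB, hB'⟩ := b
  obtain rfl : A = B := h
  have : A' = B' := by rw [← Matrix.mul_one A', ← hB, ← Matrix.mul_assoc, hA', Matrix.one_mul]
  subst this
  rfl

@[simp]
theorem mat_mul_inv_cancel_left {m : Type*} (a : MatrixIso F ι κ) (M : Matrix ι m F) :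
    a.mat * (a.inv * M) = M := by
  rw [← Matrix.mul_assoc, a.mat_mul_inv, Matrix.one_mul]

@[simp]
theorem inv_mul_mat_cancel_left {m : Type*} (a : MatrixIso F ι κ) (M : Matrix κ m F) :
    a.inv * (a.mat * M) = M := by
  rw [← Matrix.mul_assoc, a.inv_mul_mat, Matrix.one_mul]

instance [Finite F] : Finite (MatrixIso F ι κ) := Finite.of_injective mat fun _ _ => MatrixIso.ext

noncomputable instance [Finite F] : Fintype (MatrixIso F ι κ) := Fintype.ofFinite _

theorem card_eq (a : MatrixIso F ι κ) : Fintype.card ι = Fintype.card κ :=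
  square_of_invertible a.mat a.inv a.mat_mul_inv a.inv_mul_mat

/-- The inverse isomorphism. -/
@[simps]
def symm (a : MatrixIso F ι κ) : MatrixIso F κ ι := ⟨a.inv, a.mat, a.inv_mul_mat, a.mat_mul_inv⟩

/-- Composition, in the order of the matrix product. -/
@[simps]
def trans (a : MatrixIso F ι κ) (b : MatrixIso F κ μ) : MatrixIso F ι μ where
  mat := a.mat * b.mat
  inv := b.inv * a.inv
  mat_mul_inv := by simp [Matrix.mul_assoc]
  inv_mul_mat := by simp [Matrix.mul_assoc]

/-- The permutation matrix of a bijection between index types. -/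
@[simps]
def ofEquiv (e : ι ≃ κ) : MatrixIso F ι κ where
  mat := (1 : Matrix ι ι F).submatrix id e.symm
  inv := (1 : Matrix ι ι F).submatrix e.symm id
  mat_mul_inv := by rw [submatrix_mul_equiv]; simp
  inv_mul_mat := by rw [← submatrix_mul _ _ _ id _ Function.bijective_id]; simp

theorem ofEquiv_conj (e : ι ≃ κ) (M : Matrix κ κ F) :
    (ofEquiv (F := F) e).mat * M * (ofEquiv (F := F) e).inv = M.submatrix e e := by
  ext i j
  simp [Matrix.mul_apply, Matrix.one_apply, Equiv.eq_symm_apply, Equiv.symm_apply_eq]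

theorem nonempty_of_card_eq (h : Fintype.card ι = Fintype.card κ) :
    Nonempty (MatrixIso F ι κ) :=
  ⟨ofEquiv (Fintype.equivOfCardEq h)⟩

/-- Self-isomorphisms are the elements of the general linear group. -/
@[simps]
def equivGL : MatrixIso F ι ι ≃ GL ι F where
  toFun a := ⟨a.mat, a.inv, a.mat_mul_inv, a.inv_mul_mat⟩
  invFun u := ⟨u.val, u.inv, u.val_inv, u.inv_val⟩

/-- Transport of isomorphisms along isomorphisms of source and target. -/
@[simps]
def arrowCongr (a : MatrixIso F ι μ) (b : MatrixIso F κ ν) :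
    MatrixIso F ι κ ≃ MatrixIso F μ ν where
  toFun h := (a.symm.trans h).trans b
  invFun h := (a.trans h).trans b.symm
  left_inv h := by ext1; simp [Matrix.mul_assoc]
  right_inv h := by ext1; simp [Matrix.mul_assoc]

/-- Conjugation by an isomorphism, from the endomorphisms of its source to those of its target. -/
@[simps]
def conjRingEquiv (a : MatrixIso F ι κ) : Matrix κ κ F ≃+* Matrix ι ι F where
  toFun M := a.mat * M * a.inv
  invFun M := a.inv * M * a.mat
  left_inv M := by simp [Matrix.mul_assoc]
  right_inv M := by simp [Matrix.mul_assoc]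
  map_mul' M N := by simp [Matrix.mul_assoc]
  map_add' M N := by rw [Matrix.mul_add, Matrix.add_mul]

/-- Conjugation by an isomorphism, on the general linear groups. -/
def conj (a : MatrixIso F ι κ) : GL κ F ≃* GL ι F := Units.mapEquiv a.conjRingEquiv

@[simp]
theorem conj_val (a : MatrixIso F ι κ) (u : GL κ F) :
    (a.conj u).val = a.mat * u.val * a.inv := rfl

theorem conj_eq_equivGL (a : MatrixIso F ι ι) (u : GL ι F) :
    a.conj u = equivGL a * u * (equivGL a)⁻¹ :=
  Units.ext rfl

theorem mul_mat_eq_mat_mul_iff (a : MatrixIso F ι κ) (u : GL ι F) (v : GL κ F) :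
    u.val * a.mat = a.mat * v.val ↔ u = a.conj v := by
  rw [Units.ext_iff, conj_val]
  constructor <;> intro eq
  · rw [← eq, Matrix.mul_assoc, mat_mul_inv, Matrix.mul_one]
  · rw [eq, Matrix.mul_assoc, inv_mul_mat, Matrix.mul_one]

theorem isUnit_conj_iff (a : MatrixIso F ι κ) {M : Matrix κ κ F} :
    IsUnit (a.mat * M * a.inv) ↔ IsUnit M :=
  MulEquiv.isUnit_map a.conjRingEquiv

end MatrixIso

/-- An irreducible character of one of the groups `GL(n, F)`. -/
structure GLChar (F : Type) [Field F] where
  size : ℕ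
  irr : Irr (GL (Fin size) F)

namespace GLChar

variable {F : Type} [Field F]

noncomputable instance : DecidableEq (GLChar F) := Classical.decEq _

/-- The irreducible characters of `GL(n, F)`. -/
noncomputable def ofSize (F : Type) [Field F] [Finite F] (n : ℕ) : Finset (GLChar F) :=
  (Finset.univ : Finset (Irr (GL (Fin n) F))).map ⟨mk n, fun _ _ h => by cases h; rfl⟩

section

variable [Finite F]

@[simp]
theorem mem_ofSize {n : ℕ} {χ : GLChar F} : χ ∈ ofSize F n ↔ χ.size = n := by
  constructor
  · intro h
    obtain ⟨_, -, rfl⟩ := Finset.mem_map.mp h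
    rfl
  · rintro rfl
    exact Finset.mem_map_of_mem _ (Finset.mem_univ χ.irr)

theorem sum_ofSize {α : Type*} [AddCommMonoid α] (n : ℕ) (f : GLChar F → α) :
    ∑ χ ∈ ofSize F n, f χ = ∑ χ : Irr (GL (Fin n) F), f ⟨n, χ⟩ :=
  Finset.sum_map ..

end

variable {ι κ : Type*} [Fintype ι] [DecidableEq ι] [Fintype κ] [DecidableEq κ]

open scoped Classical in
/-- The value of `χ` at an invertible matrix with rows and columns indexed by any type with
`χ.size` elements. It is `0` at matrices of another size and at singular matrices. -/
noncomputable def eval (χ : GLChar F) (M : Matrix ι ι F) : ℂ :=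
  if h : IsUnit M ∧ Nonempty (MatrixIso F (Fin χ.size) ι) then
    χ.irr.1 (h.2.some.conj h.1.unit)
  else 0

theorem eval_coe (χ : GLChar F) (a : MatrixIso F (Fin χ.size) ι) (u : GL ι F) :
    χ.eval u.val = χ.irr.1 (a.conj u) := by
  have hu : IsUnit u.val ∧ Nonempty (MatrixIso F (Fin χ.size) ι) := ⟨u.isUnit, ⟨a⟩⟩
  set b := hu.2.some with hb
  have change_iso : b.conj u = (b.trans a.symm).conj (a.conj u) := by
    ext1
    simp [Matrix.mul_assoc]
  rw [eval, dif_pos hu, ← hb, IsUnit.unit_of_val_units, change_iso, MatrixIso.conj_eq_equivGL,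
    Irr.apply_conj]

theorem eval_of_card_ne (χ : GLChar F) (h : Fintype.card ι ≠ χ.size) (M : Matrix ι ι F) :
    χ.eval M = 0 :=
  dif_neg fun ⟨_, ⟨a⟩⟩ => h (by rw [← a.card_eq, Fintype.card_fin])

theorem eval_of_not_isUnit (χ : GLChar F) {M : Matrix ι ι F} (h : ¬ IsUnit M) : χ.eval M = 0 :=
  dif_neg fun hM => h hM.1

theorem nonempty_matrixIso {χ : GLChar F} (h : Fintype.card ι = χ.size) :
    Nonempty (MatrixIso F (Fin χ.size) ι) :=
  MatrixIso.nonempty_of_card_eq (by rw [h, Fintype.card_fin])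

@[simp]
theorem eval_conj (χ : GLChar F) (a : MatrixIso F ι κ) (M : Matrix κ κ F) :
    χ.eval (a.mat * M * a.inv) = χ.eval M := by
  by_cases hM : IsUnit M
  · by_cases hκ : Fintype.card κ = χ.size
    · obtain ⟨u, rfl⟩ := hM
      obtain ⟨b⟩ := nonempty_matrixIso hκ
      rw [eval_coe χ b u, ← MatrixIso.conj_val, eval_coe χ (b.trans a.symm)]
      exact congrArg χ.irr.1 (Units.ext (by simp [Matrix.mul_assoc]))
    · rw [eval_of_card_ne χ hκ, eval_of_card_ne χ (a.card_eq ▸ hκ)]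
  · rw [eval_of_not_isUnit χ hM, eval_of_not_isUnit χ (mt a.isUnit_conj_iff.mp hM)]

theorem eval_submatrix (χ : GLChar F) (e : κ ≃ ι) (M : Matrix ι ι F) :
    χ.eval (M.submatrix e e) = χ.eval M := by
  rw [← MatrixIso.ofEquiv_conj, eval_conj]

theorem column_orthogonality [Finite F] (x : GL ι F) (y : GL κ F)
    (hι : Fintype.card ι = Fintype.card κ) :
    ∑ χ ∈ ofSize F (Fintype.card ι), χ.eval x.val * χ.eval y⁻¹.val =
      Nat.card {h : MatrixIso F ι κ // x.val * h.mat = h.mat * y.val} := by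
  obtain ⟨a⟩ : Nonempty (MatrixIso F (Fin (Fintype.card ι)) ι) :=
    MatrixIso.nonempty_of_card_eq (Fintype.card_fin _)
  obtain ⟨b⟩ : Nonempty (MatrixIso F (Fin (Fintype.card ι)) κ) :=
    MatrixIso.nonempty_of_card_eq (by rw [Fintype.card_fin, hι])
  have eval_x (χ : Irr (GL (Fin (Fintype.card ι)) F)) :
      (mk _ χ).eval x.val = χ.1 (a.conj x) := eval_coe (mk _ χ) a x
  have eval_y (χ : Irr (GL (Fin (Fintype.card ι)) F)) :
      (mk _ χ).eval y⁻¹.val = χ.1 (b.conj y)⁻¹ := by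
    rw [← map_inv]
    exact eval_coe (mk _ χ) b y⁻¹
  simp_rw [sum_ofSize, eval_x, eval_y, Irr.column_orthogonality]
  congr 1
  refine Nat.card_congr
    ((MatrixIso.equivGL.symm.trans (MatrixIso.arrowCongr a b)).subtypeEquiv fun h => ?_)
  have intertwine_iff : a.mat * x.val * a.inv * h.val = h.val * (b.mat * y.val * b.inv) ↔
      x.val * (a.inv * h.val * b.mat) = a.inv * h.val * b.mat * y.val := by
    constructor <;> intro hxy
    · simpa [Matrix.mul_assoc] using congrArg (fun M => a.inv * M * b.mat) hxy
    · simpa [Matrix.mul_assoc] using congrArg (fun M => a.mat * M * b.inv) hxy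
  rw [Units.ext_iff]
  exact intertwine_iff

theorem row_orthogonality [Fintype F] [DecidableEq F] (χ ψ : GLChar F)
    (hχ : Fintype.card ι = χ.size) (hψ : Fintype.card ι = ψ.size) :
    ∑ x : GL ι F, χ.eval x.val * ψ.eval x⁻¹.val = if χ = ψ then (Nat.card (GL ι F) : ℂ) else 0 := by
  obtain ⟨n, χ⟩ := χ
  obtain ⟨m, ψ⟩ := ψ
  obtain rfl : n = m := hχ.symm.trans hψ
  obtain ⟨a⟩ : Nonempty (MatrixIso F (Fin n) ι) := nonempty_matrixIso hχ
  have eval_eq (χ : Irr (GL (Fin n) F)) (x : GL ι F) : (mk n χ).eval x.val = χ.1 (a.conj x) :=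
    eval_coe (mk n χ) a x
  have mk_eq_iff : mk n χ = mk n ψ ↔ χ = ψ := ⟨fun h => by cases h; rfl, fun h => h ▸ rfl⟩
  simp_rw [eval_eq, map_inv]
  rw [Nat.card_congr a.conj.toEquiv]
  simp only [mk_eq_iff, ← Irr.row_orthogonality]
  exact a.conj.toEquiv.sum_comp fun x => χ.1 x * ψ.1 x⁻¹

end GLChar

end Framework

/-! ### Parabolic subgroups and Jacquet multiplicities -/

section Parabolics

/-- The parabolic subgroup of block upper triangular matrices `[a b; 0 d]` in the general linear
group of `F^ι ⊕ F^κ`. -/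
@[ext]
structure Parabolic (F ι κ : Type*) [Field F] [Fintype ι] [DecidableEq ι] [Fintype κ]
    [DecidableEq κ] where
  a : GL ι F
  b : Matrix ι κ F
  d : GL κ F

variable {ι κ ι' κ' : Type*} [Fintype ι] [DecidableEq ι] [Fintype κ] [DecidableEq κ]
  [Fintype ι'] [DecidableEq ι'] [Fintype κ'] [DecidableEq κ']

namespace Parabolic

variable {F : Type*} [Field F]

/-- The decomposition of the parabolic into its Levi factors and unipotent radical. -/
@[simps]
def equivProd : Parabolic F ι κ ≃ GL ι F × Matrix ι κ F × GL κ F where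
  toFun p := (p.a, p.b, p.d)
  invFun p := ⟨p.1, p.2.1, p.2.2⟩

noncomputable instance [Finite F] : Fintype (Parabolic F ι κ) :=
  have := Finite.of_equiv _ (equivProd (F := F) (ι := ι) (κ := κ)).symm
  Fintype.ofFinite _

instance : Mul (Parabolic F ι κ) where
  mul p p' := ⟨p.a * p'.a, p.a.val * p'.b + p.b * p'.d.val, p.d * p'.d⟩

instance : One (Parabolic F ι κ) := ⟨⟨1, 0, 1⟩⟩

instance : Inv (Parabolic F ι κ) where
  inv p := ⟨p.a⁻¹, -(p.a⁻¹.val * p.b * p.d⁻¹.val), p.d⁻¹⟩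

@[simp] theorem mul_a (p p' : Parabolic F ι κ) : (p * p').a = p.a * p'.a := rfl

@[simp]
theorem mul_b (p p' : Parabolic F ι κ) : (p * p').b = p.a.val * p'.b + p.b * p'.d.val := rfl

@[simp] theorem mul_d (p p' : Parabolic F ι κ) : (p * p').d = p.d * p'.d := rfl

@[simp] theorem one_a : (1 : Parabolic F ι κ).a = 1 := rfl

@[simp] theorem one_b : (1 : Parabolic F ι κ).b = 0 := rfl

@[simp] theorem one_d : (1 : Parabolic F ι κ).d = 1 := rfl

@[simp] theorem inv_a (p : Parabolic F ι κ) : p⁻¹.a = p.a⁻¹ := rfl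

@[simp]
theorem inv_b (p : Parabolic F ι κ) : p⁻¹.b = -(p.a⁻¹.val * p.b * p.d⁻¹.val) := rfl

@[simp] theorem inv_d (p : Parabolic F ι κ) : p⁻¹.d = p.d⁻¹ := rfl

instance : Group (Parabolic F ι κ) :=
  Group.ofLeftAxioms
    (fun p q r => by
      ext1 <;> simp [mul_assoc, Matrix.mul_add, Matrix.add_mul, Matrix.mul_assoc, add_assoc])
    (fun p => by ext1 <;> simp)
    (fun p => by
      ext1
      · simp
      · rw [mul_b, inv_a, inv_b, Matrix.neg_mul, Matrix.mul_assoc _ _ p.d.val, ← Units.val_mul]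
        simp
      · simp)

/-- The inclusion of the parabolic into all matrices. -/
@[simps]
def toMatrix : Parabolic F ι κ →* Matrix (ι ⊕ κ) (ι ⊕ κ) F where
  toFun p := fromBlocks p.a.val p.b 0 p.d.val
  map_one' := by simp
  map_mul' p p' := by simp [fromBlocks_multiply]

/-- The inclusion of the parabolic into the general linear group. -/
def toGL : Parabolic F ι κ →* GL (ι ⊕ κ) F := toMatrix.toHomUnits

@[simp] theorem toGL_val (p : Parabolic F ι κ) : p.toGL.val = p.toMatrix := rfl

theorem toMatrix_injective : Function.Injective (toMatrix (F := F) (ι := ι) (κ := κ)) := by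
  intro p p' h
  obtain ⟨ha, hb, -, hd⟩ := fromBlocks_inj.mp h
  exact Parabolic.ext (Units.ext ha) hb (Units.ext hd)

/-- The projection of the parabolic to its first Levi factor. -/
@[simps]
def aHom : Parabolic F ι κ →* GL ι F where
  toFun := a
  map_one' := rfl
  map_mul' _ _ := rfl

/-- The projection of the parabolic to its second Levi factor. -/
@[simps]
def dHom : Parabolic F ι κ →* GL κ F where
  toFun := d
  map_one' := rfl
  map_mul' _ _ := rfl

/-- Conjugation of the parabolic by a block diagonal isomorphism. -/
@[simps]
def congr (f : MatrixIso F ι ι') (g : MatrixIso F κ κ') : Parabolic F ι' κ' ≃ Parabolic F ι κ where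
  toFun p := ⟨f.conj p.a, f.mat * p.b * g.inv, g.conj p.d⟩
  invFun p := ⟨f.symm.conj p.a, f.inv * p.b * g.mat, g.symm.conj p.d⟩
  left_inv p := by ext1 <;> (try ext1) <;> simp [Matrix.mul_assoc]
  right_inv p := by ext1 <;> (try ext1) <;> simp [Matrix.mul_assoc]

theorem card_eq : Nat.card (Parabolic F ι κ) =
    Nat.card (GL ι F) * (Nat.card (Matrix ι κ F) * Nat.card (GL κ F)) := by
  rw [Nat.card_congr equivProd, Nat.card_prod, Nat.card_prod]

end Parabolic

/-- The block diagonal sum of two isomorphisms. -/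
@[simps]
def MatrixIso.sumCongr {F : Type*} [Field F] (f : MatrixIso F ι ι') (g : MatrixIso F κ κ') :
    MatrixIso F (ι ⊕ κ) (ι' ⊕ κ') where
  mat := fromBlocks f.mat 0 0 g.mat
  inv := fromBlocks f.inv 0 0 g.inv
  mat_mul_inv := by simp [fromBlocks_multiply]
  inv_mul_mat := by simp [fromBlocks_multiply]

theorem Parabolic.toMatrix_congr {F : Type*} [Field F] (f : MatrixIso F ι ι')
    (g : MatrixIso F κ κ') (p : Parabolic F ι' κ') :
    (congr f g p).toMatrix = (f.sumCongr g).mat * p.toMatrix * (f.sumCongr g).inv := by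
  simp [fromBlocks_multiply]

namespace GLChar

variable {F : Type} [Field F]

/-- The inflation to the parabolic of the character `σ ⊗ τ` of its Levi subgroup. -/
noncomputable def inflation (σ τ : GLChar F) (p : Parabolic F ι κ) : ℂ :=
  σ.eval p.a.val * τ.eval p.d.val

theorem eval_units_conj (χ : GLChar F) (u v : GL ι F) : χ.eval (u * v * u⁻¹).val = χ.eval v.val :=
  χ.eval_conj (MatrixIso.equivGL.symm u) v.val

theorem inflation_conj (σ τ : GLChar F) (p r : Parabolic F ι κ) :
    inflation σ τ (r * p * r⁻¹) = inflation σ τ p := by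
  simp only [inflation, Parabolic.mul_a, Parabolic.mul_d, Parabolic.inv_a, Parabolic.inv_d,
    eval_units_conj]

theorem inflation_congr (σ τ : GLChar F) (f : MatrixIso F ι ι') (g : MatrixIso F κ κ')
    (p : Parabolic F ι' κ') : inflation σ τ (Parabolic.congr f g p) = inflation σ τ p := by
  simp [inflation]

theorem eval_coe_irr (χ : GLChar F) (u : GL (Fin χ.size) F) : χ.eval u.val = χ.irr.1 u := by
  rw [eval_coe χ (MatrixIso.equivGL.symm 1), MatrixIso.conj_eq_equivGL, Irr.apply_conj]

variable [Fintype F]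

variable (ι κ) in
/-- The sum over the parabolic that computes, up to the order of the group, the multiplicity of
`σ ⊗ τ` in the restriction of `χ`. -/
noncomputable def parabolicSum (σ τ χ : GLChar F) : ℂ :=
  ∑ p : Parabolic F ι κ, χ.eval p.toMatrix * inflation σ τ p⁻¹

theorem parabolicSum_eq_sum_inv (σ τ χ : GLChar F) :
    parabolicSum ι κ σ τ χ =
      ∑ p : Parabolic F ι κ, χ.eval p⁻¹.toMatrix * inflation σ τ p :=
  Fintype.sum_equiv (Equiv.inv _) _ _ fun p => by simp only [Equiv.inv_apply, inv_inv]

theorem parabolicSum_congr (f : MatrixIso F ι ι') (g : MatrixIso F κ κ') (σ τ χ : GLChar F) :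
    parabolicSum ι κ σ τ χ = parabolicSum ι' κ' σ τ χ := by
  refine (Fintype.sum_equiv (Parabolic.congr f g) _ _ fun p => ?_).symm
  have congr_inv : (Parabolic.congr f g p)⁻¹ = Parabolic.congr f g p⁻¹ := by
    ext1 <;> (try ext1) <;> simp [Matrix.mul_assoc, ← map_inv]
  rw [congr_inv, inflation_congr, Parabolic.toMatrix_congr, eval_conj]

theorem exists_nat_parabolicSum_eq (σ τ χ : GLChar F) :
    ∃ m : ℕ, parabolicSum (Fin σ.size) (Fin τ.size) σ τ χ =
      Nat.card (Parabolic F (Fin σ.size) (Fin τ.size)) * m := by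
  by_cases hχ : Fintype.card (Fin σ.size ⊕ Fin τ.size) = χ.size
  · obtain ⟨e⟩ := nonempty_matrixIso hχ
    obtain ⟨m, hm⟩ := Irr.exists_nat_eq_average_mul_inv
      (e.conj.toMonoidHom.comp Parabolic.toGL) Parabolic.aHom Parabolic.dHom
      χ.irr σ.irr τ.irr
    refine ⟨m, ?_⟩
    rw [← inv_mul_eq_iff_eq_mul₀ (natCard_cast_ne_zero _), ← hm]
    refine congrArg _ (Finset.sum_congr rfl fun p _ => congrArg₂ _ ?_ ?_)
    · exact eval_coe χ e p.toGL
    · exact congrArg₂ _ (eval_coe_irr σ p.a⁻¹) (eval_coe_irr τ p.d⁻¹)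
  · exact ⟨0, by simp [parabolicSum, eval_of_card_ne χ hχ]⟩

/-- The multiplicity of `σ ⊗ τ` in the Jacquet restriction of `χ` to the Levi subgroup
`GL(σ.size, F) × GL(τ.size, F)`. It is `0` unless `χ.size = σ.size + τ.size`. -/
noncomputable def jacquetMult (σ τ χ : GLChar F) : ℕ := (exists_nat_parabolicSum_eq σ τ χ).choose

theorem parabolicSum_eq_card_mul_jacquetMult {σ τ : GLChar F} (χ : GLChar F)
    (hσ : Fintype.card ι = σ.size) (hτ : Fintype.card κ = τ.size) :
    parabolicSum ι κ σ τ χ = Nat.card (Parabolic F ι κ) * jacquetMult σ τ χ := by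
  obtain ⟨f⟩ := nonempty_matrixIso hσ
  obtain ⟨g⟩ := nonempty_matrixIso hτ
  rw [← parabolicSum_congr f g, Nat.card_congr (Parabolic.congr f g)]
  exact (exists_nat_parabolicSum_eq σ τ χ).choose_spec

theorem size_eq_of_jacquetMult_ne_zero {σ τ χ : GLChar F} (h : jacquetMult σ τ χ ≠ 0) :
    χ.size = σ.size + τ.size := by
  by_contra hne
  have sum_eq := parabolicSum_eq_card_mul_jacquetMult (σ := σ) (τ := τ) χ
    (Fintype.card_fin _) (Fintype.card_fin _)
  have sum_eq_zero : parabolicSum (Fin σ.size) (Fin τ.size) σ τ χ = 0 :=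
    Finset.sum_eq_zero fun p _ => by
      rw [eval_of_card_ne χ (by simpa using Ne.symm hne), zero_mul]
  rw [sum_eq_zero, eq_comm, mul_eq_zero, Nat.cast_eq_zero (n := jacquetMult σ τ χ)] at sum_eq
  exact h (sum_eq.resolve_left (natCard_cast_ne_zero _))

end GLChar

end Parabolics

/-! ### The Mackey formula for a cuspidal character -/

section StabilizerSum

variable {G X : Type*} [Group G] [Fintype G] [MulAction G X]

open scoped Classical in
/-- The sum of a function on a group over the stabilizer of a point. -/
noncomputable def stabilizerSum (f : G → ℂ) (x : X) : ℂ := ∑ g with g • x = x, f g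

theorem stabilizerSum_smul {f : G → ℂ} (hf : ∀ g r, f (r * g * r⁻¹) = f g) (r : G) (x : X) :
    stabilizerSum f (r • x) = stabilizerSum f x := by
  classical
  simp only [stabilizerSum, Finset.sum_filter]
  refine (Fintype.sum_equiv (MulAut.conj r).toEquiv _ _ fun g => ?_).symm
  simp [hf, mul_smul]

theorem sum_stabilizerSum [Fintype X] (f : G → ℂ) :
    ∑ x : X, stabilizerSum f x = ∑ g, Nat.card (MulAction.fixedBy X g) * f g := by
  classical
  simp only [stabilizerSum, Finset.sum_filter]
  rw [Finset.sum_comm]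
  refine Finset.sum_congr rfl fun g _ => ?_
  rw [← Finset.sum_filter, Finset.sum_const, nsmul_eq_mul, ← Fintype.card_subtype,
    ← Nat.card_eq_fintype_card]
  rfl

theorem stabilizerSum_eq_zero {Φ : Type*} [Fintype Φ] [Nonempty Φ] {f : G → ℂ} {x : X} (v : Φ → G)
    (hv : ∀ φ, v φ • x = x) (hf : ∀ g : G, g • x = x → ∑ φ, f (g * v φ) = 0) :
    stabilizerSum f x = 0 := by
  classical
  have translate (φ : Φ) : stabilizerSum f x = ∑ g with g • x = x, f (g * v φ) := by
    simp only [stabilizerSum, Finset.sum_filter]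
    refine (Fintype.sum_equiv (Equiv.mulRight (v φ)) _ _ fun g => ?_).symm
    simp [mul_smul, hv]
  have card_mul_eq_zero : (Fintype.card Φ : ℂ) * stabilizerSum f x = 0 := by
    rw [← nsmul_eq_mul, ← Finset.card_univ, ← Finset.sum_const,
      Finset.sum_congr rfl fun φ _ => translate φ, Finset.sum_comm]
    exact Finset.sum_eq_zero fun g hg => hf g (Finset.mem_filter.mp hg).2
  simpa using card_mul_eq_zero

theorem sum_orbit_stabilizerSum_mul_card {Y : Type*} [Fintype Y] {f : G → ℂ}
    (hf : ∀ g r, f (r * g * r⁻¹) = f g) {x : X} {φ : Y → G} (hφ : Function.Injective φ)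
    (hrange : ∀ g, g • x = x ↔ g ∈ Set.range φ) {s : Finset X}
    (hs : ∀ y, y ∈ s ↔ y ∈ MulAction.orbit G x) :
    (∑ y ∈ s, stabilizerSum f y) * Nat.card Y = Nat.card G * ∑ y, f (φ y) := by
  classical
  have sum_stabilizer : stabilizerSum f x = ∑ y, f (φ y) := by
    rw [stabilizerSum, ← Finset.sum_image hφ.injOn]
    refine Finset.sum_congr ?_ fun _ _ => rfl
    ext g
    simp [hrange]
  have sum_orbit : ∑ y ∈ s, stabilizerSum f y = Nat.card s * stabilizerSum f x := by
    rw [Finset.sum_eq_card_nsmul (b := stabilizerSum f x), nsmul_eq_mul, Nat.card_eq_fintype_card,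
      Fintype.card_coe]
    intro y hy
    obtain ⟨r, rfl⟩ := (hs y).mp hy
    exact stabilizerSum_smul hf r x
  have card_s : Nat.card s = Nat.card (MulAction.orbit G x) :=
    Nat.card_congr (Equiv.subtypeEquivRight hs)
  have card_Y : Nat.card Y = Nat.card (MulAction.stabilizer G x) :=
    Nat.card_congr <| (Equiv.ofInjective φ hφ).trans
      (Equiv.subtypeEquivRight fun g => (hrange g).symm)
  have card_G : Nat.card s * Nat.card Y = Nat.card G := by
    rw [card_s, card_Y, ← Nat.card_prod,
      Nat.card_congr (MulAction.orbitProdStabilizerEquivGroup G x)]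
  rw [sum_orbit, ← sum_stabilizer, ← card_G]
  push_cast
  ring

end StabilizerSum

section GeneralizedInverse

variable {F ι κ : Type*} [Field F] [Fintype ι] [Fintype κ]

theorem exists_mul_mul_eq_self (M : Matrix ι κ F) : ∃ L : Matrix κ ι F, M * L * M = M := by
  classical
  obtain ⟨s, hs⟩ := M.toLin'.rangeRestrict.exists_rightInverse_of_surjective
    (LinearMap.range_rangeRestrict _)
  obtain ⟨g, hg⟩ := LinearMap.exists_extend s
  refine ⟨LinearMap.toMatrix' g, Matrix.toLin'.injective (LinearMap.ext fun v => ?_)⟩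
  rw [Matrix.toLin'_mul, Matrix.toLin'_mul, Matrix.toLin'_toMatrix']
  have g_apply : g (M.toLin' v) = s (M.toLin'.rangeRestrict v) :=
    LinearMap.congr_fun hg (M.toLin'.rangeRestrict v)
  exact (congrArg M.toLin' g_apply).trans
    (congrArg Subtype.val (LinearMap.congr_fun hs (M.toLin'.rangeRestrict v)))

variable [DecidableEq ι]

theorem card_le_of_mul_eq_one {L : Matrix ι κ F} {M : Matrix κ ι F} (h : L * M = 1) :
    Fintype.card ι ≤ Fintype.card κ := by
  rw [← Matrix.rank_one (n := ι) (R := F), ← h]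
  exact (Matrix.rank_mul_le_right _ _).trans (Matrix.rank_le_card_height _)

theorem exists_isUnit_fromCols [DecidableEq κ] {L : Matrix ι (ι ⊕ κ) F} {M : Matrix (ι ⊕ κ) ι F}
    (h : L * M = 1) : ∃ S : Matrix (ι ⊕ κ) κ F, IsUnit (fromCols M S) := by
  have indep : LinearIndependent F M.col := by
    rw [← Matrix.mulVec_injective_iff]
    exact Function.LeftInverse.injective (g := L.mulVec) fun v => by simp [h]
  let basis := Module.Basis.sumExtend indep
  have basis_inl (j : ι) : basis (Sum.inl j) = M.col j := by
    simp only [basis, Module.Basis.sumExtend, Module.Basis.reindex_apply,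
      Module.Basis.extend_apply_self]
    rfl
  have := Module.Finite.finite_basis basis
  have := Finite.of_injective (Sum.inr : Module.Basis.sumExtendIndex indep → ι ⊕ _)
    Sum.inr_injective
  have card_eq : Nat.card κ = Nat.card (Module.Basis.sumExtendIndex indep) := by
    have := Module.finrank_eq_nat_card_basis basis
    rw [Module.finrank_fintype_fun_eq_card, ← Nat.card_eq_fintype_card, Nat.card_sum,
      Nat.card_sum] at this
    exact Nat.add_left_cancel this
  obtain ⟨e⟩ := Finite.card_eq.mp card_eq
  refine ⟨of fun i j => basis (Sum.inr (e j)) i, ?_⟩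
  rw [← Matrix.linearIndependent_cols_iff_isUnit]
  have cols : (fromCols M (of fun i j => basis (Sum.inr (e j)) i)).col = basis ∘ Sum.map id e := by
    funext j
    rcases j with j | j
    · exact (basis_inl j).symm
    · rfl
  rw [cols]
  exact basis.linearIndependent.comp (Sum.map id e) (Function.injective_id.sumMap e.injective)

end GeneralizedInverse

section Vanishing

variable {F : Type} [Field F] {ι κ ι' κ' : Type*} [Fintype ι] [DecidableEq ι] [Fintype κ]
  [DecidableEq κ] [Fintype ι'] [DecidableEq ι'] [Fintype κ'] [DecidableEq κ']

namespace Parabolic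

theorem toMatrix_mul_toMatrix_inv (p : Parabolic F ι κ) : p.toMatrix * p⁻¹.toMatrix = 1 := by
  rw [← map_mul, mul_inv_cancel, map_one]

theorem toMatrix_inv_mul_toMatrix (p : Parabolic F ι κ) : p⁻¹.toMatrix * p.toMatrix = 1 := by
  rw [← map_mul, inv_mul_cancel, map_one]

theorem exists_toMatrix_eq {M : Matrix (ι ⊕ κ) (ι ⊕ κ) F} (hM : IsUnit M)
    (h : M.toBlocks₂₁ = 0) : ∃ p : Parabolic F ι κ, p.toMatrix = M := by
  rw [← fromBlocks_toBlocks M, h, Matrix.isUnit_fromBlocks_zero₂₁] at hM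
  refine ⟨⟨hM.1.unit, M.toBlocks₁₂, hM.2.unit⟩, ?_⟩
  conv_rhs => rw [← fromBlocks_toBlocks M, h]
  rfl

instance : MulAction (Parabolic F ι κ × Parabolic F ι' κ') (MatrixIso F (ι ⊕ κ) (ι' ⊕ κ')) where
  smul z h := ((MatrixIso.equivGL.symm z.1.toGL).trans h).trans
    (MatrixIso.equivGL.symm z.2.toGL).symm
  one_smul h := MatrixIso.ext <| by
    change (1 : Parabolic F ι κ).toMatrix * h.mat * (1 : Parabolic F ι' κ')⁻¹.toMatrix = h.mat
    simp only [map_one, inv_one, Matrix.one_mul, Matrix.mul_one]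
  mul_smul z w h := MatrixIso.ext <| by
    change (z.1 * w.1).toMatrix * h.mat * (z.2 * w.2)⁻¹.toMatrix =
      z.1.toMatrix * (w.1.toMatrix * h.mat * w.2⁻¹.toMatrix) * z.2⁻¹.toMatrix
    simp only [map_mul, _root_.mul_inv_rev, Matrix.mul_assoc]

theorem smul_mat (z : Parabolic F ι κ × Parabolic F ι' κ') (h : MatrixIso F (ι ⊕ κ) (ι' ⊕ κ')) :
    (z • h).mat = z.1.toMatrix * h.mat * z.2⁻¹.toMatrix := rfl

theorem smul_eq_iff (z : Parabolic F ι κ × Parabolic F ι' κ')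
    (h h' : MatrixIso F (ι ⊕ κ) (ι' ⊕ κ')) :
    z • h = h' ↔ z.1.toMatrix * h.mat = h'.mat * z.2.toMatrix := by
  rw [MatrixIso.ext_iff, smul_mat]
  constructor
  · intro eq
    rw [← eq, Matrix.mul_assoc, toMatrix_inv_mul_toMatrix, Matrix.mul_one]
  · intro eq
    rw [eq, Matrix.mul_assoc, toMatrix_mul_toMatrix_inv, Matrix.mul_one]

end Parabolic

/-- `N` maps into the image of `A * (1 - L * C)` and kills it, so `1 + N` extends to an element of
the parabolic that is carried into the unipotent radical of the other parabolic. -/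
theorem unipotent_mul_fromBlocks {A : Matrix ι ι' F} {B : Matrix ι κ' F} {C : Matrix κ ι' F}
    {D : Matrix κ κ' F} {L : Matrix ι' κ F} {N : Matrix ι ι F} {S : Matrix ι' ι F}
    (hL : C * L * C = C) (hN : N * (A * (1 - L * C)) = 0) (hS : A * (1 - L * C) * S = N) :
    fromBlocks (1 + N) (-(N * A * L)) 0 1 * fromBlocks A B C D =
      fromBlocks A B C D *
        (fromBlocks 1 ((1 - L * C) * S * (B - A * L * D)) 0 1 :
          Matrix (ι' ⊕ κ') (ι' ⊕ κ') F) := by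
  have C_mul : C * (1 - L * C) = 0 := by
    rw [Matrix.mul_sub, ← Matrix.mul_assoc, hL, Matrix.mul_one, sub_self]
  rw [fromBlocks_multiply, fromBlocks_multiply, fromBlocks_inj]
  refine ⟨?_, ?_, ?_, ?_⟩
  · rw [Matrix.mul_sub, Matrix.mul_sub, sub_eq_add_neg, Matrix.mul_one] at hN
    simp [Matrix.add_mul, Matrix.mul_assoc, add_assoc, hN]
  · simp only [← Matrix.mul_assoc, hS]
    simp only [Matrix.add_mul, Matrix.mul_sub, Matrix.neg_mul, Matrix.one_mul, Matrix.mul_one,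
      Matrix.mul_assoc]
    abel
  · simp
  · simp [← Matrix.mul_assoc, C_mul]

theorem Parabolic.a_mul_eq_of_intertwining {x : Parabolic F ι κ} {y : Parabolic F ι' κ'}
    {A : Matrix ι ι' F} {B : Matrix ι κ' F} {C : Matrix κ ι' F} {D : Matrix κ κ' F}
    {L : Matrix ι' κ F} (hL : C * L * C = C)
    (hxy : x.toMatrix * fromBlocks A B C D = fromBlocks A B C D * y.toMatrix) :
    x.a.val * (A * (1 - L * C)) = A * (1 - L * C) * (y.a.val * (1 - L * C)) := by
  have C_mul : C * (1 - L * C) = 0 := by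
    rw [Matrix.mul_sub, ← Matrix.mul_assoc, hL, Matrix.mul_one, sub_self]
  simp only [toMatrix_apply, fromBlocks_multiply, fromBlocks_inj, Matrix.zero_mul, Matrix.mul_zero,
    zero_add, add_zero] at hxy
  obtain ⟨top, -, bottom, -⟩ := hxy
  have C_y_mul : C * (y.a.val * (1 - L * C)) = 0 := by
    rw [← Matrix.mul_assoc, ← bottom, Matrix.mul_assoc, C_mul, Matrix.mul_zero]
  calc x.a.val * (A * (1 - L * C)) = (x.a.val * A + x.b * C) * (1 - L * C) := by
        rw [Matrix.add_mul, Matrix.mul_assoc x.b, C_mul, Matrix.mul_zero, add_zero,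
          Matrix.mul_assoc]
    _ = A * ((1 - L * C) * (y.a.val * (1 - L * C))) := by
        rw [top, Matrix.sub_mul 1, Matrix.one_mul, Matrix.mul_assoc L, C_y_mul, Matrix.mul_zero,
          sub_zero, Matrix.mul_assoc]
    _ = A * (1 - L * C) * (y.a.val * (1 - L * C)) := (Matrix.mul_assoc _ _ _).symm

namespace GLChar

/-- A character is cuspidal if its averages over the unipotent radicals of all proper parabolic
subgroups vanish. The parabolic is encoded by an idempotent `ε` whose image it stabilizes. -/
def IsCuspidal [Fintype F] (σ : GLChar F) : Prop :=
  0 < σ.size ∧ ∀ ε x : Matrix (Fin σ.size) (Fin σ.size) F, ε * ε = ε → ε ≠ 0 → ε ≠ 1 →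
    IsUnit x → x * ε = ε * x * ε → ∑ φ, σ.eval (x * (1 + ε * φ * (1 - ε))) = 0

theorem IsCuspidal.sum_eq_zero [Fintype F] {σ : GLChar F} (hσ : σ.IsCuspidal)
    (hι : Fintype.card ι = σ.size) {ε x : Matrix ι ι F} (hε : ε * ε = ε) (hε₀ : ε ≠ 0)
    (hε₁ : ε ≠ 1) (hx : IsUnit x) (hxε : x * ε = ε * x * ε) :
    ∑ φ : Matrix ι ι F, σ.eval (x * (1 + ε * φ * (1 - ε))) = 0 := by
  let e := Fintype.equivFinOfCardEq hι
  let r := reindexAlgEquiv F F e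
  rw [← hσ.2 (r ε) (r x) (by rw [← map_mul, hε]) (by simpa using hε₀)
    (by rw [← map_one r]; exact fun h => hε₁ (r.injective h)) (by simpa using hx)
    (by simp only [← map_mul]; rw [hxε])]
  refine Fintype.sum_equiv r.toEquiv _ _ fun φ => ?_
  have map_r : r x * (1 + r ε * r φ * (1 - r ε)) = r (x * (1 + ε * φ * (1 - ε))) := by simp
  rw [AlgEquiv.toEquiv_eq_coe, EquivLike.coe_coe, map_r]
  exact (eval_submatrix σ e.symm _).symm

end GLChar

end Vanishing

section Mackey

variable {F : Type} [Field F] {ι κ ι' κ' : Type*} [Fintype ι] [DecidableEq ι]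
  [Fintype κ] [DecidableEq κ] [Fintype ι'] [DecidableEq ι'] [Fintype κ'] [DecidableEq κ']

namespace GLChar

/-- The summand `(σ ⊗ τ)(x) (ρ ⊗ ω)(y⁻¹)` of the Mackey formula at a pair `(x, y)` of elements of
two parabolic subgroups. -/
noncomputable def pairInflation (σ τ ρ ω : GLChar F) (z : Parabolic F ι κ × Parabolic F ι' κ') :
    ℂ :=
  inflation σ τ z.1 * inflation ρ ω z.2⁻¹

theorem pairInflation_conj (σ τ ρ ω : GLChar F) (z r : Parabolic F ι κ × Parabolic F ι' κ') :
    pairInflation σ τ ρ ω (r * z * r⁻¹) = pairInflation σ τ ρ ω z := by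
  have snd_inv : (r * z * r⁻¹).2⁻¹ = r.2 * z.2⁻¹ * r.2⁻¹ := by simp [mul_assoc]
  rw [pairInflation, snd_inv, inflation_conj, Prod.fst_mul, Prod.fst_mul, Prod.fst_inv,
    inflation_conj, pairInflation]

theorem sum_eval_mul_eval_eq_card_fixedBy [Finite F] (z : Parabolic F ι κ × Parabolic F ι' κ')
    (hcard : Fintype.card (ι ⊕ κ) = Fintype.card (ι' ⊕ κ')) :
    ∑ χ ∈ ofSize F (Fintype.card (ι ⊕ κ)), χ.eval z.1⁻¹.toMatrix * χ.eval z.2.toMatrix =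
      Nat.card (MulAction.fixedBy (MatrixIso F (ι ⊕ κ) (ι' ⊕ κ')) z) := by
  have orthogonality := column_orthogonality z.1⁻¹.toGL z.2⁻¹.toGL hcard
  simp only [← map_inv, inv_inv, Parabolic.toGL_val] at orthogonality
  rw [orthogonality]
  congr 1
  refine Nat.card_congr (Equiv.subtypeEquivRight fun h => ?_)
  rw [MulAction.mem_fixedBy, ← inv_smul_eq_iff.trans eq_comm, Parabolic.smul_eq_iff]
  rfl

variable [Fintype F]

/-- The contribution of an isomorphism `h` to the Mackey formula: the sum of `pairInflation` over
the pairs of parabolic elements that `h` intertwines. -/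
noncomputable def mackeyTerm (σ τ ρ ω : GLChar F) (h : MatrixIso F (ι ⊕ κ) (ι' ⊕ κ')) : ℂ :=
  stabilizerSum (pairInflation (ι := ι) (κ := κ) (ι' := ι') (κ' := κ') σ τ ρ ω) h

theorem sum_parabolicSum_mul_parabolicSum (σ τ ρ ω : GLChar F)
    (hcard : Fintype.card (ι ⊕ κ) = Fintype.card (ι' ⊕ κ')) :
    ∑ χ ∈ ofSize F (Fintype.card (ι ⊕ κ)), parabolicSum ι κ σ τ χ * parabolicSum ι' κ' ρ ω χ =
      ∑ h : MatrixIso F (ι ⊕ κ) (ι' ⊕ κ'), mackeyTerm σ τ ρ ω h := by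
  simp only [mackeyTerm, sum_stabilizerSum, ← sum_eval_mul_eval_eq_card_fixedBy _ hcard,
    Finset.sum_mul]
  rw [Finset.sum_comm]
  refine Finset.sum_congr rfl fun χ _ => ?_
  rw [parabolicSum_eq_sum_inv, parabolicSum, Finset.sum_mul_sum, ← Finset.sum_product',
    Finset.univ_product_univ]
  refine Finset.sum_congr rfl fun z _ => ?_
  rw [pairInflation]
  ring

theorem card_mul_card_mul_sum_jacquetMult {σ τ ρ ω : GLChar F} (hσ : Fintype.card ι = σ.size)
    (hτ : Fintype.card κ = τ.size) (hρ : Fintype.card ι' = ρ.size) (hω : Fintype.card κ' = ω.size)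
    (hsize : σ.size + τ.size = ρ.size + ω.size) :
    (Nat.card (Parabolic F ι κ) : ℂ) * Nat.card (Parabolic F ι' κ') *
        ∑ χ ∈ ofSize F (σ.size + τ.size), (jacquetMult σ τ χ : ℂ) * jacquetMult ρ ω χ =
      ∑ h : MatrixIso F (ι ⊕ κ) (ι' ⊕ κ'), mackeyTerm σ τ ρ ω h := by
  rw [← sum_parabolicSum_mul_parabolicSum σ τ ρ ω (by simp [*]), Fintype.card_sum, hσ, hτ,
    Finset.mul_sum]
  refine Finset.sum_congr rfl fun χ _ => ?_
  rw [parabolicSum_eq_card_mul_jacquetMult χ hσ hτ, parabolicSum_eq_card_mul_jacquetMult χ hρ hω]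
  ring

theorem IsCuspidal.mackeyTerm_eq_zero {σ : GLChar F} (hσ : σ.IsCuspidal)
    (hι : Fintype.card ι = σ.size) (τ ρ ω : GLChar F) {h : MatrixIso F (ι ⊕ κ) (ι' ⊕ κ')}
    {A : Matrix ι ι' F} {B : Matrix ι κ' F} {C : Matrix κ ι' F} {D : Matrix κ κ' F}
    (hh : h.mat = fromBlocks A B C D) {L : Matrix ι' κ F} (hL : C * L * C = C)
    {R : Matrix ι' ι F} (hR : A * (1 - L * C) * R * (A * (1 - L * C)) = A * (1 - L * C))
    (h₀ : A * (1 - L * C) * R ≠ 0) (h₁ : A * (1 - L * C) * R ≠ 1) :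
    mackeyTerm σ τ ρ ω h = 0 := by
  set ε := A * (1 - L * C) * R with hε
  have ε_idem : ε * ε = ε := by rw [← Matrix.mul_assoc, hR]
  have one_sub_mul : (1 - ε) * (A * (1 - L * C)) = 0 := by
    rw [Matrix.sub_mul, hR, Matrix.one_mul, sub_self]
  let N (φ : Matrix ι ι F) : Matrix ι ι F := ε * φ * (1 - ε)
  have N_mul (φ : Matrix ι ι F) : N φ * (A * (1 - L * C)) = 0 := by
    rw [Matrix.mul_assoc, one_sub_mul, Matrix.mul_zero]
  have N_sq (φ : Matrix ι ι F) : N φ * N φ = 0 := by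
    rw [show N φ * N φ = N φ * (A * (1 - L * C)) * (R * φ * (1 - ε)) by
      simp only [N, hε, Matrix.mul_assoc], N_mul, Matrix.zero_mul]
  let u (φ : Matrix ι ι F) : GL ι F := ⟨1 + N φ, 1 - N φ,
    by simp [Matrix.add_mul, Matrix.mul_sub, N_sq], by simp [Matrix.sub_mul, Matrix.mul_add, N_sq]⟩
  let v (φ : Matrix ι ι F) : Parabolic F ι κ × Parabolic F ι' κ' :=
    (⟨u φ, -(N φ * A * L), 1⟩,
      ⟨1, (1 - L * C) * (R * φ * (1 - ε)) * (B - A * L * D), 1⟩)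
  refine stabilizerSum_eq_zero v (fun φ => ?_) fun z hz => ?_
  · rw [Parabolic.smul_eq_iff, hh]
    exact unipotent_mul_fromBlocks hL (N_mul φ) (by simp only [N, hε, Matrix.mul_assoc])
  · rw [Parabolic.smul_eq_iff, hh] at hz
    have a_mul : z.1.a.val * ε = ε * z.1.a.val * ε := by
      rw [Matrix.mul_assoc ε, hε, ← Matrix.mul_assoc z.1.a.val,
        Parabolic.a_mul_eq_of_intertwining hL hz, ← hε]
      simp only [← Matrix.mul_assoc, hR]
    have vanish := hσ.sum_eq_zero hι ε_idem h₀ h₁ z.1.a.isUnit a_mul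
    simp only [pairInflation, inflation, ← Finset.sum_mul, Prod.fst_mul, Prod.snd_mul,
      Parabolic.mul_a, Parabolic.mul_d, Parabolic.inv_a, Parabolic.inv_d, v, mul_one, Units.val_mul]
    rw [vanish, zero_mul, zero_mul]

end GLChar

/-- The isomorphisms in the big double coset: the lower left block is left invertible. -/
def MatrixIso.IsBigCell (h : MatrixIso F (ι ⊕ κ) (ι' ⊕ κ')) : Prop :=
  ∃ L : Matrix ι' κ F, L * h.mat.toBlocks₂₁ = 1

namespace GLChar

variable [Fintype F]

theorem IsCuspidal.isBigCell_or_eq_zero_of_mackeyTerm_ne_zero {σ τ ρ ω : GLChar F}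
    (hσ : σ.IsCuspidal) (hι : Fintype.card ι = σ.size)
    (hle : Fintype.card ι' ≤ Fintype.card ι) {h : MatrixIso F (ι ⊕ κ) (ι' ⊕ κ')}
    (hne : mackeyTerm σ τ ρ ω h ≠ 0) :
    h.IsBigCell ∨ h.mat.toBlocks₂₁ = 0 ∧ Fintype.card ι' = Fintype.card ι := by
  rw [MatrixIso.IsBigCell]
  have hh := (fromBlocks_toBlocks h.mat).symm
  set A := h.mat.toBlocks₁₁
  set C := h.mat.toBlocks₂₁
  obtain ⟨L, hL⟩ := exists_mul_mul_eq_self C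
  obtain ⟨R, hR⟩ := exists_mul_mul_eq_self (A * (1 - L * C))
  have C_mul : C * (1 - L * C) = 0 := by
    rw [Matrix.mul_sub, ← Matrix.mul_assoc, hL, Matrix.mul_one, sub_self]
  by_cases h₀ : A * (1 - L * C) * R = 0
  · left
    rw [h₀, Matrix.zero_mul] at hR
    have left_inverse := h.inv_mul_mat
    rw [hh, ← fromBlocks_toBlocks h.inv, fromBlocks_multiply, ← fromBlocks_one,
      fromBlocks_inj] at left_inverse
    refine ⟨L, (sub_eq_zero.mp ?_).symm⟩
    calc 1 - L * C = (h.inv.toBlocks₁₁ * A + h.inv.toBlocks₁₂ * C) * (1 - L * C) := by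
          rw [left_inverse.1, Matrix.one_mul]
      _ = 0 := by
          rw [Matrix.add_mul, Matrix.mul_assoc, Matrix.mul_assoc, ← hR, C_mul, Matrix.mul_zero,
            Matrix.mul_zero, add_zero]
  · by_cases h₁ : A * (1 - L * C) * R = 1
    · right
      rw [Matrix.mul_assoc] at h₁
      have card_eq := hle.antisymm (card_le_of_mul_eq_one h₁)
      refine ⟨?_, card_eq⟩
      rw [Matrix.mul_eq_one_comm_of_equiv (Fintype.equivOfCardEq card_eq.symm)] at h₁
      rw [← Matrix.mul_one C, ← h₁, ← Matrix.mul_assoc, ← Matrix.mul_assoc, C_mul,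
        Matrix.zero_mul, Matrix.zero_mul]
    · exact absurd (hσ.mackeyTerm_eq_zero hι τ ρ ω hh hL hR h₀ h₁) hne

end GLChar

end Mackey

section ClosedCell

variable {F : Type} [Field F] {ι κ ι' κ' : Type*} [Fintype ι] [DecidableEq ι] [Fintype κ]
  [DecidableEq κ] [Fintype ι'] [DecidableEq ι'] [Fintype κ'] [DecidableEq κ']

theorem MatrixIso.mem_orbit_sumCongr_iff (f : MatrixIso F ι ι') (g : MatrixIso F κ κ')
    (h : MatrixIso F (ι ⊕ κ) (ι' ⊕ κ')) :
    h ∈ MulAction.orbit (Parabolic F ι κ × Parabolic F ι' κ') (f.sumCongr g) ↔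
      h.mat.toBlocks₂₁ = 0 := by
  constructor
  · rintro ⟨z, rfl⟩
    simp [Parabolic.smul_mat, fromBlocks_multiply]
  · intro h₂₁
    have lower_left : (h.mat * (f.sumCongr g).inv).toBlocks₂₁ = 0 := by
      rw [← fromBlocks_toBlocks h.mat, h₂₁]
      simp [fromBlocks_multiply]
    obtain ⟨p, hp⟩ := Parabolic.exists_toMatrix_eq
      (equivGL (h.trans (f.sumCongr g).symm)).isUnit lower_left
    refine ⟨(p, 1), (Parabolic.smul_eq_iff _ _ _).mpr ?_⟩
    simp [hp, Matrix.mul_assoc, -sumCongr_mat, -sumCongr_inv]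

theorem Parabolic.smul_sumCongr_eq_iff (f : MatrixIso F ι ι') (g : MatrixIso F κ κ')
    (z : Parabolic F ι κ × Parabolic F ι' κ') :
    z • f.sumCongr g = f.sumCongr g ↔ z ∈ Set.range fun p => (congr f g p, p) := by
  have fst_eq : z • f.sumCongr g = f.sumCongr g ↔ z.1 = congr f g z.2 := by
    rw [smul_eq_iff, ← toMatrix_injective.eq_iff, toMatrix_congr]
    constructor <;> intro h
    · rw [← h, Matrix.mul_assoc, MatrixIso.mat_mul_inv, Matrix.mul_one]
    · rw [h, Matrix.mul_assoc, MatrixIso.inv_mul_mat, Matrix.mul_one]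
  rw [fst_eq]
  exact ⟨fun h => ⟨z.2, Prod.ext h.symm rfl⟩, by rintro ⟨p, rfl⟩; rfl⟩

namespace GLChar

theorem sum_inflation_mul_inflation_inv [Finite F] {σ τ ρ ω : GLChar F}
    (hσ : Fintype.card ι = σ.size) (hτ : Fintype.card κ = τ.size)
    (hρ : Fintype.card ι = ρ.size) (hω : Fintype.card κ = ω.size) :
    ∑ p : Parabolic F ι κ, inflation σ τ p * inflation ρ ω p⁻¹ =
      if σ = ρ ∧ τ = ω then (Nat.card (Parabolic F ι κ) : ℂ) else 0 := by
  classical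
  have := Fintype.ofFinite F
  calc ∑ p : Parabolic F ι κ, inflation σ τ p * inflation ρ ω p⁻¹
      = ∑ z : GL ι F × Matrix ι κ F × GL κ F, (σ.eval z.1.val * ρ.eval z.1⁻¹.val) *
          (τ.eval z.2.2.val * ω.eval z.2.2⁻¹.val) :=
        Fintype.sum_equiv Parabolic.equivProd _ _ fun p => mul_mul_mul_comm ..
    _ = (∑ x : GL ι F, σ.eval x.val * ρ.eval x⁻¹.val) *
          (Nat.card (Matrix ι κ F) * ∑ y : GL κ F, τ.eval y.val * ω.eval y⁻¹.val) := by
        simp only [Fintype.sum_prod_type, ← Finset.mul_sum, Finset.sum_const, nsmul_eq_mul,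
          Finset.card_univ, Nat.card_eq_fintype_card, ← Finset.sum_mul]
    _ = _ := by
        rw [row_orthogonality σ ρ hσ hρ, row_orthogonality τ ω hτ hω, Parabolic.card_eq, ite_and]
        split_ifs <;> simp

open scoped Classical in
theorem sum_mackeyTerm_toBlocks₂₁_eq_zero [Fintype F] {σ τ ρ ω : GLChar F}
    (hσ : Fintype.card ι = σ.size) (hτ : Fintype.card κ = τ.size)
    (hρ : Fintype.card ι' = ρ.size) (hω : Fintype.card κ' = ω.size)
    (hσρ : σ.size = ρ.size) (hτω : τ.size = ω.size) :
    ∑ h : MatrixIso F (ι ⊕ κ) (ι' ⊕ κ') with h.mat.toBlocks₂₁ = 0, mackeyTerm σ τ ρ ω h =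
      Nat.card (Parabolic F ι κ) * Nat.card (Parabolic F ι' κ') *
        if σ = ρ ∧ τ = ω then 1 else 0 := by
  obtain ⟨f⟩ : Nonempty (MatrixIso F ι ι') := MatrixIso.nonempty_of_card_eq (by simp [*])
  obtain ⟨g⟩ : Nonempty (MatrixIso F κ κ') := MatrixIso.nonempty_of_card_eq (by simp [*])
  have orbit_sum := sum_orbit_stabilizerSum_mul_card (pairInflation_conj σ τ ρ ω)
    (x := f.sumCongr g) (φ := fun p => (Parabolic.congr f g p, p))
    (fun p p' h => (Prod.ext_iff.mp h).2) (Parabolic.smul_sumCongr_eq_iff f g)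
    (s := Finset.univ.filter fun h => h.mat.toBlocks₂₁ = 0)
    (fun h => by rw [MatrixIso.mem_orbit_sumCongr_iff, Finset.mem_filter_univ])
  simp only [pairInflation, inflation_congr, Nat.card_prod, Nat.cast_mul] at orbit_sum
  rw [sum_inflation_mul_inflation_inv (hρ.trans hσρ.symm) (hω.trans hτω.symm) hρ hω] at orbit_sum
  refine mul_right_cancel₀ (natCard_cast_ne_zero (Parabolic F ι' κ')) (orbit_sum.trans ?_)
  split_ifs <;> simp

end GLChar

end ClosedCell

section BigCell

variable {F : Type} [Field F] {ι ι' μ : Type*} [Fintype ι] [DecidableEq ι] [Fintype ι']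
  [DecidableEq ι'] [Fintype μ] [DecidableEq μ]

variable (ι ι' μ) in
/-- The bijection exchanging the first two of three summands. -/
@[simps!]
def sumLeftComm : ι ⊕ (ι' ⊕ μ) ≃ ι' ⊕ (ι ⊕ μ) :=
  (Equiv.sumAssoc ι ι' μ).symm.trans
    (((Equiv.sumComm ι ι').sumCongr (Equiv.refl μ)).trans (Equiv.sumAssoc ι' ι μ))

variable (F ι ι' μ) in
/-- The permutation matrix exchanging the first two of three blocks. -/
def MatrixIso.swap : MatrixIso F (ι ⊕ (ι' ⊕ μ)) (ι' ⊕ (ι ⊕ μ)) := ofEquiv (sumLeftComm ι ι' μ)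

theorem MatrixIso.mul_swap_mat (M : Matrix (ι ⊕ (ι' ⊕ μ)) (ι ⊕ (ι' ⊕ μ)) F) :
    M * (swap F ι ι' μ).mat = M.submatrix id (sumLeftComm ι ι' μ).symm :=
  mul_submatrix_one (Equiv.refl _) _ M

theorem MatrixIso.isBigCell_smul_swap (z : Parabolic F ι (ι' ⊕ μ) × Parabolic F ι' (ι ⊕ μ)) :
    (z • swap F ι ι' μ).IsBigCell := by
  set h := z • swap F ι ι' μ
  have lower_left : h.mat.toBlocks₂₁ * z.2.a.val = z.1.d.val.toCols₁ := by
    have intertwine := (Parabolic.smul_eq_iff z (swap F ι ι' μ) h).mp rfl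
    rw [mul_swap_mat, ← fromBlocks_toBlocks h.mat, Parabolic.toMatrix_apply,
      Parabolic.toMatrix_apply, fromBlocks_multiply] at intertwine
    ext i j
    simpa using (congrFun₂ intertwine (Sum.inr i) (Sum.inl j)).symm
  have toRows_mul_toCols : z.1.d⁻¹.val.toRows₁ * z.1.d.val.toCols₁ = 1 := by
    ext i j
    exact (congrFun₂ z.1.d.inv_mul (Sum.inl i) (Sum.inl j)).trans (by simp [Matrix.one_apply])
  refine ⟨z.2.a.val * z.1.d⁻¹.val.toRows₁, z.2.a.mul_left_inj.mp ?_⟩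
  rw [Matrix.mul_assoc, lower_left, Matrix.mul_assoc, toRows_mul_toCols, Matrix.mul_one,
    Matrix.one_mul]

theorem MatrixIso.mem_orbit_swap_iff (h : MatrixIso F (ι ⊕ (ι' ⊕ μ)) (ι' ⊕ (ι ⊕ μ))) :
    h ∈ MulAction.orbit (Parabolic F ι (ι' ⊕ μ) × Parabolic F ι' (ι ⊕ μ)) (swap F ι ι' μ) ↔
      h.IsBigCell := by
  refine ⟨?_, fun ⟨L, hL⟩ => ?_⟩
  · rintro ⟨z, rfl⟩
    exact isBigCell_smul_swap z
  obtain ⟨S, ⟨u, hu⟩⟩ := exists_isUnit_fromCols hL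
  let p : Parabolic F ι (ι' ⊕ μ) := ⟨1, fromCols h.mat.toBlocks₁₁ 0, u⟩
  have first_column : p.toMatrix * (swap F ι ι' μ).mat = fromBlocks h.mat.toBlocks₁₁
      (fromCols 1 0) h.mat.toBlocks₂₁ (fromCols 0 S) := by
    rw [mul_swap_mat]
    ext (i | i) (j | j | j) <;> simp [p, hu]
  have left_inverse := h.inv_mul_mat
  rw [← fromBlocks_toBlocks h.mat, ← fromBlocks_toBlocks h.inv, fromBlocks_multiply,
    ← fromBlocks_one, fromBlocks_inj] at left_inverse
  have lower_left : (h.inv * (p.toMatrix * (swap F ι ι' μ).mat)).toBlocks₂₁ = 0 := by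
    rw [first_column, ← fromBlocks_toBlocks h.inv, fromBlocks_multiply, toBlocks_fromBlocks₂₁]
    exact left_inverse.2.2.1
  obtain ⟨q, hq⟩ := Parabolic.exists_toMatrix_eq (equivGL <|
    h.symm.trans ((equivGL.symm p.toGL).trans (swap F ι ι' μ))).isUnit lower_left
  refine ⟨(p, q), (Parabolic.smul_eq_iff _ _ _).mpr ?_⟩
  rw [hq]
  exact (h.mat_mul_inv_cancel_left _).symm

/-- Two parabolic elements with the same second Levi component `d`. Such pairs parametrize the
stabilizer of `MatrixIso.swap`. -/
abbrev ParabolicPair (F ι ι' μ : Type*) [Field F] [Fintype ι] [DecidableEq ι] [Fintype ι']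
    [DecidableEq ι'] [Fintype μ] [DecidableEq μ] : Type _ :=
  {z : Parabolic F ι μ × Parabolic F ι' μ // z.1.d = z.2.d}

noncomputable instance [Finite F] : Fintype (ParabolicPair F ι ι' μ) := Fintype.ofFinite _

theorem ParabolicPair.card_mul_card_GL :
    Nat.card (ParabolicPair F ι ι' μ) * Nat.card (GL μ F) =
      Nat.card (Parabolic F ι μ) * Nat.card (Parabolic F ι' μ) := by
  rw [← Nat.card_prod, ← Nat.card_prod]
  exact Nat.card_congr
    { toFun := fun y => (y.1.1.1, ⟨y.1.1.2.a, y.1.1.2.b, y.2⟩)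
      invFun := fun z => (⟨(z.1, ⟨z.2.a, z.2.b, z.1.d⟩), rfl⟩, z.2.d)
      left_inv := fun ⟨⟨z, hz⟩, u⟩ => by simp [hz]
      right_inv := fun z => rfl }

namespace Parabolic

/-- The block matrix `[a 0 b; 0 a' b'; 0 0 d']` made of `p = [a b; 0 d]` and
`p' = [a' b'; 0 d']`. -/
@[simps]
def extend (p : Parabolic F ι μ) (p' : Parabolic F ι' μ) : Parabolic F ι (ι' ⊕ μ) :=
  ⟨p.a, fromCols 0 p.b, p'.toGL⟩

/-- The element of the stabilizer of `MatrixIso.swap` given by a pair of parabolic elements. -/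
def extendPair (y : ParabolicPair F ι ι' μ) : Parabolic F ι (ι' ⊕ μ) × Parabolic F ι' (ι ⊕ μ) :=
  (extend y.1.1 y.1.2, extend y.1.2 y.1.1)

theorem toGL_injective : Function.Injective (toGL (F := F) (ι := ι) (κ := μ)) := fun _ _ h =>
  toMatrix_injective (congrArg Units.val h)

theorem extendPair_injective :
    Function.Injective (extendPair (F := F) (ι := ι) (ι' := ι') (μ := μ)) :=
  fun _ _ h => Subtype.ext <| Prod.ext
    (toGL_injective (congrArg (fun z => z.2.d) h)) (toGL_injective (congrArg (fun z => z.1.d) h))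

theorem smul_swap_eq_self_iff (z : Parabolic F ι (ι' ⊕ μ) × Parabolic F ι' (ι ⊕ μ)) :
    z • MatrixIso.swap F ι ι' μ = MatrixIso.swap F ι ι' μ ↔
      z.1.toMatrix = z.2.toMatrix.submatrix (sumLeftComm ι ι' μ) (sumLeftComm ι ι' μ) := by
  rw [smul_eq_iff, ← MatrixIso.ofEquiv_conj, ← MatrixIso.swap]
  constructor <;> intro h
  · rw [← h, Matrix.mul_assoc, MatrixIso.mat_mul_inv, Matrix.mul_one]
  · rw [h, Matrix.mul_assoc, MatrixIso.inv_mul_mat, Matrix.mul_one]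

theorem smul_swap_eq_self_iff_mem_range (z : Parabolic F ι (ι' ⊕ μ) × Parabolic F ι' (ι ⊕ μ)) :
    z • MatrixIso.swap F ι ι' μ = MatrixIso.swap F ι ι' μ ↔ z ∈ Set.range extendPair := by
  rw [smul_swap_eq_self_iff]
  constructor
  · intro h
    have entry i j := congrFun₂ h i j
    have lower_left₁ : z.1.d.val.toBlocks₂₁ = 0 := by
      ext i j
      simpa [toBlocks₂₁] using entry (Sum.inr (Sum.inr i)) (Sum.inr (Sum.inl j))
    have lower_left₂ : z.2.d.val.toBlocks₂₁ = 0 := by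
      ext i j
      simpa [toBlocks₂₁] using (entry (Sum.inr (Sum.inr i)) (Sum.inl j)).symm
    obtain ⟨p', hp'⟩ := exists_toMatrix_eq z.1.d.isUnit lower_left₁
    obtain ⟨p, hp⟩ := exists_toMatrix_eq z.2.d.isUnit lower_left₂
    have hd : p.d = p'.d := Units.ext <| Matrix.ext fun i j => by
      simpa [← hp, ← hp'] using (entry (Sum.inr (Sum.inr i)) (Sum.inr (Sum.inr j))).symm
    have ha : p.a = z.1.a := Units.ext <| Matrix.ext fun i j => by
      simpa [← hp] using (entry (Sum.inl i) (Sum.inl j)).symm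
    have hb : fromCols 0 p.b = z.1.b := by
      ext i (j | j)
      · simpa using (entry (Sum.inl i) (Sum.inr (Sum.inl j))).symm
      · simpa [← hp] using (entry (Sum.inl i) (Sum.inr (Sum.inr j))).symm
    have ha' : p'.a = z.2.a := Units.ext <| Matrix.ext fun i j => by
      simpa [← hp'] using entry (Sum.inr (Sum.inl i)) (Sum.inr (Sum.inl j))
    have hb' : fromCols 0 p'.b = z.2.b := by
      ext i (j | j)
      · simpa using entry (Sum.inr (Sum.inl i)) (Sum.inl j)
      · simpa [← hp'] using entry (Sum.inr (Sum.inl i)) (Sum.inr (Sum.inr j))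
    exact ⟨⟨(p, p'), hd⟩, Prod.ext (Parabolic.ext ha hb (Units.ext hp'))
      (Parabolic.ext ha' hb' (Units.ext hp))⟩
  · rintro ⟨⟨⟨p, p'⟩, hd⟩, rfl⟩
    ext (i | i | i) (j | j | j) <;> simp [extendPair, show p.d = p'.d from hd]

end Parabolic

namespace GLChar

/-- The value of `pairInflation` at `Parabolic.extendPair`, as a function of two parabolic elements
that need not agree in their second Levi component. -/
noncomputable def crossTerm (σ τ ρ ω : GLChar F) (z : Parabolic F ι μ × Parabolic F ι' μ) : ℂ :=
  σ.eval z.1.a.val * τ.eval z.2.toMatrix * (ρ.eval z.2.a⁻¹.val * ω.eval z.1⁻¹.toMatrix)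

theorem pairInflation_extendPair (σ τ ρ ω : GLChar F) (y : ParabolicPair F ι ι' μ) :
    pairInflation σ τ ρ ω (Parabolic.extendPair y) = crossTerm σ τ ρ ω y.1 :=
  rfl

open scoped Classical in
theorem sum_crossTerm_intertwined [Finite F] (σ τ ρ ω : GLChar F) (h : MatrixIso F μ μ) :
    ∑ z : Parabolic F ι μ × Parabolic F ι' μ with z.1.d.val * h.mat = h.mat * z.2.d.val,
        crossTerm σ τ ρ ω z =
      ∑ z : Parabolic F ι μ × Parabolic F ι' μ with z.1.d = z.2.d, crossTerm σ τ ρ ω z := by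
  simp only [Finset.sum_filter]
  refine Fintype.sum_equiv ((Equiv.refl _).prodCongr
    (Parabolic.congr (MatrixIso.equivGL.symm 1) h)) _ _ fun z => ?_
  have crossTerm_congr : crossTerm σ τ ρ ω
      (z.1, Parabolic.congr (MatrixIso.equivGL.symm 1) h z.2) = crossTerm σ τ ρ ω z := by
    simp only [crossTerm, Parabolic.toMatrix_congr, eval_conj]
    simp [← map_inv]
  exact if_congr (h.mul_mat_eq_mat_mul_iff _ _) crossTerm_congr.symm rfl

variable [Fintype F]

theorem sum_parabolicSum_mul_parabolicSum_eq_card_GL_mul (σ τ ρ ω : GLChar F) :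
    ∑ κ ∈ ofSize F (Fintype.card μ), parabolicSum ι' μ ρ κ τ * parabolicSum ι μ σ κ ω =
      Nat.card (GL μ F) * ∑ y : ParabolicPair F ι ι' μ, crossTerm σ τ ρ ω y.1 := by
  classical
  calc ∑ κ ∈ ofSize F (Fintype.card μ), parabolicSum ι' μ ρ κ τ * parabolicSum ι μ σ κ ω
      = ∑ z : Parabolic F ι μ × Parabolic F ι' μ, crossTerm σ τ ρ ω z *
          ∑ κ ∈ ofSize F (Fintype.card μ), κ.eval z.1.d.val * κ.eval z.2.d⁻¹.val := by
        simp only [Finset.mul_sum]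
        rw [Finset.sum_comm]
        refine Finset.sum_congr rfl fun κ _ => ?_
        rw [mul_comm, parabolicSum_eq_sum_inv σ, parabolicSum, Finset.sum_mul_sum,
          ← Finset.sum_product', Finset.univ_product_univ]
        refine Finset.sum_congr rfl fun z _ => ?_
        simp only [crossTerm, inflation, Parabolic.inv_a, Parabolic.inv_d]
        ring
    _ = ∑ z : Parabolic F ι μ × Parabolic F ι' μ, ∑ h : MatrixIso F μ μ,
          if z.1.d.val * h.mat = h.mat * z.2.d.val then crossTerm σ τ ρ ω z else 0 := by
        refine Finset.sum_congr rfl fun z _ => ?_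
        rw [column_orthogonality _ _ rfl, ← Finset.sum_filter, Finset.sum_const, nsmul_eq_mul,
          mul_comm, Nat.card_eq_fintype_card, Fintype.card_subtype]
    _ = ∑ _h : MatrixIso F μ μ, ∑ z : Parabolic F ι μ × Parabolic F ι' μ with z.1.d = z.2.d,
          crossTerm σ τ ρ ω z := by
        rw [Finset.sum_comm]
        simp only [← Finset.sum_filter, sum_crossTerm_intertwined]
    _ = _ := by
        rw [Finset.sum_const, nsmul_eq_mul, Finset.card_univ, ← Nat.card_eq_fintype_card,
          Nat.card_congr MatrixIso.equivGL]
        exact congrArg _ (Finset.sum_subtype _ (fun z => Finset.mem_filter_univ z) _)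

theorem sum_crossTerm_eq {σ ρ : GLChar F} (hσ : Fintype.card ι = σ.size)
    (hρ : Fintype.card ι' = ρ.size) (τ ω : GLChar F) :
    ∑ y : ParabolicPair F ι ι' μ, crossTerm σ τ ρ ω y.1 = Nat.card (ParabolicPair F ι ι' μ) *
      ∑ κ ∈ ofSize F (Fintype.card μ), (jacquetMult ρ κ τ : ℂ) * jacquetMult σ κ ω := by
  have card_eq : (Nat.card (ParabolicPair F ι ι' μ) : ℂ) * Nat.card (GL μ F) =
      Nat.card (Parabolic F ι μ) * Nat.card (Parabolic F ι' μ) :=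
    mod_cast ParabolicPair.card_mul_card_GL
  refine mul_left_cancel₀ (natCard_cast_ne_zero (GL μ F)) ?_
  rw [← sum_parabolicSum_mul_parabolicSum_eq_card_GL_mul, ← mul_assoc, mul_comm (Nat.card _ : ℂ),
    card_eq, Finset.mul_sum]
  refine Finset.sum_congr rfl fun κ hκ => ?_
  have hκ := (mem_ofSize.mp hκ).symm
  rw [parabolicSum_eq_card_mul_jacquetMult τ hρ hκ, parabolicSum_eq_card_mul_jacquetMult ω hσ hκ]
  ring

open scoped Classical in
theorem sum_mackeyTerm_isBigCell {σ ρ : GLChar F} (hσ : Fintype.card ι = σ.size)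
    (hρ : Fintype.card ι' = ρ.size) (τ ω : GLChar F) :
    ∑ h : MatrixIso F (ι ⊕ (ι' ⊕ μ)) (ι' ⊕ (ι ⊕ μ)) with h.IsBigCell, mackeyTerm σ τ ρ ω h =
      Nat.card (Parabolic F ι (ι' ⊕ μ)) * Nat.card (Parabolic F ι' (ι ⊕ μ)) *
        ∑ κ ∈ ofSize F (Fintype.card μ), (jacquetMult ρ κ τ : ℂ) * jacquetMult σ κ ω := by
  have orbit_sum := sum_orbit_stabilizerSum_mul_card (pairInflation_conj σ τ ρ ω)
    (Parabolic.extendPair_injective (F := F) (ι := ι) (ι' := ι') (μ := μ))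
    Parabolic.smul_swap_eq_self_iff_mem_range (s := Finset.univ.filter MatrixIso.IsBigCell)
    (fun h => by rw [MatrixIso.mem_orbit_swap_iff, Finset.mem_filter_univ])
  simp only [pairInflation_extendPair, Nat.card_prod, Nat.cast_mul] at orbit_sum
  have : Nonempty (ParabolicPair F ι ι' μ) := ⟨⟨1, rfl⟩⟩
  refine mul_right_cancel₀ (natCard_cast_ne_zero (ParabolicPair F ι ι' μ)) (orbit_sum.trans ?_)
  rw [sum_crossTerm_eq hσ hρ]
  ring

end GLChar

end BigCell

namespace GLChar

variable {F : Type} [Field F] [Fintype F]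

open scoped Classical in
theorem IsCuspidal.sum_mackeyTerm_not_isBigCell {ι κ ι' κ' : Type*} [Fintype ι] [DecidableEq ι]
    [Fintype κ] [DecidableEq κ] [Fintype ι'] [DecidableEq ι'] [Fintype κ'] [DecidableEq κ']
    {σ τ ρ ω : GLChar F} (hσ : σ.IsCuspidal) (hle : ρ.size ≤ σ.size)
    (hsize : σ.size + τ.size = ρ.size + ω.size) (hι : Fintype.card ι = σ.size)
    (hκ : Fintype.card κ = τ.size) (hι' : Fintype.card ι' = ρ.size)
    (hκ' : Fintype.card κ' = ω.size) :
    ∑ h : MatrixIso F (ι ⊕ κ) (ι' ⊕ κ') with ¬ h.IsBigCell, mackeyTerm σ τ ρ ω h =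
      Nat.card (Parabolic F ι κ) * Nat.card (Parabolic F ι' κ') *
        if σ = ρ ∧ τ = ω then 1 else 0 := by
  have vanish (h : MatrixIso F (ι ⊕ κ) (ι' ⊕ κ')) (hbig : ¬ h.IsBigCell)
      (hclosed : h.mat.toBlocks₂₁ = 0 → ρ.size ≠ σ.size) : mackeyTerm σ τ ρ ω h = 0 := by
    by_contra hne
    obtain hbig' | ⟨hzero, hcard⟩ := hσ.isBigCell_or_eq_zero_of_mackeyTerm_ne_zero hι
      (by rwa [hι, hι']) hne
    · exact hbig hbig'
    · exact hclosed hzero (by rw [← hι, ← hι', hcard])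
  by_cases hσρ : ρ.size = σ.size
  · rw [← sum_mackeyTerm_toBlocks₂₁_eq_zero hι hκ hι' hκ' hσρ.symm (by omega)]
    refine (Finset.sum_subset (fun h hh => ?_) fun h hh hh' => ?_).symm
    · have : Nonempty ι' := Fintype.card_pos_iff.mp (by rw [hι', hσρ]; exact hσ.1)
      rw [Finset.mem_filter_univ] at hh ⊢
      rintro ⟨L, hL⟩
      rw [hh, Matrix.mul_zero] at hL
      exact zero_ne_one hL
    · rw [Finset.mem_filter_univ] at hh hh'
      exact vanish h hh fun hzero => absurd hzero hh'
  · rw [if_neg fun h => hσρ (by rw [h.1]), mul_zero]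
    exact Finset.sum_eq_zero fun h hh => vanish h ((Finset.mem_filter_univ h).mp hh) fun _ => hσρ

theorem IsCuspidal.sum_jacquetMult_mul_jacquetMult_of_size_lt {σ τ ρ ω : GLChar F}
    (hσ : σ.IsCuspidal) (hle : ρ.size ≤ σ.size) (hsize : σ.size + τ.size = ρ.size + ω.size)
    (hlt : τ.size < ρ.size) :
    ∑ χ ∈ ofSize F (σ.size + τ.size), (jacquetMult σ τ χ : ℂ) * jacquetMult ρ ω χ =
      if σ = ρ ∧ τ = ω then 1 else 0 := by
  classical
  have not_isBigCell (h : MatrixIso F (Fin σ.size ⊕ Fin τ.size) (Fin ρ.size ⊕ Fin ω.size)) :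
      ¬ h.IsBigCell := fun ⟨_, hL⟩ => by
    have := card_le_of_mul_eq_one hL
    simp only [Fintype.card_fin] at this
    omega
  have mackey := card_mul_card_mul_sum_jacquetMult (ι := Fin σ.size) (κ := Fin τ.size)
    (ι' := Fin ρ.size) (κ' := Fin ω.size) (Fintype.card_fin _) (Fintype.card_fin _)
    (Fintype.card_fin _) (Fintype.card_fin _) hsize
  rw [← Finset.filter_true_of_mem (s := Finset.univ) fun h _ => not_isBigCell h,
    hσ.sum_mackeyTerm_not_isBigCell hle hsize (Fintype.card_fin _) (Fintype.card_fin _)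
    (Fintype.card_fin _) (Fintype.card_fin _)] at mackey
  exact mul_left_cancel₀ (mul_ne_zero (natCard_cast_ne_zero _) (natCard_cast_ne_zero _)) mackey

theorem IsCuspidal.sum_jacquetMult_mul_jacquetMult_of_size_le {σ τ ρ ω : GLChar F}
    (hσ : σ.IsCuspidal) (hle : ρ.size ≤ σ.size) (hsize : σ.size + τ.size = ρ.size + ω.size)
    (hρτ : ρ.size ≤ τ.size) :
    ∑ χ ∈ ofSize F (σ.size + τ.size), (jacquetMult σ τ χ : ℂ) * jacquetMult ρ ω χ =
      (if σ = ρ ∧ τ = ω then 1 else 0) +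
        ∑ κ ∈ ofSize F (τ.size - ρ.size), (jacquetMult ρ κ τ : ℂ) * jacquetMult σ κ ω := by
  classical
  have hκ : Fintype.card (Fin ρ.size ⊕ Fin (τ.size - ρ.size)) = τ.size := by simp [hρτ]
  have hκ' : Fintype.card (Fin σ.size ⊕ Fin (τ.size - ρ.size)) = ω.size := by simp; omega
  have mackey := card_mul_card_mul_sum_jacquetMult (Fintype.card_fin σ.size) hκ
    (Fintype.card_fin ρ.size) hκ' hsize
  rw [← Finset.sum_filter_add_sum_filter_not _ MatrixIso.IsBigCell,
    sum_mackeyTerm_isBigCell (Fintype.card_fin _) (Fintype.card_fin _),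
    hσ.sum_mackeyTerm_not_isBigCell hle hsize (Fintype.card_fin _) hκ (Fintype.card_fin _) hκ',
    ← mul_add, Fintype.card_fin, add_comm (Finset.sum _ _)] at mackey
  exact mul_left_cancel₀ (mul_ne_zero (natCard_cast_ne_zero _) (natCard_cast_ne_zero _)) mackey

/-- The Mackey formula. The truncated subtraction is harmless: `jacquetMult ρ κ τ = 0` for all `κ`
if `τ.size < ρ.size`. -/
theorem IsCuspidal.sum_jacquetMult_mul_jacquetMult {σ ρ : GLChar F} (hσ : σ.IsCuspidal)
    (hle : ρ.size ≤ σ.size) (τ ω : GLChar F) :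
    ∑ χ ∈ ofSize F (σ.size + τ.size), jacquetMult σ τ χ * jacquetMult ρ ω χ =
      (if σ = ρ ∧ τ = ω then 1 else 0) +
        ∑ κ ∈ ofSize F (τ.size - ρ.size), jacquetMult ρ κ τ * jacquetMult σ κ ω := by
  have cross_eq_zero (hne : σ.size + τ.size ≠ ρ.size + ω.size ∨ τ.size < ρ.size) :
      ∑ κ ∈ ofSize F (τ.size - ρ.size), jacquetMult ρ κ τ * jacquetMult σ κ ω = 0 := by
    refine Finset.sum_eq_zero fun κ _ => by_contra fun h => ?_
    have := size_eq_of_jacquetMult_ne_zero (left_ne_zero_of_mul h)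
    have := size_eq_of_jacquetMult_ne_zero (right_ne_zero_of_mul h)
    omega
  by_cases hsize : σ.size + τ.size = ρ.size + ω.size
  · obtain hlt | hρτ := lt_or_ge τ.size ρ.size
    · rw [cross_eq_zero (.inr hlt), add_zero]
      exact mod_cast hσ.sum_jacquetMult_mul_jacquetMult_of_size_lt hle hsize hlt
    · exact mod_cast hσ.sum_jacquetMult_mul_jacquetMult_of_size_le hle hsize hρτ
  · rw [cross_eq_zero (.inl hsize), add_zero, if_neg fun h => hsize (by rw [h.1, h.2])]
    refine Finset.sum_eq_zero fun χ _ => by_contra fun h => hsize ?_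
    rw [← size_eq_of_jacquetMult_ne_zero (left_ne_zero_of_mul h),
      ← size_eq_of_jacquetMult_ne_zero (right_ne_zero_of_mul h)]

end GLChar

/-! ### Jacquet restrictions and cuspidal constituents -/

section JacquetCharacter

variable {F : Type} [Field F] {ι κ μ : Type*} [Fintype ι] [DecidableEq ι] [Fintype κ]
  [DecidableEq κ] [Fintype μ] [DecidableEq μ]

namespace GLChar

theorem eval_fromBlocks_fromBlocks (χ : GLChar F) (X : Matrix ι κ F) (D : Matrix (ι ⊕ κ) μ F) :
    χ.eval (fromBlocks (fromBlocks 1 X 0 1) D 0 1) =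
      χ.eval (fromBlocks 1 (fromCols X D.toRows₁) 0 (fromBlocks 1 D.toRows₂ 0 1)) := by
  rw [← eval_submatrix χ (Equiv.sumAssoc ι κ μ)]
  congr 1
  ext i j
  rcases i with (i | i) | i <;> rcases j with (j | j) | j <;> simp [Matrix.one_apply]

variable [Fintype F]

/-- The character of the Jacquet restriction of `χ`, at the block diagonal matrix with blocks `A`
and `C`. -/
noncomputable def jacquetChar (χ : GLChar F) (A : Matrix ι ι F) (C : Matrix κ κ F) : ℂ :=
  ∑ ρ ∈ ofSize F (Fintype.card ι), ∑ η ∈ ofSize F (Fintype.card κ),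
    (jacquetMult ρ η χ : ℂ) * (ρ.eval A * η.eval C)

open scoped Classical in
theorem sum_eval_toMatrix_intertwined (χ : GLChar F) (A : GL ι F) (C : GL κ F)
    (f : MatrixIso F ι ι) (g : MatrixIso F κ κ) :
    ∑ p : Parabolic F ι κ with A.val * f.mat = f.mat * p.a.val ∧ C.val * g.mat = g.mat * p.d.val,
        χ.eval p.toMatrix =
      ∑ B : Matrix ι κ F, χ.eval (fromBlocks A.val B 0 C.val) := by
  refine Finset.sum_bij' (fun p _ => (Parabolic.congr f g p).b)
    (fun B _ => (Parabolic.congr f g).symm ⟨A, B, C⟩) (by simp) ?_ ?_ (by simp) ?_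
  · intro B _
    simp [f.mul_mat_eq_mat_mul_iff, g.mul_mat_eq_mat_mul_iff, Units.ext_iff, Matrix.mul_assoc]
  all_goals
    intro p hp
    simp only [f.mul_mat_eq_mat_mul_iff, g.mul_mat_eq_mat_mul_iff, Finset.mem_filter_univ] at hp
    obtain ⟨rfl, rfl⟩ := hp
  · exact (Parabolic.congr f g).symm_apply_apply p
  · rw [← eval_conj χ (f.sumCongr g), ← Parabolic.toMatrix_congr]
    rfl

theorem card_mul_jacquetChar (χ : GLChar F) (A : GL ι F) (C : GL κ F) :
    (Nat.card (Parabolic F ι κ) : ℂ) * χ.jacquetChar A.val C.val =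
      ∑ p : Parabolic F ι κ, χ.eval p.toMatrix *
        (Nat.card {f : MatrixIso F ι ι // A.val * f.mat = f.mat * p.a.val} *
          Nat.card {g : MatrixIso F κ κ // C.val * g.mat = g.mat * p.d.val}) := by
  simp only [← column_orthogonality _ _ rfl, Finset.sum_mul_sum]
  simp only [jacquetChar, Finset.mul_sum]
  conv_rhs => rw [Finset.sum_comm]
  refine Finset.sum_congr rfl fun ρ hρ => ?_
  conv_rhs => rw [Finset.sum_comm]
  refine Finset.sum_congr rfl fun η hη => ?_
  rw [← mul_assoc, ← parabolicSum_eq_card_mul_jacquetMult χ (mem_ofSize.mp hρ).symm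
    (mem_ofSize.mp hη).symm, parabolicSum, Finset.sum_mul]
  refine Finset.sum_congr rfl fun p _ => ?_
  simp only [inflation, Parabolic.inv_a, Parabolic.inv_d]
  ring

theorem sum_eval_fromBlocks (χ : GLChar F) (A : GL ι F) (C : GL κ F) :
    ∑ B : Matrix ι κ F, χ.eval (fromBlocks A.val B 0 C.val) =
      Nat.card (Matrix ι κ F) * χ.jacquetChar A.val C.val := by
  classical
  refine mul_left_cancel₀ (mul_ne_zero (natCard_cast_ne_zero (GL ι F))
    (natCard_cast_ne_zero (GL κ F))) ?_
  calc (Nat.card (GL ι F) : ℂ) * Nat.card (GL κ F) *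
        ∑ B : Matrix ι κ F, χ.eval (fromBlocks A.val B 0 C.val)
      = ∑ z : MatrixIso F ι ι × MatrixIso F κ κ, ∑ p : Parabolic F ι κ with
          A.val * z.1.mat = z.1.mat * p.a.val ∧ C.val * z.2.mat = z.2.mat * p.d.val,
          χ.eval p.toMatrix := by
        simp only [sum_eval_toMatrix_intertwined, Finset.sum_const, Finset.card_univ,
          nsmul_eq_mul, ← Nat.card_eq_fintype_card]
        rw [Nat.card_prod, Nat.card_congr MatrixIso.equivGL, Nat.card_congr MatrixIso.equivGL,
          Nat.cast_mul]
    _ = ∑ p : Parabolic F ι κ, χ.eval p.toMatrix *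
        (Nat.card {f : MatrixIso F ι ι // A.val * f.mat = f.mat * p.a.val} *
          Nat.card {g : MatrixIso F κ κ // C.val * g.mat = g.mat * p.d.val}) := by
        simp only [Finset.sum_filter]
        rw [Finset.sum_comm]
        refine Finset.sum_congr rfl fun p _ => ?_
        rw [← Finset.sum_filter, Finset.sum_const, nsmul_eq_mul, mul_comm,
          ← Finset.univ_product_univ, Finset.filter_product
            (fun f : MatrixIso F ι ι => A.val * f.mat = f.mat * p.a.val)
            (fun g : MatrixIso F κ κ => C.val * g.mat = g.mat * p.d.val), Finset.card_product]
        simp only [Nat.card_eq_fintype_card, Fintype.card_subtype, Nat.cast_mul]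
    _ = _ := by
        rw [← card_mul_jacquetChar, Parabolic.card_eq]
        push_cast
        ring

theorem eval_fromBlocks_eq_jacquetChar (χ : GLChar F) {A : GL ι F} {C : GL κ F}
    (hAC : ∀ X : Matrix ι κ F, A.val * X = X * C.val → X = 0) :
    χ.eval (fromBlocks A.val 0 0 C.val) = χ.jacquetChar A.val C.val := by
  have sylvester_surjective :
      Function.Surjective fun X : Matrix ι κ F => A.val * X - X * C.val := by
    refine Finite.surjective_of_injective fun X Y (hXY : _ - _ = _ - _) => ?_
    rw [← sub_eq_zero]
    refine hAC _ ?_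
    rw [Matrix.mul_sub, Matrix.sub_mul, sub_eq_sub_iff_sub_eq_sub, hXY]
  have eval_eq (B : Matrix ι κ F) :
      χ.eval (fromBlocks A.val B 0 C.val) = χ.eval (fromBlocks A.val 0 0 C.val) := by
    obtain ⟨X, rfl⟩ := sylvester_surjective B
    rw [← eval_conj χ (MatrixIso.equivGL.symm (Parabolic.toGL ⟨1, X, 1⟩))]
    congr 1
    simp [← map_inv, fromBlocks_multiply]
  have sum_eq := sum_eval_fromBlocks χ A C
  simp only [eval_eq, Finset.sum_const, Finset.card_univ, nsmul_eq_mul,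
    ← Nat.card_eq_fintype_card] at sum_eq
  exact mul_left_cancel₀ (natCard_cast_ne_zero _) sum_eq

/-- The degree of a character. -/
noncomputable def degree (χ : GLChar F) : ℕ := (Irr.exists_degree χ.irr).choose

theorem degree_pos (χ : GLChar F) : 0 < χ.degree := (Irr.exists_degree χ.irr).choose_spec.1

theorem eval_one {χ : GLChar F} (hι : Fintype.card ι = χ.size) :
    χ.eval (1 : Matrix ι ι F) = χ.degree := by
  obtain ⟨a⟩ := nonempty_matrixIso hι
  rw [← Units.val_one, eval_coe χ a, map_one]
  exact (Irr.exists_degree χ.irr).choose_spec.2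

/-- The degree of the Jacquet restriction of `χ` to `GL(m, F) × GL(n, F)`. -/
noncomputable def jacquetDegree (m n : ℕ) (χ : GLChar F) : ℕ :=
  ∑ ρ ∈ ofSize F m, ∑ η ∈ ofSize F n, jacquetMult ρ η χ * (ρ.degree * η.degree)

theorem jacquetDegree_pos {ρ η χ : GLChar F} (h : jacquetMult ρ η χ ≠ 0) :
    0 < jacquetDegree ρ.size η.size χ := by
  have term_pos : 0 < jacquetMult ρ η χ * (ρ.degree * η.degree) :=
    Nat.mul_pos (Nat.pos_of_ne_zero h) (Nat.mul_pos ρ.degree_pos η.degree_pos)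
  refine term_pos.trans_le ?_
  refine (Finset.single_le_sum (f := fun η' => jacquetMult ρ η' χ * (ρ.degree * η'.degree))
    (fun _ _ => Nat.zero_le _) (mem_ofSize.mpr rfl)).trans ?_
  exact Finset.single_le_sum (f := fun ρ' => ∑ η' ∈ ofSize F η.size,
    jacquetMult ρ' η' χ * (ρ'.degree * η'.degree)) (fun _ _ => Nat.zero_le _) (mem_ofSize.mpr rfl)

theorem sum_eval_unipotent (χ : GLChar F) :
    ∑ B : Matrix ι κ F, χ.eval (fromBlocks 1 B 0 1) =
      Nat.card (Matrix ι κ F) * jacquetDegree (Fintype.card ι) (Fintype.card κ) χ := by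
  refine (sum_eval_fromBlocks χ 1 1).trans (congrArg _ ?_)
  simp only [jacquetChar, jacquetDegree, Nat.cast_sum]
  refine Finset.sum_congr rfl fun ρ hρ => Finset.sum_congr rfl fun η hη => ?_
  rw [Units.val_one, Units.val_one, eval_one (mem_ofSize.mp hρ).symm,
    eval_one (mem_ofSize.mp hη).symm]
  push_cast
  rfl

theorem sum_sum_eval_unipotent_eq_card_mul (χ : GLChar F) :
    ∑ X : Matrix ι κ F, ∑ D : Matrix (ι ⊕ κ) μ F, χ.eval (fromBlocks (fromBlocks 1 X 0 1) D 0 1) =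
      Nat.card (Matrix (ι ⊕ κ) μ F) * Nat.card (Matrix ι κ F) *
        (∑ ρ ∈ ofSize F (Fintype.card (ι ⊕ κ)), ∑ η ∈ ofSize F (Fintype.card μ),
          jacquetMult ρ η χ *
            (jacquetDegree (Fintype.card ι) (Fintype.card κ) ρ * η.degree) : ℕ) := by
  have inner_sum (X : Matrix ι κ F) :
      ∑ D : Matrix (ι ⊕ κ) μ F, χ.eval (fromBlocks (fromBlocks 1 X 0 1) D 0 1) =
        Nat.card (Matrix (ι ⊕ κ) μ F) * χ.jacquetChar (fromBlocks 1 X 0 1) (1 : Matrix μ μ F) :=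
    sum_eval_fromBlocks χ (Parabolic.toGL ⟨1, X, 1⟩) (1 : GL μ F)
  simp only [inner_sum, jacquetChar]
  rw [← Finset.mul_sum, Finset.sum_comm, mul_assoc, Nat.cast_sum]
  congr 1
  rw [Finset.mul_sum]
  refine Finset.sum_congr rfl fun ρ _ => ?_
  rw [Finset.sum_comm, Nat.cast_sum, Finset.mul_sum]
  refine Finset.sum_congr rfl fun η hη => ?_
  rw [← Finset.mul_sum, ← Finset.sum_mul, sum_eval_unipotent, eval_one (mem_ofSize.mp hη).symm]
  push_cast
  ring

theorem sum_sum_eval_unipotent_assoc (χ : GLChar F) :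
    ∑ X : Matrix ι κ F, ∑ D : Matrix (ι ⊕ κ) μ F, χ.eval (fromBlocks (fromBlocks 1 X 0 1) D 0 1) =
      ∑ Z : Matrix κ μ F, ∑ B : Matrix ι (κ ⊕ μ) F,
        χ.eval (fromBlocks 1 B 0 (fromBlocks 1 Z 0 1)) := by
  let shuffle : Matrix ι κ F × Matrix (ι ⊕ κ) μ F ≃ Matrix κ μ F × Matrix ι (κ ⊕ μ) F :=
    { toFun z := (z.2.toRows₂, fromCols z.1 z.2.toRows₁)
      invFun z := (z.2.toCols₁, fromRows z.2.toCols₂ z.1)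
      left_inv z := by simp
      right_inv z := by simp }
  simp only [← Fintype.sum_prod_type']
  exact Fintype.sum_equiv shuffle _ _ fun z => eval_fromBlocks_fromBlocks χ z.1 z.2

theorem exists_jacquetMult_ne_zero_trans {α β ρ η χ : GLChar F} (hρ : jacquetMult α β ρ ≠ 0)
    (hχ : jacquetMult ρ η χ ≠ 0) :
    ∃ α' γ : GLChar F, α'.size = α.size ∧ jacquetMult α' γ χ ≠ 0 := by
  by_contra! none
  have assoc := sum_sum_eval_unipotent_assoc (ι := Fin α.size) (κ := Fin β.size)
    (μ := Fin η.size) χ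
  have sum_eq_zero (Z : Matrix (Fin β.size) (Fin η.size) F) :
      ∑ B : Matrix (Fin α.size) (Fin β.size ⊕ Fin η.size) F,
        χ.eval (fromBlocks 1 B 0 (fromBlocks 1 Z 0 1)) = 0 := by
    refine (sum_eval_fromBlocks χ 1 (Parabolic.toGL ⟨1, Z, 1⟩)).trans ?_
    refine mul_eq_zero_of_right _
      (Finset.sum_eq_zero fun α' hα' => Finset.sum_eq_zero fun γ _ => ?_)
    rw [none α' γ (by simpa using hα'), Nat.cast_zero, zero_mul]
  simp only [sum_eq_zero, Finset.sum_const_zero, sum_sum_eval_unipotent_eq_card_mul] at assoc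
  have sum_terms := (mul_eq_zero.mp assoc).resolve_left
    (mul_ne_zero (natCard_cast_ne_zero _) (natCard_cast_ne_zero _))
  simp only [Nat.cast_eq_zero, Finset.sum_eq_zero_iff, mem_ofSize, Fintype.card_sum,
    Fintype.card_fin] at sum_terms
  exact mul_ne_zero hχ (mul_ne_zero (jacquetDegree_pos hρ).ne' η.degree_pos.ne')
    (sum_terms ρ (size_eq_of_jacquetMult_ne_zero hρ) η rfl)

theorem exists_jacquetMult_ne_zero_of_size_eq (χ : GLChar F) :
    ∃ ρ η : GLChar F, ρ.size = χ.size ∧ jacquetMult ρ η χ ≠ 0 := by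
  by_contra! none
  have sum_eq := sum_eval_unipotent (ι := Fin χ.size) (κ := Fin 0) χ
  rw [Fintype.sum_subsingleton _ 0, fromBlocks_one, eval_one (by simp)] at sum_eq
  have jacquetDegree_eq_zero : jacquetDegree χ.size 0 χ = 0 :=
    Finset.sum_eq_zero fun ρ hρ => Finset.sum_eq_zero fun η _ => by
      rw [none ρ η (mem_ofSize.mp hρ), zero_mul]
  rw [Fintype.card_fin, Fintype.card_fin, jacquetDegree_eq_zero, Nat.cast_zero, mul_zero,
    Nat.cast_eq_zero] at sum_eq
  exact χ.degree_pos.ne' sum_eq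

end GLChar

end JacquetCharacter

section Cuspidal

theorem sum_toBlocks₁₂_eq_zero {F ι κ : Type*} [Fintype F] [Fintype ι] [DecidableEq ι]
    [Fintype κ] [DecidableEq κ] {f : Matrix ι κ F → ℂ} (hf : ∑ B, f B = 0) :
    ∑ X : Matrix (ι ⊕ κ) (ι ⊕ κ) F, f X.toBlocks₁₂ = 0 := by
  let blocks : Matrix (ι ⊕ κ) (ι ⊕ κ) F ≃
      (Matrix ι ι F × Matrix κ ι F × Matrix κ κ F) × Matrix ι κ F :=
    { toFun X := ((X.toBlocks₁₁, X.toBlocks₂₁, X.toBlocks₂₂), X.toBlocks₁₂)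
      invFun z := fromBlocks z.1.1 z.2 z.1.2.1 z.1.2.2
      left_inv X := fromBlocks_toBlocks X
      right_inv z := by simp }
  refine (blocks.sum_comp fun z => f z.2).trans ?_
  rw [Fintype.sum_prod_type]
  simp only [hf, Finset.sum_const_zero]

variable {F : Type} [Field F] {ι κ : Type*} [Fintype ι] [DecidableEq ι] [Fintype κ] [DecidableEq κ]

/-- The change of coordinates from the standard basis to the basis `b`. -/
noncomputable def MatrixIso.ofBasis (b : Module.Basis ι F (κ → F)) : MatrixIso F ι κ where
  mat := b.toMatrix (Pi.basisFun F κ)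
  inv := (Pi.basisFun F κ).toMatrix b
  mat_mul_inv := b.toMatrix_mul_toMatrix_flip _
  inv_mul_mat := (Pi.basisFun F κ).toMatrix_mul_toMatrix_flip _

theorem MatrixIso.ofBasis_conj (b : Module.Basis ι F (κ → F)) (M : Matrix κ κ F) :
    (ofBasis b).mat * M * (ofBasis b).inv = LinearMap.toMatrix b b (toLin' M) := by
  rw [← basis_toMatrix_mul_linearMap_toMatrix_mul_basis_toMatrix b (Pi.basisFun F κ) b
    (Pi.basisFun F κ), LinearMap.toMatrix_eq_toMatrix', LinearMap.toMatrix'_toLin']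
  rfl

theorem exists_matrixIso_conj_eq_fromBlocks_one {ε : Matrix ι ι F} (hε : IsIdempotentElem ε) :
    ∃ (m n : ℕ) (a : MatrixIso F (Fin m ⊕ Fin n) ι),
      a.mat * ε * a.inv = fromBlocks 1 0 0 0 := by
  have hf : IsIdempotentElem (toLin' ε) := by
    rw [IsIdempotentElem, Module.End.mul_eq_comp, ← toLin'_mul, hε.eq]
  let b := ((Module.finBasis F (toLin' ε).range).prod (Module.finBasis F (toLin' ε).ker)).map
    (Submodule.prodEquivOfIsCompl _ _ (LinearMap.IsIdempotentElem.isCompl hf))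
  have b_inl (i) : toLin' ε (b (Sum.inl i)) = b (Sum.inl i) :=
    (LinearMap.IsIdempotentElem.mem_range_iff hf).mp (by simp [b])
  have b_inr (i) : toLin' ε (b (Sum.inr i)) = 0 := LinearMap.mem_ker.mp (by simp [b])
  refine ⟨_, _, MatrixIso.ofBasis b, ?_⟩
  rw [MatrixIso.ofBasis_conj]
  ext i j
  rcases j with j | j
  · rw [LinearMap.toMatrix_apply, b_inl]
    rcases i with i | i <;> simp [Finsupp.single_apply, Matrix.one_apply, eq_comm]
  · rw [LinearMap.toMatrix_apply, b_inr]
    rcases i with i | i <;> simp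

theorem MatrixIso.ne_zero_of_conj_eq_fromBlocks_one {m n : ℕ} {ε : Matrix ι ι F}
    (a : MatrixIso F (Fin m ⊕ Fin n) ι) (ha : a.mat * ε * a.inv = fromBlocks 1 0 0 0)
    (hε₀ : ε ≠ 0) (hε₁ : ε ≠ 1) : m ≠ 0 ∧ n ≠ 0 := by
  constructor <;> rintro rfl
  · refine hε₀ (a.conjRingEquiv.injective ?_)
    rw [conjRingEquiv_apply, ha, map_zero, ← fromBlocks_zero, fromBlocks_inj]
    simp [Subsingleton.elim (1 : Matrix (Fin 0) (Fin 0) F) 0]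
  · refine hε₁ (a.conjRingEquiv.injective ?_)
    rw [conjRingEquiv_apply, ha, map_one, ← fromBlocks_one, fromBlocks_inj]
    simp [Subsingleton.elim (1 : Matrix (Fin 0) (Fin 0) F) 0]

theorem Parabolic.toMatrix_mul_one_add (p : Parabolic F ι κ) (X : Matrix (ι ⊕ κ) (ι ⊕ κ) F) :
    p.toMatrix * (1 + fromBlocks 1 0 0 0 * X * (1 - fromBlocks 1 0 0 0)) =
      fromBlocks p.a.val (p.a.val * X.toBlocks₁₂ + p.b) 0 p.d.val := by
  have one_sub : (1 : Matrix (ι ⊕ κ) (ι ⊕ κ) F) - fromBlocks 1 0 0 0 = fromBlocks 0 0 0 1 := by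
    rw [← fromBlocks_one, sub_eq_iff_eq_add, fromBlocks_add]
    simp
  rw [one_sub, ← fromBlocks_toBlocks X, fromBlocks_multiply, fromBlocks_multiply,
    ← fromBlocks_one, fromBlocks_add, toMatrix_apply, fromBlocks_multiply]
  simp

namespace GLChar

variable [Fintype F]

theorem sum_eval_mul_add_eq_sum (χ : GLChar F) (A : GL ι F) (B : Matrix ι κ F) (D : GL κ F) :
    ∑ X : Matrix ι κ F, χ.eval (fromBlocks A.val (A.val * X + B) 0 D.val) =
      ∑ X : Matrix ι κ F, χ.eval (fromBlocks A.val X 0 D.val) := by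
  let affine : Matrix ι κ F ≃ Matrix ι κ F :=
    { toFun X := A.val * X + B
      invFun X := A.inv * (X - B)
      left_inv X := by simp [← Matrix.mul_assoc]
      right_inv X := by simp [← Matrix.mul_assoc] }
  exact affine.sum_comp (fun X => χ.eval (fromBlocks A.val X 0 D.val))

theorem IsCuspidal.of_jacquetMult_eq_zero {σ : GLChar F} (hpos : 0 < σ.size)
    (hσ : ∀ α β : GLChar F, 0 < α.size → 0 < β.size → jacquetMult α β σ = 0) :
    σ.IsCuspidal := by
  refine ⟨hpos, fun ε x hε hε₀ hε₁ hx hxε => ?_⟩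
  obtain ⟨m, n, a, ha⟩ := exists_matrixIso_conj_eq_fromBlocks_one hε
  let r := a.conjRingEquiv
  have r_ε : r ε = fromBlocks 1 0 0 0 := ha
  obtain ⟨hm, hn⟩ := a.ne_zero_of_conj_eq_fromBlocks_one ha hε₀ hε₁
  obtain ⟨p, hp⟩ : ∃ p : Parabolic F (Fin m) (Fin n), p.toMatrix = r x := by
    refine Parabolic.exists_toMatrix_eq (hx.map r) ?_
    have := congrArg r hxε
    rw [map_mul, map_mul, map_mul, r_ε, ← fromBlocks_toBlocks (r x), fromBlocks_multiply,
      fromBlocks_multiply, fromBlocks_multiply, fromBlocks_inj] at this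
    simpa using this.2.2.1
  have eval_eq (φ : Matrix (Fin σ.size) (Fin σ.size) F) :
      σ.eval (x * (1 + ε * φ * (1 - ε))) =
        σ.eval (fromBlocks p.a.val (p.a.val * (r φ).toBlocks₁₂ + p.b) 0 p.d.val) := by
    rw [← Parabolic.toMatrix_mul_one_add, hp, ← r_ε, ← map_one r, ← map_mul, ← map_sub,
      ← map_mul, ← map_add, ← map_mul]
    exact (eval_conj σ a _).symm
  simp only [eval_eq]
  refine (r.toEquiv.sum_comp fun X => σ.eval (fromBlocks p.a.val
    (p.a.val * X.toBlocks₁₂ + p.b) 0 p.d.val)).trans (sum_toBlocks₁₂_eq_zero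
      (f := fun B => σ.eval (fromBlocks p.a.val (p.a.val * B + p.b) 0 p.d.val)) ?_)
  rw [sum_eval_mul_add_eq_sum, sum_eval_fromBlocks]
  refine mul_eq_zero_of_right _ (Finset.sum_eq_zero fun α hα => Finset.sum_eq_zero fun β hβ => ?_)
  rw [mem_ofSize, Fintype.card_fin] at hα hβ
  rw [hσ α β (by lia) (by lia), Nat.cast_zero, zero_mul]

theorem exists_isCuspidal_jacquetMult_ne_zero {χ : GLChar F} (hχ : 0 < χ.size) :
    ∃ σ τ : GLChar F, σ.IsCuspidal ∧ jacquetMult σ τ χ ≠ 0 := by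
  classical
  have exists_pos : ∃ m, 0 < m ∧ ∃ ρ η : GLChar F, ρ.size = m ∧ jacquetMult ρ η χ ≠ 0 :=
    ⟨χ.size, hχ, exists_jacquetMult_ne_zero_of_size_eq χ⟩
  obtain ⟨ρ_pos, ρ, η, hρ, hχ⟩ := Nat.find_spec exists_pos
  refine ⟨ρ, η, .of_jacquetMult_eq_zero (by lia) fun α β hα hβ => ?_, hχ⟩
  by_contra hαβ
  have size_eq := size_eq_of_jacquetMult_ne_zero hαβ
  exact Nat.find_min exists_pos (m := α.size) (by lia)
    ⟨hα, exists_jacquetMult_ne_zero_trans hαβ hχ⟩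

end GLChar

end Cuspidal

/-! ### The Heisenberg relations -/

section Heisenberg

/-- The pairing on the free abelian group on `X` for which `X` is orthonormal. -/
noncomputable def orthonormalPairing (X : Type*) : (X →₀ ℤ) →ₗ[ℤ] (X →₀ ℤ) →ₗ[ℤ] ℤ :=
  Finsupp.linearCombination ℤ Finsupp.lapply

section OrthonormalPairing

variable {X : Type*}

@[simp]
theorem orthonormalPairing_single_left (x : X) (f : X →₀ ℤ) :
    orthonormalPairing X (Finsupp.single x 1) f = f x := by
  simp [orthonormalPairing]

theorem orthonormalPairing_comm (f g : X →₀ ℤ) :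
    orthonormalPairing X f g = orthonormalPairing X g f := by
  classical
  suffices orthonormalPairing X = (orthonormalPairing X).flip from congr($this f g)
  ext x y
  simp [Finsupp.single_apply, eq_comm]

theorem orthonormalPairing_self_eq_zero {f : X →₀ ℤ} :
    orthonormalPairing X f f = 0 ↔ f = 0 := by
  have eq_sum : orthonormalPairing X f f = ∑ x ∈ f.support, f x * f x := by
    simp [orthonormalPairing, Finsupp.linearCombination_apply, Finsupp.sum]
  rw [eq_sum, Finset.sum_eq_zero_iff_of_nonneg fun _ _ => mul_self_nonneg _]
  simp [Finsupp.ext_iff]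

end OrthonormalPairing

/-- Both `d` and `d'` act on the `u`s as derivations killing the commutator of `u` and `u'`. -/
theorem commute_commutator_of_heisenberg {R : Type*} [Ring R] {u d u' d' : R}
    (hu : d * u = 1 + u * d) (hu' : d' * u' = 1 + u' * d') (hdu' : d * u' = u' * d)
    (hd'u : d' * u = u * d') :
    Commute (d * d' - d' * d) (u' * u - u * u') := by
  have hd : d * (u' * u - u * u') = (u' * u - u * u') * d := by
    linear_combination (norm := noncomm_ring) hdu' * u + u' * hu - hu * u' - u * hdu'
  have hd' : d' * (u' * u - u * u') = (u' * u - u * u') * d' := by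
    linear_combination (norm := noncomm_ring) hu' * u + u' * hd'u - hd'u * u' - u * hu'
  exact (Commute.mul_left hd hd').sub_left (Commute.mul_left hd' hd)

variable {F : Type} [Field F] [Fintype F]

namespace GLChar

theorem IsCuspidal.mackey {σ ρ : GLChar F} (hσ : σ.IsCuspidal) (hρ : ρ.IsCuspidal)
    (τ ω : GLChar F) :
    ∑ χ ∈ ofSize F (σ.size + τ.size), jacquetMult σ τ χ * jacquetMult ρ ω χ =
      (if σ = ρ ∧ τ = ω then 1 else 0) +
        ∑ κ ∈ ofSize F (τ.size - ρ.size), jacquetMult ρ κ τ * jacquetMult σ κ ω := by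
  rcases le_total ρ.size σ.size with hle | hle
  · exact hσ.sum_jacquetMult_mul_jacquetMult hle τ ω
  by_cases hsize : σ.size + τ.size = ρ.size + ω.size
  · have symm := hρ.sum_jacquetMult_mul_jacquetMult hle ω τ
    rw [← hsize, show ω.size - σ.size = τ.size - ρ.size by lia] at symm
    simp only [mul_comm (jacquetMult σ τ _), symm, mul_comm (jacquetMult σ _ ω), eq_comm]
  · have hne : ¬ (σ = ρ ∧ τ = ω) := by
      rintro ⟨rfl, rfl⟩
      exact hsize rfl
    rw [if_neg hne, zero_add, Finset.sum_eq_zero, Finset.sum_eq_zero]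
    · intro κ _
      by_contra hκ
      have := size_eq_of_jacquetMult_ne_zero (left_ne_zero_of_mul hκ)
      have := size_eq_of_jacquetMult_ne_zero (right_ne_zero_of_mul hκ)
      lia
    · intro χ _
      by_contra hχ
      have := size_eq_of_jacquetMult_ne_zero (left_ne_zero_of_mul hχ)
      have := size_eq_of_jacquetMult_ne_zero (right_ne_zero_of_mul hχ)
      lia

/-- Multiplication by `σ` on the sum of the representation rings of all `GL(n, F)`, for the product
given by parabolic induction. -/
noncomputable def induce (σ : GLChar F) : Module.End ℤ (GLChar F →₀ ℤ) :=
  Finsupp.linearCombination ℤ fun τ =>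
    ∑ χ ∈ ofSize F (σ.size + τ.size), Finsupp.single χ (jacquetMult σ τ χ : ℤ)

/-- The adjoint of `induce σ`: the `σ`-component of the Jacquet restriction. -/
noncomputable def restrict (σ : GLChar F) : Module.End ℤ (GLChar F →₀ ℤ) :=
  Finsupp.linearCombination ℤ fun χ =>
    ∑ τ ∈ ofSize F (χ.size - σ.size), Finsupp.single τ (jacquetMult σ τ χ : ℤ)

theorem induce_single (σ τ : GLChar F) :
    induce σ (Finsupp.single τ 1) =
      ∑ χ ∈ ofSize F (σ.size + τ.size), (jacquetMult σ τ χ : ℤ) • Finsupp.single χ 1 := by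
  simp [induce]

theorem restrict_single (σ χ : GLChar F) :
    restrict σ (Finsupp.single χ 1) =
      ∑ τ ∈ ofSize F (χ.size - σ.size), (jacquetMult σ τ χ : ℤ) • Finsupp.single τ 1 := by
  simp [restrict]

@[simp]
theorem induce_single_apply (σ τ χ : GLChar F) :
    induce σ (Finsupp.single τ 1) χ = jacquetMult σ τ χ := by
  have size_eq := size_eq_of_jacquetMult_ne_zero (σ := σ) (τ := τ) (χ := χ)
  simp only [induce_single, Finsupp.finsetSum_apply, Finsupp.smul_apply, Finsupp.single_apply,
    smul_eq_mul, mul_ite, mul_one, mul_zero, Finset.sum_ite_eq', mem_ofSize]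
  split_ifs with h
  · rfl
  · exact_mod_cast (not_imp_comm.mp size_eq h).symm

@[simp]
theorem restrict_single_apply (σ τ χ : GLChar F) :
    restrict σ (Finsupp.single χ 1) τ = jacquetMult σ τ χ := by
  have size_eq := size_eq_of_jacquetMult_ne_zero (σ := σ) (τ := τ) (χ := χ)
  simp only [restrict_single, Finsupp.finsetSum_apply, Finsupp.smul_apply, Finsupp.single_apply,
    smul_eq_mul, mul_ite, mul_one, mul_zero, Finset.sum_ite_eq', mem_ofSize]
  split_ifs with h
  · rfl
  · exact_mod_cast (not_imp_comm.mp size_eq (by lia)).symm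

theorem pairing_induce_left (σ : GLChar F) (f g : GLChar F →₀ ℤ) :
    orthonormalPairing _ (induce σ f) g = orthonormalPairing _ f (restrict σ g) := by
  suffices (orthonormalPairing (GLChar F) ∘ₗ induce σ) =
    (orthonormalPairing (GLChar F)).compl₂ (restrict σ) from congr($this f g)
  ext τ χ
  simp [orthonormalPairing_comm _ (Finsupp.single χ 1)]

theorem IsCuspidal.pairing_induce_induce {σ ρ : GLChar F} (hσ : σ.IsCuspidal)
    (hρ : ρ.IsCuspidal) (τ ω : GLChar F) :
    orthonormalPairing _ (induce σ (Finsupp.single τ 1)) (induce ρ (Finsupp.single ω 1)) =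
      (if σ = ρ ∧ τ = ω then 1 else 0) +
        orthonormalPairing _ (restrict ρ (Finsupp.single τ 1))
          (restrict σ (Finsupp.single ω 1)) := by
  rw [induce_single σ, restrict_single ρ]
  simp only [map_sum, map_smul, LinearMap.sum_apply, LinearMap.smul_apply,
    orthonormalPairing_single_left, induce_single_apply, restrict_single_apply, smul_eq_mul]
  exact_mod_cast hσ.mackey hρ τ ω

theorem IsCuspidal.restrict_mul_induce {σ ρ : GLChar F} (hσ : σ.IsCuspidal) (hρ : ρ.IsCuspidal) :
    restrict ρ * induce σ = (if σ = ρ then 1 else 0) + induce σ * restrict ρ := by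
  ext τ ω
  have mackey := hσ.pairing_induce_induce hρ τ ω
  rw [orthonormalPairing_comm, pairing_induce_left, ← pairing_induce_left σ _ (Finsupp.single ω 1),
    orthonormalPairing_comm _ (Finsupp.single ω 1)] at mackey
  simp only [orthonormalPairing_single_left] at mackey
  rcases eq_or_ne σ ρ with rfl | hne
  · simpa [Finsupp.single_apply] using mackey
  · simpa [hne] using mackey

/-- The commutator of `induce ρ` and `induce σ`; its adjoint is `restrictCommutator σ ρ`. -/
noncomputable def induceCommutator (σ ρ : GLChar F) : Module.End ℤ (GLChar F →₀ ℤ) :=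
  induce ρ * induce σ - induce σ * induce ρ

/-- The commutator of `restrict σ` and `restrict ρ`. -/
noncomputable def restrictCommutator (σ ρ : GLChar F) : Module.End ℤ (GLChar F →₀ ℤ) :=
  restrict σ * restrict ρ - restrict ρ * restrict σ

theorem pairing_induceCommutator_left (σ ρ : GLChar F) (f g : GLChar F →₀ ℤ) :
    orthonormalPairing _ (induceCommutator σ ρ f) g =
      orthonormalPairing _ f (restrictCommutator σ ρ g) := by
  simp [induceCommutator, restrictCommutator, pairing_induce_left]

theorem IsCuspidal.pairing_induceCommutator_self {σ ρ : GLChar F} (hσ : σ.IsCuspidal)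
    (hρ : ρ.IsCuspidal) (hne : σ ≠ ρ) (f : GLChar F →₀ ℤ) :
    orthonormalPairing _ (induceCommutator σ ρ f) (induceCommutator σ ρ f) =
      orthonormalPairing _ (restrictCommutator σ ρ f) (restrictCommutator σ ρ f) := by
  have commute : Commute (restrictCommutator σ ρ) (induceCommutator σ ρ) :=
    commute_commutator_of_heisenberg (by simpa using hσ.restrict_mul_induce hσ)
      (by simpa using hρ.restrict_mul_induce hρ)
      (by simpa [hne.symm] using hρ.restrict_mul_induce hσ)
      (by simpa [hne] using hσ.restrict_mul_induce hρ)
  have commute_apply : restrictCommutator σ ρ (induceCommutator σ ρ f) =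
      induceCommutator σ ρ (restrictCommutator σ ρ f) := congr($commute.eq f)
  rw [pairing_induceCommutator_left, commute_apply, orthonormalPairing_comm,
    pairing_induceCommutator_left]

theorem restrict_restrict_single_apply (σ ρ χ κ : GLChar F) :
    restrict ρ (restrict σ (Finsupp.single χ 1)) κ =
      ((∑ τ ∈ ofSize F (χ.size - σ.size), jacquetMult σ τ χ * jacquetMult ρ κ τ : ℕ) : ℤ) := by
  simp only [restrict_single σ, map_sum, map_smul, Finsupp.finsetSum_apply, Finsupp.smul_apply,
    restrict_single_apply, smul_eq_mul, Nat.cast_sum, Nat.cast_mul]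

theorem restrict_restrict_single_apply_ne_zero {σ ρ χ κ : GLChar F} :
    restrict ρ (restrict σ (Finsupp.single χ 1)) κ ≠ 0 ↔
      ∃ τ, jacquetMult σ τ χ ≠ 0 ∧ jacquetMult ρ κ τ ≠ 0 := by
  rw [restrict_restrict_single_apply, Nat.cast_ne_zero]
  constructor
  · intro h
    obtain ⟨τ, -, hτ⟩ := Finset.exists_ne_zero_of_sum_ne_zero h
    exact ⟨τ, left_ne_zero_of_mul hτ, right_ne_zero_of_mul hτ⟩
  · rintro ⟨τ, hχ, hκ⟩
    have := size_eq_of_jacquetMult_ne_zero hχ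
    exact fun h => mul_ne_zero hχ hκ (Finset.sum_eq_zero_iff.mp h τ (mem_ofSize.mpr (by lia)))

theorem restrictCommutator_single_apply_eq_zero_of_size_le {σ ρ χ κ : GLChar F}
    (hσ : 0 < σ.size) (h : χ.size ≤ κ.size) :
    restrictCommutator σ ρ (Finsupp.single χ 1) κ = 0 := by
  have vanish {α β : GLChar F} (hα : σ = α ∨ σ = β) :
      restrict β (restrict α (Finsupp.single χ 1)) κ = 0 := by
    by_contra hne
    obtain ⟨τ, hχτ, hτκ⟩ := restrict_restrict_single_apply_ne_zero.mp hne
    have := size_eq_of_jacquetMult_ne_zero hχτ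
    have := size_eq_of_jacquetMult_ne_zero hτκ
    rcases hα with rfl | rfl <;> lia
  simp [restrictCommutator, vanish]

theorem restrictCommutator_single_apply (σ ρ χ κ : GLChar F) :
    restrictCommutator σ ρ (Finsupp.single χ 1) κ =
      induceCommutator σ ρ (Finsupp.single κ 1) χ := by
  rw [← orthonormalPairing_single_left, ← pairing_induceCommutator_left, orthonormalPairing_comm,
    orthonormalPairing_single_left]

theorem IsCuspidal.induceCommutator_single_eq_zero {σ ρ : GLChar F} (hσ : σ.IsCuspidal)
    (hρ : ρ.IsCuspidal) (hne : σ ≠ ρ) (χ : GLChar F) :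
    induceCommutator σ ρ (Finsupp.single χ 1) = 0 := by
  induction hn : χ.size using Nat.strong_induction_on generalizing χ with
  | _ n ih =>
    rw [← orthonormalPairing_self_eq_zero, hσ.pairing_induceCommutator_self hρ hne,
      orthonormalPairing_self_eq_zero]
    ext κ
    rcases lt_or_ge κ.size χ.size with hκ | hκ
    · rw [restrictCommutator_single_apply, ih κ.size (hn ▸ hκ) κ rfl]
      simp
    · exact restrictCommutator_single_apply_eq_zero_of_size_le hσ.1 hκ

theorem IsCuspidal.commute_restrict {σ ρ : GLChar F} (hσ : σ.IsCuspidal) (hρ : ρ.IsCuspidal)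
    (hne : σ ≠ ρ) : Commute (restrict σ) (restrict ρ) := by
  suffices restrictCommutator σ ρ = 0 from sub_eq_zero.mp this
  ext χ κ
  simp [restrictCommutator_single_apply, hσ.induceCommutator_single_eq_zero hρ hne]

theorem IsCuspidal.exists_jacquetMult_ne_zero_of_constituent {σ ρ χ τ κ : GLChar F}
    (hσ : σ.IsCuspidal) (hρ : ρ.IsCuspidal) (hne : σ ≠ ρ) (hχ : jacquetMult σ τ χ ≠ 0)
    (hτ : jacquetMult ρ κ τ ≠ 0) : ∃ ω, jacquetMult ρ ω χ ≠ 0 := by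
  have hκ := restrict_restrict_single_apply_ne_zero.mpr ⟨τ, hχ, hτ⟩
  rw [← Module.End.mul_apply, ← (hσ.commute_restrict hρ hne).eq, Module.End.mul_apply] at hκ
  obtain ⟨ω, hω, -⟩ := restrict_restrict_single_apply_ne_zero.mp hκ
  exact ⟨ω, hω⟩

theorem sum_jacquetMult_mul_jacquetMult_ne_zero {σ ρ χ τ ω : GLChar F}
    (hτ : jacquetMult σ τ χ ≠ 0) (hω : jacquetMult ρ ω χ ≠ 0) :
    ∑ χ ∈ ofSize F (σ.size + τ.size), jacquetMult σ τ χ * jacquetMult ρ ω χ ≠ 0 :=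
  fun h => mul_ne_zero hτ hω <|
    Finset.sum_eq_zero_iff.mp h χ (mem_ofSize.mpr (size_eq_of_jacquetMult_ne_zero hτ))

theorem IsCuspidal.exists_jacquetMult_ne_zero_constituent {σ ρ χ τ ω : GLChar F}
    (hσ : σ.IsCuspidal) (hρ : ρ.IsCuspidal) (hne : σ ≠ ρ) (hτ : jacquetMult σ τ χ ≠ 0)
    (hω : jacquetMult ρ ω χ ≠ 0) : ∃ κ, jacquetMult ρ κ τ ≠ 0 := by
  have mackey := hσ.mackey hρ τ ω
  rw [if_neg (fun h => hne h.1), zero_add] at mackey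
  obtain ⟨κ, -, hκ⟩ := Finset.exists_ne_zero_of_sum_ne_zero
    (mackey ▸ sum_jacquetMult_mul_jacquetMult_ne_zero hτ hω)
  exact ⟨κ, left_ne_zero_of_mul hκ⟩

end GLChar

end Heisenberg

/-! ### Characters supported on finitely many cuspidals -/

section Counting

theorem exists_ne_of_sum_sq_eq_two {X : Type*} {s : Finset X} {f : X → ℕ}
    (h : ∑ x ∈ s, f x ^ 2 = 2) : ∃ a b, a ≠ b ∧ f a ≠ 0 ∧ f b ≠ 0 := by
  obtain ⟨a, ha, hfa⟩ := Finset.exists_ne_zero_of_sum_ne_zero (h.trans_ne two_ne_zero)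
  by_contra! unique
  have zero_of_ne (b : X) (hb : b ≠ a) : f b = 0 := unique a b hb.symm (ne_zero_pow two_ne_zero hfa)
  rw [Finset.sum_eq_single_of_mem a ha fun b _ hb => by simp [zero_of_ne b hb]] at h
  have : f a < 2 := by nlinarith
  interval_cases f a <;> lia

variable {F : Type} [Field F] [Fintype F]

namespace GLChar

/-- The squared length of `restrict σ χ`. -/
noncomputable def restrictNorm (σ χ : GLChar F) : ℕ :=
  ∑ τ ∈ ofSize F (χ.size - σ.size), jacquetMult σ τ χ ^ 2

theorem IsCuspidal.sum_sq_jacquetMult {σ : GLChar F} (hσ : σ.IsCuspidal) (τ : GLChar F) :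
    ∑ χ ∈ ofSize F (σ.size + τ.size), jacquetMult σ τ χ ^ 2 = 1 + restrictNorm σ τ := by
  simpa [restrictNorm, sq] using hσ.mackey hσ τ τ

theorem restrictNorm_eq_zero {σ χ : GLChar F} :
    restrictNorm σ χ = 0 ↔ ∀ τ, jacquetMult σ τ χ = 0 := by
  simp only [restrictNorm, Finset.sum_eq_zero_iff, mem_ofSize, pow_eq_zero_iff two_ne_zero]
  refine ⟨fun h τ => ?_, fun h τ _ => h τ⟩
  by_contra hτ
  have := size_eq_of_jacquetMult_ne_zero hτ
  exact hτ (h τ (by lia))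

theorem restrictNorm_eq_zero_of_size_lt {σ χ : GLChar F} (h : χ.size < σ.size) :
    restrictNorm σ χ = 0 := by
  refine restrictNorm_eq_zero.mpr fun τ => ?_
  by_contra hτ
  have := size_eq_of_jacquetMult_ne_zero hτ
  lia

theorem card_le_restrictNorm {σ χ : GLChar F} {s : Finset (GLChar F)}
    (hs : ∀ τ ∈ s, jacquetMult σ τ χ ≠ 0) : s.card ≤ restrictNorm σ χ := by
  have s_subset : s ⊆ ofSize F (χ.size - σ.size) := fun τ hτ => by
    have := size_eq_of_jacquetMult_ne_zero (hs τ hτ)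
    exact mem_ofSize.mpr (by lia)
  calc s.card = ∑ τ ∈ s, 1 := by simp
    _ ≤ ∑ τ ∈ s, jacquetMult σ τ χ ^ 2 :=
      Finset.sum_le_sum fun τ hτ => Nat.one_le_iff_ne_zero.mpr (pow_ne_zero 2 (hs τ hτ))
    _ ≤ restrictNorm σ χ := Finset.sum_le_sum_of_subset s_subset

theorem restrictNorm_pos {σ χ τ : GLChar F} (hτ : jacquetMult σ τ χ ≠ 0) :
    0 < restrictNorm σ χ :=
  card_le_restrictNorm (s := {τ}) (by simpa using hτ)

theorem two_le_restrictNorm {σ χ τ τ' : GLChar F} (hne : τ ≠ τ') (hτ : jacquetMult σ τ χ ≠ 0)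
    (hτ' : jacquetMult σ τ' χ ≠ 0) : 2 ≤ restrictNorm σ χ :=
  Finset.card_pair hne ▸ card_le_restrictNorm (s := {τ, τ'}) (by simp [hτ, hτ'])

theorem IsCuspidal.exists_common_cover {σ μ χ χ' : GLChar F} (hσ : σ.IsCuspidal)
    (hχ : jacquetMult σ μ χ ≠ 0) (hχ' : jacquetMult σ μ χ' ≠ 0) :
    ∃ α, jacquetMult σ χ α ≠ 0 ∧ jacquetMult σ χ' α ≠ 0 := by
  have μ_size : μ.size = χ.size - σ.size := by
    have := size_eq_of_jacquetMult_ne_zero hχ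
    lia
  have sum_ne_zero :
      ∑ α ∈ ofSize F (σ.size + χ.size), jacquetMult σ χ α * jacquetMult σ χ' α ≠ 0 := by
    rw [hσ.mackey hσ, ← pos_iff_ne_zero]
    exact Nat.add_pos_right _ <| Finset.sum_pos' (fun _ _ => Nat.zero_le _)
      ⟨μ, mem_ofSize.mpr μ_size, Nat.pos_of_ne_zero (mul_ne_zero hχ hχ')⟩
  obtain ⟨α, -, hα⟩ := Finset.exists_ne_zero_of_sum_ne_zero sum_ne_zero
  exact ⟨α, left_ne_zero_of_mul hα, right_ne_zero_of_mul hα⟩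

open scoped Classical in
/-- The characters of `GL(n, F)` all of whose cuspidal constituents lie in `T`. -/
noncomputable def supportedIn (T : Finset (GLChar F)) (n : ℕ) : Finset (GLChar F) :=
  {χ ∈ ofSize F n | ∀ ρ τ, ρ.IsCuspidal → jacquetMult ρ τ χ ≠ 0 → ρ ∈ T}

theorem mem_supportedIn {T : Finset (GLChar F)} {n : ℕ} {χ : GLChar F} :
    χ ∈ supportedIn T n ↔
      χ.size = n ∧ ∀ ρ τ, ρ.IsCuspidal → jacquetMult ρ τ χ ≠ 0 → ρ ∈ T := by
  simp [supportedIn]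

theorem supportedIn_empty {n : ℕ} (hn : n ≠ 0) : supportedIn (∅ : Finset (GLChar F)) n = ∅ := by
  refine Finset.eq_empty_of_forall_notMem fun χ hχ => ?_
  obtain ⟨χ_size, hχ⟩ := mem_supportedIn.mp hχ
  obtain ⟨σ, τ, hσ, hτ⟩ := exists_isCuspidal_jacquetMult_ne_zero (χ := χ) (by lia)
  exact Finset.notMem_empty σ (hχ σ τ hσ hτ)

theorem supportedIn_insert_of_not_isCuspidal {σ : GLChar F} (hσ : ¬ σ.IsCuspidal)
    (T : Finset (GLChar F)) (n : ℕ) : supportedIn (insert σ T) n = supportedIn T n := by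
  ext χ
  have mem_iff {ρ : GLChar F} (hρ : ρ.IsCuspidal) : ρ ∈ insert σ T ↔ ρ ∈ T := by
    simp [show ρ ≠ σ by rintro rfl; exact hσ hρ]
  simp +contextual [mem_supportedIn, mem_iff]

theorem IsCuspidal.filter_supportedIn_insert {σ : GLChar F} {T : Finset (GLChar F)}
    (hσ : σ.IsCuspidal) (hσT : σ ∉ T) (n : ℕ) :
    {χ ∈ supportedIn (insert σ T) n | restrictNorm σ χ = 0} = supportedIn T n := by
  ext χ
  simp only [Finset.mem_filter, mem_supportedIn, restrictNorm_eq_zero, and_assoc]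
  refine and_congr_right fun _ => ⟨?_, fun h => ⟨?_, fun τ => ?_⟩⟩
  · rintro ⟨mem_insert, hzero⟩ ρ τ hρ hτ
    refine Finset.mem_of_mem_insert_of_ne (mem_insert ρ τ hρ hτ) ?_
    rintro rfl
    exact hτ (hzero τ)
  · exact fun ρ τ hρ hτ => Finset.mem_insert_of_mem (h ρ τ hρ hτ)
  · by_contra hτ
    exact hσT (h σ τ hσ hτ)

section Supported

variable {σ : GLChar F} {T : Finset (GLChar F)}

theorem IsCuspidal.mem_supportedIn_iff (hσ : σ.IsCuspidal) (hσT : σ ∈ T) {τ χ : GLChar F}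
    (h : jacquetMult σ τ χ ≠ 0) (n : ℕ) :
    χ ∈ supportedIn T (σ.size + n) ↔ τ ∈ supportedIn T n := by
  have size_eq := size_eq_of_jacquetMult_ne_zero h
  rw [mem_supportedIn, mem_supportedIn, size_eq, Nat.add_left_cancel_iff]
  refine and_congr_right fun _ => ⟨fun hχ ρ κ hρ hκ => ?_, fun hτ ρ ω hρ hω => ?_⟩
  all_goals rcases eq_or_ne σ ρ with rfl | hne
  · exact hσT
  · obtain ⟨ω, hω⟩ := hσ.exists_jacquetMult_ne_zero_of_constituent hρ hne h hκ
    exact hχ ρ ω hρ hω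
  · exact hσT
  · obtain ⟨κ, hκ⟩ := hσ.exists_jacquetMult_ne_zero_constituent hρ hne h hω
    exact hτ ρ κ hρ hκ

theorem IsCuspidal.restrictNorm_eq_sum_supportedIn (hσ : σ.IsCuspidal) (hσT : σ ∈ T)
    {n : ℕ} {χ : GLChar F} (hχ : χ ∈ supportedIn T (σ.size + n)) :
    restrictNorm σ χ = ∑ τ ∈ supportedIn T n, jacquetMult σ τ χ ^ 2 := by
  have χ_size : χ.size = σ.size + n := (mem_supportedIn.mp hχ).1
  rw [restrictNorm, χ_size, Nat.add_sub_cancel_left]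
  refine (Finset.sum_subset (fun τ hτ => mem_ofSize.mpr (mem_supportedIn.mp hτ).1) ?_).symm
  intro τ _ hτ
  by_contra h
  exact hτ ((hσ.mem_supportedIn_iff hσT (ne_zero_pow two_ne_zero h) n).mp hχ)

theorem IsCuspidal.sum_supportedIn_sq_jacquetMult (hσ : σ.IsCuspidal) (hσT : σ ∈ T)
    {n : ℕ} {τ : GLChar F} (hτ : τ ∈ supportedIn T n) :
    ∑ χ ∈ supportedIn T (σ.size + n), jacquetMult σ τ χ ^ 2 = 1 + restrictNorm σ τ := by
  have τ_size : τ.size = n := (mem_supportedIn.mp hτ).1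
  rw [← hσ.sum_sq_jacquetMult, τ_size]
  refine Finset.sum_subset (fun χ hχ => mem_ofSize.mpr (mem_supportedIn.mp hχ).1) ?_
  intro χ _ hχ
  by_contra h
  exact hχ ((hσ.mem_supportedIn_iff hσT (ne_zero_pow two_ne_zero h) n).mpr hτ)

theorem IsCuspidal.sum_restrictNorm_supportedIn (hσ : σ.IsCuspidal) (hσT : σ ∈ T) (n : ℕ) :
    ∑ χ ∈ supportedIn T (σ.size + n), restrictNorm σ χ =
      (supportedIn T n).card + ∑ τ ∈ supportedIn T n, restrictNorm σ τ := by
  calc ∑ χ ∈ supportedIn T (σ.size + n), restrictNorm σ χ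
      = ∑ χ ∈ supportedIn T (σ.size + n), ∑ τ ∈ supportedIn T n, jacquetMult σ τ χ ^ 2 :=
        Finset.sum_congr rfl fun χ hχ => hσ.restrictNorm_eq_sum_supportedIn hσT hχ
    _ = ∑ τ ∈ supportedIn T n, (1 + restrictNorm σ τ) := by
        rw [Finset.sum_comm]
        exact Finset.sum_congr rfl fun τ hτ => hσ.sum_supportedIn_sq_jacquetMult hσT hτ
    _ = (supportedIn T n).card + ∑ τ ∈ supportedIn T n, restrictNorm σ τ := by
        simp [Finset.sum_add_distrib]

/-- `μ` occurs in the `σ`-restriction of some character for which this restriction has squared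
length at least two. -/
def IsBelowBranching (σ μ : GLChar F) : Prop :=
  ∃ χ, jacquetMult σ μ χ ≠ 0 ∧ 2 ≤ restrictNorm σ χ

open scoped Classical in
theorem IsCuspidal.card_isBelowBranching_le (hσ : σ.IsCuspidal) (hσT : σ ∈ T) (n : ℕ) :
    (Finset.filter (IsBelowBranching σ) (supportedIn T n)).card ≤
      2 * ∑ χ ∈ supportedIn T (σ.size + n), (restrictNorm σ χ - 1) := by
  let constituents (χ : GLChar F) : Finset (GLChar F) :=
    {μ ∈ supportedIn T n | jacquetMult σ μ χ ≠ 0}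
  have subset_biUnion : Finset.filter (IsBelowBranching σ) (supportedIn T n) ⊆
      {χ ∈ supportedIn T (σ.size + n) | 2 ≤ restrictNorm σ χ}.biUnion constituents := by
    intro μ hμ
    obtain ⟨hμT, χ, hχ, two_le⟩ := Finset.mem_filter.mp hμ
    exact Finset.mem_biUnion.mpr ⟨χ, Finset.mem_filter.mpr
      ⟨(hσ.mem_supportedIn_iff hσT hχ n).mpr hμT, two_le⟩, Finset.mem_filter.mpr ⟨hμT, hχ⟩⟩
  refine (Finset.card_le_card subset_biUnion).trans (Finset.card_biUnion_le.trans ?_)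
  rw [Finset.sum_filter, Finset.mul_sum]
  refine Finset.sum_le_sum fun χ _ => ?_
  have card_le : (constituents χ).card ≤ restrictNorm σ χ :=
    card_le_restrictNorm fun μ hμ => (Finset.mem_filter.mp hμ).2
  split_ifs <;> lia

/-- The two covers of `μ` have a common cover by Mackey's formula. -/
theorem IsCuspidal.exists_isBelowBranching_cover (hσ : σ.IsCuspidal) {μ : GLChar F}
    (hμ : restrictNorm σ μ = 1) (hbelow : ¬ IsBelowBranching σ μ) :
    ∃ χ, jacquetMult σ μ χ ≠ 0 ∧ restrictNorm σ χ = 1 ∧ IsBelowBranching σ χ := by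
  have cover_norm {χ : GLChar F} (hχ : jacquetMult σ μ χ ≠ 0) : restrictNorm σ χ = 1 := by
    have := restrictNorm_pos hχ
    by_contra hne
    exact hbelow ⟨χ, hχ, by lia⟩
  obtain ⟨χ, χ', hne, hχ, hχ'⟩ := exists_ne_of_sum_sq_eq_two
    (show _ = 2 by rw [hσ.sum_sq_jacquetMult μ, hμ])
  obtain ⟨α, hα, hα'⟩ := hσ.exists_common_cover hχ hχ'
  exact ⟨χ, hχ, cover_norm hχ, α, hα, two_le_restrictNorm hne hα hα'⟩

open scoped Classical in
theorem IsCuspidal.card_restrictNorm_eq_one_le (hσ : σ.IsCuspidal) (hσT : σ ∈ T) (n : ℕ) :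
    {μ ∈ supportedIn T n | restrictNorm σ μ = 1 ∧ ¬ IsBelowBranching σ μ}.card ≤
      (Finset.filter (IsBelowBranching σ) (supportedIn T (σ.size + n))).card := by
  choose! cover hcover norm_cover below_cover using
    fun μ (h : restrictNorm σ μ = 1 ∧ ¬ IsBelowBranching σ μ) =>
      hσ.exists_isBelowBranching_cover h.1 h.2
  refine Finset.card_le_card_of_injOn cover (fun μ hμ => ?_) fun μ hμ μ' hμ' heq => ?_
  · obtain ⟨hμT, hμ⟩ := Finset.mem_filter.mp hμ
    exact Finset.mem_filter.mpr
      ⟨(hσ.mem_supportedIn_iff hσT (hcover μ hμ) n).mpr hμT, below_cover μ hμ⟩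
  · have hμ := (Finset.mem_filter.mp hμ).2
    have hμ' := (Finset.mem_filter.mp hμ').2
    by_contra hne
    have := two_le_restrictNorm hne (hcover μ hμ) (heq ▸ hcover μ' hμ')
    have := norm_cover μ hμ
    lia

theorem IsCuspidal.card_supportedIn_le (hσ : σ.IsCuspidal) (hσT : σ ∈ T) (n : ℕ) :
    (supportedIn T n).card ≤ {χ ∈ supportedIn T n | restrictNorm σ χ = 0}.card +
      ∑ χ ∈ supportedIn T n, (restrictNorm σ χ - 1) +
      2 * ∑ χ ∈ supportedIn T (σ.size + n), (restrictNorm σ χ - 1) +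
      2 * ∑ χ ∈ supportedIn T (σ.size + (σ.size + n)), (restrictNorm σ χ - 1) := by
  classical
  have pointwise (χ : GLChar F) : 1 ≤ (if restrictNorm σ χ = 0 then 1 else 0) +
      (restrictNorm σ χ - 1) + (if IsBelowBranching σ χ then 1 else 0) +
      (if restrictNorm σ χ = 1 ∧ ¬ IsBelowBranching σ χ then 1 else 0) := by
    split_ifs <;> grind
  have split := Finset.sum_le_sum fun χ (_ : χ ∈ supportedIn T n) => pointwise χ
  simp only [Finset.sum_add_distrib, ← Finset.card_filter, ← Finset.card_eq_sum_ones] at split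
  have := hσ.card_isBelowBranching_le hσT n
  have := hσ.card_isBelowBranching_le hσT (σ.size + n)
  have := hσ.card_restrictNorm_eq_one_le hσT n
  lia

end Supported

theorem sum_restrictNorm_sub_one_add_card (σ : GLChar F) (s : Finset (GLChar F)) :
    ∑ χ ∈ s, (restrictNorm σ χ - 1) + s.card =
      ∑ χ ∈ s, restrictNorm σ χ + {χ ∈ s | restrictNorm σ χ = 0}.card := by
  rw [Finset.card_filter, Finset.card_eq_sum_ones, ← Finset.sum_add_distrib,
    ← Finset.sum_add_distrib]
  refine Finset.sum_congr rfl fun χ _ => ?_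
  split_ifs <;> lia

end GLChar

section Summability

variable {y z e S : ℕ → ℝ}

theorem sum_range_le_of_recurrence (hy : ∀ n, 0 ≤ y n) (hS : ∀ n, 0 ≤ S n) {k : ℕ} {c : ℝ}
    (hc : c ≤ 1 / 2) (hrec : ∀ n, S (k + n) = c * (y n + S n)) (hzero : ∀ n < k, S n = 0) (N : ℕ) :
    ∑ n ∈ Finset.range N, S n ≤ ∑ n ∈ Finset.range N, y n := by
  have sum_S_le : ∑ n ∈ Finset.range N, S n ≤
      c * (∑ n ∈ Finset.range N, y n + ∑ n ∈ Finset.range N, S n) :=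
    calc ∑ n ∈ Finset.range N, S n ≤ ∑ n ∈ Finset.range (k + N), S n :=
          Finset.sum_le_sum_of_subset_of_nonneg (Finset.range_mono (by lia)) fun n _ _ => hS n
      _ = ∑ n ∈ Finset.range N, S (k + n) := by
          rw [Finset.sum_range_add, Finset.sum_eq_zero fun n hn => hzero n (Finset.mem_range.mp hn),
            zero_add]
      _ = c * (∑ n ∈ Finset.range N, y n + ∑ n ∈ Finset.range N, S n) := by
          simp only [hrec, Finset.mul_sum, mul_add, Finset.sum_add_distrib]
  have sum_y_nonneg := Finset.sum_nonneg fun n (_ : n ∈ Finset.range N) => hy n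
  have sum_S_nonneg := Finset.sum_nonneg fun n (_ : n ∈ Finset.range N) => hS n
  have := mul_le_mul_of_nonneg_right hc (add_nonneg sum_y_nonneg sum_S_nonneg)
  linarith

theorem summable_of_add_eq_of_sum_range_le (hz : ∀ n, 0 ≤ z n) (he : ∀ n, 0 ≤ e n)
    (hadd : ∀ n, e n + y n = S n + z n)
    (hle : ∀ N, ∑ n ∈ Finset.range N, S n ≤ ∑ n ∈ Finset.range N, y n) (hsum : Summable z) :
    Summable e := by
  refine summable_of_sum_range_le he (c := ∑' n, z n) fun N => ?_
  have sum_add : ∑ n ∈ Finset.range N, e n + ∑ n ∈ Finset.range N, y n =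
      ∑ n ∈ Finset.range N, S n + ∑ n ∈ Finset.range N, z n := by
    simp only [← Finset.sum_add_distrib, hadd]
  have := hsum.sum_le_tsum (Finset.range N) fun n _ => hz n
  linarith [hle N]

theorem summable_of_le_add_shifts (hy : ∀ n, 0 ≤ y n) {k : ℕ} {a b : ℝ}
    (hle : ∀ n, y n ≤ z n + e n + a * e (n + k) + b * e (n + (k + k))) (hz : Summable z)
    (he : Summable e) : Summable y :=
  .of_nonneg_of_le hy hle <| ((hz.add he).add (((summable_nat_add_iff k).mpr he).mul_left a)).add
    (((summable_nat_add_iff (k + k)).mpr he).mul_left b)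

end Summability

namespace GLChar

theorem IsCuspidal.summable_card_supportedIn_insert {σ : GLChar F} {T : Finset (GLChar F)}
    (hσ : σ.IsCuspidal) (hσT : σ ∉ T) {w : ℝ} (hw : 0 < w) (hw_le : w ≤ 1 / 2)
    (hsum : Summable fun n => ((supportedIn T n).card : ℝ) * w ^ n) :
    Summable fun n => ((supportedIn (insert σ T) n).card : ℝ) * w ^ n := by
  have hσ_mem := Finset.mem_insert_self σ T
  let norms (n : ℕ) : ℝ := (∑ χ ∈ supportedIn (insert σ T) n, restrictNorm σ χ : ℕ) * w ^ n
  let excess (n : ℕ) : ℝ := (∑ χ ∈ supportedIn (insert σ T) n, (restrictNorm σ χ - 1) : ℕ) * w ^ n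
  have add_eq (n : ℕ) : excess n + (supportedIn (insert σ T) n).card * w ^ n =
      norms n + (supportedIn T n).card * w ^ n := by
    have := sum_restrictNorm_sub_one_add_card σ (supportedIn (insert σ T) n)
    rw [hσ.filter_supportedIn_insert hσT] at this
    simp only [excess, norms, ← add_mul]
    exact_mod_cast congr(($this : ℝ) * w ^ n)
  have norms_rec (n : ℕ) : norms (σ.size + n) =
      w ^ σ.size * ((supportedIn (insert σ T) n).card * w ^ n + norms n) := by
    simp only [norms, hσ.sum_restrictNorm_supportedIn hσ_mem]
    push_cast
    ring
  have norms_zero (n : ℕ) (hn : n < σ.size) : norms n = 0 := by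
    simp only [norms]
    rw [Finset.sum_eq_zero fun χ hχ =>
      restrictNorm_eq_zero_of_size_lt ((mem_supportedIn.mp hχ).1.trans_lt hn)]
    simp
  have pow_le : w ^ σ.size ≤ 1 / 2 :=
    (pow_le_of_le_one hw.le (by linarith) hσ.1.ne').trans hw_le
  have summable_excess : Summable excess :=
    summable_of_add_eq_of_sum_range_le (fun n => by positivity) (fun n => by positivity) add_eq
      (sum_range_le_of_recurrence (fun n => by positivity) (fun n => by positivity) pow_le
        norms_rec norms_zero) hsum
  refine summable_of_le_add_shifts (fun n => by positivity) (k := σ.size)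
    (a := 2 * (w ^ σ.size)⁻¹) (b := 2 * (w ^ σ.size * w ^ σ.size)⁻¹) (fun n => ?_)
    hsum summable_excess
  have card_le := hσ.card_supportedIn_le hσ_mem n
  rw [hσ.filter_supportedIn_insert hσT] at card_le
  refine (mul_le_mul_of_nonneg_right (Nat.cast_le.mpr card_le) (pow_nonneg hw.le n)).trans_eq ?_
  simp only [excess, pow_add, add_comm n, add_assoc σ.size]
  push_cast
  field_simp

theorem summable_card_supportedIn (T : Finset (GLChar F)) :
    Summable fun n => ((supportedIn T n).card : ℝ) * (Fintype.card F : ℝ)⁻¹ ^ n := by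
  have two_le : (2 : ℝ) ≤ Fintype.card F := by exact_mod_cast Fintype.one_lt_card (α := F)
  induction T using Finset.induction_on with
  | empty =>
    refine summable_of_ne_finset_zero (s := {0}) fun n hn => ?_
    simp [supportedIn_empty (F := F) (by simpa using hn)]
  | insert σ T hσT ih =>
    by_cases hσ : σ.IsCuspidal
    · exact hσ.summable_card_supportedIn_insert hσT (by positivity)
        (by simpa using inv_anti₀ two_pos two_le) ih
    · simpa only [supportedIn_insert_of_not_isCuspidal hσ] using ih

end GLChar

end Counting

/-! ### The number of irreducible characters -/

section LowerBound

open Polynomial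

variable {F : Type} [Field F]

theorem exists_charpoly_eq {n : ℕ} {p : F[X]} (hp : p.Monic) (hn : p.natDegree = n) :
    ∃ M : Matrix (Fin n) (Fin n) F, M.charpoly = p := by
  let b := AdjoinRoot.powerBasis' hp
  have dim_eq : b.dim = n := by simp [b, hn]
  refine ⟨reindex (finCongr dim_eq) (finCongr dim_eq) (Algebra.leftMulMatrix b.basis b.gen), ?_⟩
  rw [charpoly_reindex, charpoly_leftMulMatrix, AdjoinRoot.powerBasis'_gen,
    AdjoinRoot.minpoly_root hp.ne_zero, hp.leadingCoeff, inv_one, C_1, mul_one]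

theorem exists_generalLinearGroup_charpoly_eq {n : ℕ} {p : F[X]} (hp : p.Monic)
    (hn : p.natDegree = n) (hzero : p.coeff 0 ≠ 0) : ∃ u : GL (Fin n) F, u.1.charpoly = p := by
  obtain ⟨M, hM⟩ := exists_charpoly_eq hp hn
  have isUnit_M : IsUnit M := by
    simpa [isUnit_iff_isUnit_det, det_eq_sign_charpoly_coeff, hM] using hzero
  exact ⟨isUnit_M.unit, hM⟩

theorem charpoly_eq_of_isConj {ι : Type*} [Fintype ι] [DecidableEq ι] {u v : GL ι F}
    (h : IsConj u v) : u.1.charpoly = v.1.charpoly := by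
  obtain ⟨c, rfl⟩ := isConj_iff.mp h
  simp [coe_units_inv]

theorem card_monic_natDegree_eq [Fintype F] (m : ℕ) :
    Nat.card {p : F[X] // p.Monic ∧ p.natDegree = m} = Fintype.card F ^ m := by
  rw [Nat.card_congr ((monicEquivDegreeLT m).trans (degreeLTEquiv F m).toEquiv)]
  simp

theorem card_sub_one_mul_card_pow_le [Fintype F] (m : ℕ) :
    (Fintype.card F - 1) * Fintype.card F ^ m ≤ Nat.card (ConjClasses (GL (Fin (m + 1)) F)) := by
  have exists_u (x : Fˣ × {p : F[X] // p.Monic ∧ p.natDegree = m}) :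
      ∃ u : GL (Fin (m + 1)) F, u.1.charpoly = x.2.1 * X + C x.1.1 := by
    obtain ⟨a, p, hp, hm⟩ := x
    have degree_lt : (C a.1).degree < (p * X).degree := by
      rw [degree_C a.ne_zero, degree_mul, degree_X]
      exact lt_of_lt_of_le one_pos (le_add_of_nonneg_left (zero_le_degree_iff.mpr hp.ne_zero))
    refine exists_generalLinearGroup_charpoly_eq ((hp.mul monic_X).add_of_left degree_lt) ?_
      (by simp)
    rw [natDegree_add_eq_left_of_degree_lt degree_lt, natDegree_mul_X hp.ne_zero, hm]
  choose u hu using exists_u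
  have mk_injective : Function.Injective fun x => ConjClasses.mk (u x) := by
    rintro ⟨a, p⟩ ⟨b, q⟩ h
    have eq := charpoly_eq_of_isConj (ConjClasses.mk_eq_mk_iff_isConj.mp h)
    simp only [hu] at eq
    have a_eq_b : a = b := by simpa [Units.ext_iff] using congr(($eq).coeff 0)
    have p_eq_q : p = q := by simpa [a_eq_b, Subtype.ext_iff] using eq
    rw [a_eq_b, p_eq_q]
  have := Finite.of_surjective _ (ConjClasses.mk_surjective (α := GL (Fin (m + 1)) F))
  simpa [card_monic_natDegree_eq, Nat.card_units] using
    Nat.card_le_card_of_injective _ mk_injective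

theorem card_pow_le_two_mul_card_irr [Fintype F] (n : ℕ) :
    Fintype.card F ^ n ≤ 2 * Nat.card (Irr (GL (Fin n) F)) := by
  rw [Irr.card_eq_card_conjClasses]
  cases n with
  | zero =>
    have := Finite.of_surjective _ (ConjClasses.mk_surjective (α := GL (Fin 0) F))
    have : 0 < Nat.card (ConjClasses (GL (Fin 0) F)) := Nat.card_pos
    rw [pow_zero]
    lia
  | succ m =>
    have one_lt : 1 < Fintype.card F := Fintype.one_lt_card
    calc Fintype.card F ^ (m + 1) = Fintype.card F * Fintype.card F ^ m := pow_succ' _ _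
      _ ≤ 2 * (Fintype.card F - 1) * Fintype.card F ^ m := Nat.mul_le_mul_right _ (by lia)
      _ ≤ 2 * Nat.card (ConjClasses (GL (Fin (m + 1)) F)) := by
        rw [mul_assoc]
        exact Nat.mul_le_mul_left 2 (card_sub_one_mul_card_pow_le m)

end LowerBound

/-! ### Divisibility of character values -/

section Divisibility

theorem exists_isIdempotentElem_pow {M : Type*} [Monoid M] [Finite M] (x : M) :
    ∃ k, 0 < k ∧ IsIdempotentElem (x ^ k) := by
  let : TopologicalSpace M := ⊥
  have : DiscreteTopology M := ⟨rfl⟩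
  obtain ⟨_, ⟨k, hk, rfl⟩, idem⟩ := exists_idempotent_in_compact_subsemigroup
    (fun _ => continuous_of_discreteTopology) {y : M | ∃ k, 0 < k ∧ x ^ k = y}
    ⟨x, 1, one_pos, pow_one x⟩
    (Set.toFinite _).isCompact (by
      rintro _ ⟨k, hk, rfl⟩ _ ⟨l, -, rfl⟩
      exact ⟨k + l, by lia, pow_add x k l⟩)
  exact ⟨k, hk, idem⟩

theorem exists_pow_eq_one_isUnit_pow_sub_one {F : Type*} [Field F] {L : ℕ} (hL : (L : F) ≠ 0) :
    ∃ d, 0 < d ∧ ∃ c : Matrix (Fin d) (Fin d) F,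
      c ^ L = 1 ∧ ∀ j, 0 < j → j < L → IsUnit (c ^ j - 1) := by
  have : NeZero (L : F) := ⟨hL⟩
  have : NeZero L := .of_neZero_natCast F
  let E := CyclotomicField L F
  have hζ : IsPrimitiveRoot (IsCyclotomicExtension.zeta L F E) L :=
    IsCyclotomicExtension.zeta_spec L F E
  have : FiniteDimensional F E := IsCyclotomicExtension.finiteDimensional {L} F E
  let mulMatrix := Algebra.leftMulMatrix (Module.finBasis F E)
  refine ⟨_, Module.finrank_pos (R := F) (M := E), mulMatrix (IsCyclotomicExtension.zeta L F E), ?_,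
    fun j hj hjL => ?_⟩
  · rw [← map_pow, hζ.pow_eq_one, map_one]
  · rw [← map_pow, ← map_one mulMatrix, ← map_sub]
    exact (sub_ne_zero.mpr (hζ.pow_ne_one_of_pos_of_lt hj.ne' hjL)).isUnit.map mulMatrix

section Blocks

variable {F ι κ : Type*} [Field F] [Fintype ι] [DecidableEq ι] [Fintype κ] [DecidableEq κ]

theorem eq_zero_of_mul_eq_mul_of_isUnit_of_isNilpotent {A : Matrix ι ι F} {C : Matrix κ κ F}
    (hA : IsUnit (A - 1)) (hC : IsNilpotent (C - 1)) {X : Matrix ι κ F} (h : A * X = X * C) :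
    X = 0 := by
  obtain ⟨m, hm⟩ := hC
  have mul_eq : (A - 1) * X = X * (C - 1) := by
    rw [Matrix.sub_mul, Matrix.mul_sub, h, Matrix.one_mul, Matrix.mul_one]
  have pow_mul_eq (k : ℕ) : (A - 1) ^ k * X = X * (C - 1) ^ k := by
    induction k with
    | zero => simp
    | succ k ih =>
      rw [pow_succ, Matrix.mul_assoc, mul_eq, ← Matrix.mul_assoc, ih, Matrix.mul_assoc, ← pow_succ]
  obtain ⟨u, hu⟩ := hA.pow m
  calc X = u⁻¹.val * (u.val * X) := by rw [← Matrix.mul_assoc, Units.inv_mul, Matrix.one_mul]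
    _ = 0 := by rw [hu, pow_mul_eq, hm, Matrix.mul_zero, Matrix.mul_zero]

/-- Pairs of square matrices, as block diagonal matrices. -/
@[simps]
def blockDiagHom (F ι κ : Type*) [Field F] [Fintype ι] [DecidableEq ι] [Fintype κ]
    [DecidableEq κ] : Matrix ι ι F × Matrix κ κ F →+* Matrix (ι ⊕ κ) (ι ⊕ κ) F where
  toFun M := fromBlocks M.1 0 0 M.2
  map_one' := fromBlocks_one
  map_mul' M N := by simp [fromBlocks_multiply]
  map_zero' := fromBlocks_zero
  map_add' M N := by simp [fromBlocks_add]

theorem isNilpotent_fromBlocks_one_sub_one {u : Matrix ι ι F} (hu : IsNilpotent (u - 1)) :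
    IsNilpotent (fromBlocks u 0 0 (1 : Matrix κ κ F) - 1) := by
  have prod_nilpotent : IsNilpotent (((u, 1) : Matrix ι ι F × Matrix κ κ F) - 1) := by
    obtain ⟨m, hm⟩ := hu
    exact ⟨m + 1, Prod.ext (by simp [pow_succ, hm]) (by simp)⟩
  have := prod_nilpotent.map (blockDiagHom F ι κ)
  rwa [map_sub, map_one] at this

theorem exists_eq_fromBlocks_of_commute {F ι κ : Type*} [Field F] [Fintype ι] [DecidableEq ι]
    [Fintype κ] {M : Matrix (ι ⊕ κ) (ι ⊕ κ) F}
    (h : Commute M (fromBlocks 1 0 0 0)) : ∃ A C, M = fromBlocks A 0 0 C := by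
  have eq := h.eq
  rw [← fromBlocks_toBlocks M, fromBlocks_multiply, fromBlocks_multiply, fromBlocks_inj] at eq
  refine ⟨M.toBlocks₁₁, M.toBlocks₂₂, ?_⟩
  conv_lhs => rw [← fromBlocks_toBlocks M]
  simp_all

theorem exists_conj_eq_fromBlocks_isUnit_isNilpotent {F : Type} [Field F] [Finite F]
    (g : Matrix ι ι F) :
    ∃ (m n : ℕ) (a : MatrixIso F (Fin m ⊕ Fin n) ι) (v : Matrix (Fin m) (Fin m) F)
      (u : Matrix (Fin n) (Fin n) F),
      a.mat * g * a.inv = fromBlocks v 0 0 u ∧ IsUnit (v - 1) ∧ IsNilpotent (u - 1) := by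
  obtain ⟨k, hk, idem⟩ := exists_isIdempotentElem_pow (g - 1)
  obtain ⟨m, n, a, ha⟩ := exists_matrixIso_conj_eq_fromBlocks_one idem
  let r := a.conjRingEquiv
  have r_pow : r ((g - 1) ^ k) = fromBlocks 1 0 0 0 := ha
  have commute_pow : Commute g ((g - 1) ^ k) :=
    ((Commute.refl g).sub_right (Commute.one_right g)).pow_right k
  obtain ⟨v, u, hvu⟩ := exists_eq_fromBlocks_of_commute (r_pow ▸ commute_pow.map r)
  have pow_eq : blockDiagHom F _ _ (((v, u) - 1) ^ k) = fromBlocks 1 0 0 0 := by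
    rw [map_pow, map_sub, map_one, ← r_pow, map_pow, map_sub, map_one, hvu, blockDiagHom_apply]
  obtain ⟨v_pow, -, -, u_pow⟩ := fromBlocks_inj.mp pow_eq
  exact ⟨m, n, a, v, u, hvu, IsUnit.of_pow_eq_one v_pow hk.ne', k, u_pow⟩

end Blocks

namespace GLChar

variable {F : Type} [Field F] {ι κ : Type*} [Fintype ι] [DecidableEq ι] [Fintype κ]
  [DecidableEq κ]

theorem eval_fromBlocks_one_add (χ : GLChar F) (u : Matrix ι ι F) (d N : ℕ) :
    χ.eval (fromBlocks u 0 0 (1 : Matrix (Fin (d + N)) (Fin (d + N)) F)) =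
      χ.eval (fromBlocks (1 : Matrix (Fin d) (Fin d) F) 0 0
        (fromBlocks u 0 0 (1 : Matrix (Fin N) (Fin N) F))) := by
  let e : Fin d ⊕ (ι ⊕ Fin N) ≃ ι ⊕ Fin (d + N) :=
    (Equiv.sumAssoc (Fin d) ι (Fin N)).symm.trans <|
      ((Equiv.sumComm (Fin d) ι).sumCongr (Equiv.refl _)).trans <|
        (Equiv.sumAssoc ι (Fin d) (Fin N)).trans ((Equiv.refl ι).sumCongr finSumFinEquiv)
  rw [← χ.eval_submatrix e]
  congr 1
  have castAdd_ne_natAdd (i : Fin d) (j : Fin N) : Fin.castAdd N i ≠ Fin.natAdd d j := by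
    simp only [ne_eq, Fin.ext_iff, Fin.val_castAdd, Fin.val_natAdd]
    lia
  ext (i | i | i) (j | j | j) <;>
    simp [e, Matrix.one_apply, castAdd_ne_natAdd, (castAdd_ne_natAdd _ _).symm]

theorem eval_fromBlocks_assoc {μ : Type*} [Fintype μ] [DecidableEq μ] (χ : GLChar F)
    (A : Matrix ι ι F) (B : Matrix κ κ F) (C : Matrix μ μ F) :
    χ.eval (fromBlocks (fromBlocks A 0 0 B) 0 0 C) =
      χ.eval (fromBlocks A 0 0 (fromBlocks B 0 0 C)) := by
  rw [← χ.eval_submatrix (Equiv.sumAssoc ι κ μ)]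
  congr 1
  ext ((i | i) | i) ((j | j) | j) <;> simp

theorem isIntegral_average_eval_mul_pow [Finite F] (χ : GLChar F) {y c : Matrix ι ι F}
    (hyc : Commute y c) {m : ℕ} (hm : 0 < m) (hc : c ^ m = 1) :
    IsIntegral ℤ ((m : ℂ)⁻¹ * ∑ j ∈ Finset.range m, χ.eval (y * c ^ j)) := by
  have hc_unit : IsUnit c := IsUnit.of_pow_eq_one hc hm.ne'
  obtain ⟨c, rfl⟩ := hc_unit
  by_cases hy : IsUnit y; swap
  · have eval_eq_zero (j : ℕ) : χ.eval (y * c.val ^ j) = 0 :=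
      χ.eval_of_not_isUnit (by
        rwa [← Units.val_pow_eq_pow_val, Units.isUnit_mul_units])
    simp [eval_eq_zero, isIntegral_zero]
  obtain ⟨y, rfl⟩ := hy
  by_cases h : Fintype.card ι = χ.size
  · obtain ⟨a⟩ := nonempty_matrixIso h
    simp only [← Units.val_pow_eq_pow_val, ← Units.val_mul, eval_coe χ a, map_mul, map_pow]
    refine χ.irr.isIntegral_average_mul_pow (Commute.map (Units.ext hyc) a.conj) hm ?_
    rw [← map_pow, show c ^ m = 1 from Units.ext (by simpa using hc), map_one]
  · simp [χ.eval_of_card_ne h, isIntegral_zero]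

theorem isIntegral_average_eval_fromBlocks_pow [Finite F] (χ : GLChar F) {c : Matrix ι ι F} {m : ℕ}
    (hm : 0 < m) (hc : c ^ m = 1) (C : Matrix κ κ F) :
    IsIntegral ℤ ((m : ℂ)⁻¹ * ∑ j ∈ Finset.range m, χ.eval (fromBlocks (c ^ j) 0 0 C)) := by
  have mul_pow_eq (j : ℕ) : blockDiagHom F ι κ (1, C) * blockDiagHom F ι κ (c, 1) ^ j =
      fromBlocks (c ^ j) 0 0 C := by
    rw [← map_pow, ← map_mul, blockDiagHom_apply]
    simp
  have pow_eq_one : blockDiagHom F ι κ (c, 1) ^ m = 1 := by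
    rw [← map_pow, Prod.pow_mk, hc, one_pow, ← Prod.one_eq_mk, map_one]
  have average := χ.isIntegral_average_eval_mul_pow
    (Commute.map (show Commute (1, C) (c, 1) by simp [commute_iff_eq]) (blockDiagHom F ι κ))
    hm pow_eq_one
  simpa only [mul_pow_eq] using average

theorem isIntegral_eval [Finite F] (χ : GLChar F) (M : Matrix ι ι F) :
    IsIntegral ℤ (χ.eval M) := by
  simpa using χ.isIntegral_average_eval_mul_pow (Commute.one_right M) one_pos (one_pow 1)

variable [Fintype F]

theorem IsCuspidal.exists_jacquetMult_ne_zero_of_size_lt {σ ρ χ τ η : GLChar F}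
    (hσ : σ.IsCuspidal) (hlt : ρ.size < σ.size) (hτ : jacquetMult σ τ χ ≠ 0)
    (hη : jacquetMult ρ η χ ≠ 0) : ∃ κ, jacquetMult σ κ η ≠ 0 := by
  have mackey := hσ.sum_jacquetMult_mul_jacquetMult hlt.le τ η
  rw [if_neg (by rintro ⟨rfl, -⟩; exact lt_irrefl _ hlt), zero_add] at mackey
  obtain ⟨κ, -, hκ⟩ := Finset.exists_ne_zero_of_sum_ne_zero
    (mackey ▸ sum_jacquetMult_mul_jacquetMult_ne_zero hτ hη)
  exact ⟨κ, right_ne_zero_of_mul hκ⟩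

/-- In the expansion of `χ.eval` along the two blocks, the first factor is too small to contain `σ`,
so `σ` occurs in every second factor. -/
theorem IsCuspidal.natDvdAlg_eval_fromBlocks {σ χ τ : GLChar F} (hσ : σ.IsCuspidal)
    (hχ : jacquetMult σ τ χ ≠ 0) {A : Matrix ι ι F} {C : Matrix κ κ F} (hA : IsUnit (A - 1))
    (hC : IsNilpotent (C - 1)) (hcard : Fintype.card ι < σ.size) {L : ℕ}
    (hL : ∀ η ω : GLChar F, jacquetMult σ ω η ≠ 0 → NatDvdAlg L (η.eval C)) :
    NatDvdAlg L (χ.eval (fromBlocks A 0 0 C)) := by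
  by_cases hunit : IsUnit (fromBlocks A 0 0 C); swap
  · simp [NatDvdAlg, χ.eval_of_not_isUnit hunit, isIntegral_zero]
  obtain ⟨⟨A, rfl⟩, C, rfl⟩ := isUnit_fromBlocks_zero₂₁.mp hunit
  rw [NatDvdAlg, eval_fromBlocks_eq_jacquetChar χ fun X hX =>
    eq_zero_of_mul_eq_mul_of_isUnit_of_isNilpotent hA hC hX, jacquetChar, Finset.sum_div]
  refine IsIntegral.sum _ fun ρ hρ => ?_
  rw [Finset.sum_div]
  refine IsIntegral.sum _ fun η _ => ?_
  by_cases hη : jacquetMult ρ η χ = 0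
  · simp [hη, isIntegral_zero]
  obtain ⟨ω, hω⟩ :=
    hσ.exists_jacquetMult_ne_zero_of_size_lt (by rwa [mem_ofSize.mp hρ]) hχ hη
  rw [mul_div_assoc, mul_div_assoc]
  exact (isIntegral_algebraMap (R := ℤ) (x := (jacquetMult ρ η χ : ℤ))).mul
    ((ρ.isIntegral_eval A.val).mul (hL η ω hω))

/-- Average `χ` over the powers of `1 ⊕ c ⊕ 1`: the nontrivial powers contribute multiples of `L`
by induction on `N`. -/
theorem IsCuspidal.natDvdAlg_eval_unipotent_fromBlocks_one {σ : GLChar F} (hσ : σ.IsCuspidal)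
    {L d : ℕ} (hL : 0 < L) (hd : 0 < d) {c : Matrix (Fin d) (Fin d) F} (hc : c ^ L = 1)
    (hcu : ∀ j, 0 < j → j < L → IsUnit (c ^ j - 1)) {u : Matrix ι ι F} (hu : IsNilpotent (u - 1))
    (hcard : Fintype.card ι + d < σ.size) (N : ℕ) {χ τ : GLChar F} (hχ : jacquetMult σ τ χ ≠ 0) :
    NatDvdAlg L (χ.eval (fromBlocks u 0 0 (1 : Matrix (Fin N) (Fin N) F))) := by
  induction N using Nat.strong_induction_on generalizing χ τ with
  | _ N ih =>
    by_cases hN : Fintype.card (ι ⊕ Fin N) = χ.size; swap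
    · simp [NatDvdAlg, χ.eval_of_card_ne hN, isIntegral_zero]
    rw [Fintype.card_sum, Fintype.card_fin, size_eq_of_jacquetMult_ne_zero hχ] at hN
    obtain ⟨N, rfl⟩ := Nat.exists_eq_add_of_le (show d ≤ N by lia)
    let U : Matrix (ι ⊕ Fin N) (ι ⊕ Fin N) F := fromBlocks u 0 0 1
    let term (j : ℕ) : ℂ := χ.eval (fromBlocks (c ^ j) 0 0 U)
    have average : IsIntegral ℤ ((L : ℂ)⁻¹ * ∑ j ∈ Finset.range L, term j) :=
      χ.isIntegral_average_eval_fromBlocks_pow hL hc U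
    have dvd_term (j : ℕ) (hj : j ∈ (Finset.range L).erase 0) :
        IsIntegral ℤ ((L : ℂ)⁻¹ * term j) := by
      rw [Finset.mem_erase, Finset.mem_range] at hj
      rw [inv_mul_eq_div]
      exact hσ.natDvdAlg_eval_fromBlocks hχ (hcu j (by lia) hj.2)
        (isNilpotent_fromBlocks_one_sub_one hu) (by rw [Fintype.card_fin]; lia)
        fun η ω hω => ih N (by lia) hω
    rw [← Finset.add_sum_erase _ _ (Finset.mem_range.mpr hL), mul_add, Finset.mul_sum] at average
    rw [NatDvdAlg, eval_fromBlocks_one_add, ← inv_mul_eq_div]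
    simpa [term, U] using average.sub (IsIntegral.sum _ dvd_term)

theorem IsCuspidal.natDvdAlg_eval_fromBlocks_one {σ : GLChar F} (hσ : σ.IsCuspidal)
    {L d : ℕ} (hL : 0 < L) (hd : 0 < d) {c : Matrix (Fin d) (Fin d) F} (hc : c ^ L = 1)
    (hcu : ∀ j, 0 < j → j < L → IsUnit (c ^ j - 1)) (g : Matrix ι ι F)
    (hcard : Fintype.card ι + d < σ.size) (N : ℕ) {χ τ : GLChar F} (hχ : jacquetMult σ τ χ ≠ 0) :
    NatDvdAlg L (χ.eval (fromBlocks g 0 0 (1 : Matrix (Fin N) (Fin N) F))) := by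
  obtain ⟨m, n, a, v, u, ha, hv, hu⟩ := exists_conj_eq_fromBlocks_isUnit_isNilpotent g
  have card_eq : m + n = Fintype.card ι := by simpa using a.card_eq
  have eval_eq : χ.eval (fromBlocks g 0 0 (1 : Matrix (Fin N) (Fin N) F)) =
      χ.eval (fromBlocks v 0 0 (fromBlocks u 0 0 (1 : Matrix (Fin N) (Fin N) F))) := by
    rw [← eval_fromBlocks_assoc, ← ha, ← χ.eval_conj (a.sumCongr (.ofEquiv (.refl (Fin N))))]
    simp [fromBlocks_multiply]
  rw [eval_eq]
  refine hσ.natDvdAlg_eval_fromBlocks hχ hv (isNilpotent_fromBlocks_one_sub_one hu)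
    (by rw [Fintype.card_fin]; lia) fun η ω hω => ?_
  exact hσ.natDvdAlg_eval_unipotent_fromBlocks_one hL hd hc hcu hu
    (by rw [Fintype.card_fin]; lia) N hω

end GLChar

end Divisibility

section Limit

variable {F : Type} [Field F]

namespace GLChar

theorem eval_mk_fromBlocks_one {n₀ n : ℕ} (h : n₀ ≤ n) (g : GL (Fin n₀) F)
    (χ : Irr (GL (Fin n) F)) :
    (mk n χ).eval (fromBlocks g.val 0 0 (1 : Matrix (Fin (n - n₀)) (Fin (n - n₀)) F)) =
      χ.1 (glEmbed h g) := by
  let e : Fin n₀ ⊕ Fin (n - n₀) ≃ Fin n := finSumFinEquiv.trans (finCongr (Nat.add_sub_cancel' h))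
  rw [← (mk n χ).eval_submatrix e.symm]
  exact (mk n χ).eval_coe_irr (glEmbed h g)

theorem exists_forall_natDvdAlg_apply_glEmbed [Fintype F] {L : ℕ} (hL : (L : F) ≠ 0) :
    ∃ d : ℕ, ∀ {n₀ n : ℕ} (h : n₀ ≤ n) (g : GL (Fin n₀) F) (χ : Irr (GL (Fin n) F))
      {σ τ : GLChar F}, σ.IsCuspidal → jacquetMult σ τ (mk n χ) ≠ 0 → n₀ + d < σ.size →
        NatDvdAlg L (χ.1 (glEmbed h g)) := by
  obtain ⟨d, hd, c, hc, hcu⟩ := exists_pow_eq_one_isUnit_pow_sub_one hL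
  refine ⟨d, fun h g χ σ τ hσ hχ hlt => ?_⟩
  rw [← eval_mk_fromBlocks_one h g χ]
  exact hσ.natDvdAlg_eval_fromBlocks_one (Nat.pos_of_ne_zero (by rintro rfl; simp at hL)) hd hc hcu
    g.val (by rwa [Fintype.card_fin]) _ hχ

end GLChar

theorem natCast_ne_zero_of_coprime_card [Fintype F] {L : ℕ}
    (h : Nat.Coprime (Fintype.card F) L) : (L : F) ≠ 0 := by
  intro h0
  have := (Nat.isCoprime_iff_coprime.mpr h).map (Int.castRingHom F)
  simp [h0] at this

theorem exists_card_not_natDvdAlg_le [Fintype F] {L : ℕ} (hL : (L : F) ≠ 0) {n₀ : ℕ}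
    (g : GL (Fin n₀) F) :
    ∃ T : Finset (GLChar F), ∀ (n : ℕ) (h : n₀ ≤ n),
      Nat.card {χ : GL (Fin n) F → ℂ // IsIrrChar _ χ ∧ ¬ NatDvdAlg L (χ (glEmbed h g))} ≤
        (GLChar.supportedIn T n).card := by
  obtain ⟨d, hd⟩ := GLChar.exists_forall_natDvdAlg_apply_glEmbed hL
  refine ⟨(Finset.range (n₀ + d + 1)).biUnion (GLChar.ofSize F), fun n h => ?_⟩
  rw [← Nat.card_eq_finsetCard]
  refine Nat.card_le_card_of_injective
    (fun χ => ⟨⟨n, χ.1, χ.2.1⟩, GLChar.mem_supportedIn.mpr ⟨rfl, fun ρ τ hρ hτ => ?_⟩⟩) ?_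
  · by_contra hT
    simp only [Finset.mem_biUnion, Finset.mem_range, GLChar.mem_ofSize, exists_eq_right',
      not_lt] at hT
    exact χ.2.2 (hd h g ⟨χ.1, χ.2.1⟩ hρ hτ hT)
  · rintro ⟨χ, _⟩ ⟨ψ, _⟩ eq
    simpa using eq

end Limit

open Filter in
theorem ell_power_divisibility_of_character_values_general (F : Type) [Field F] [Fintype F]
    (L : ℕ) (hL : Nat.Coprime (Fintype.card F) L) (n₀ : ℕ) (g : GL (Fin n₀) F) :
    Tendsto
      (fun n : ℕ =>
        (Nat.card {χ : GL (Fin (n₀ + n)) F → ℂ //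
            IsIrrChar _ χ ∧ ¬ NatDvdAlg L (χ (glEmbed (Nat.le_add_right n₀ n) g))} : ℝ) /
          (Nat.card {χ : GL (Fin (n₀ + n)) F → ℂ // IsIrrChar _ χ} : ℝ))
      atTop (nhds 0) := by
  obtain ⟨T, hT⟩ := exists_card_not_natDvdAlg_le (natCast_ne_zero_of_coprime_card hL) g
  have majorant : Tendsto (fun n => ((GLChar.supportedIn T (n₀ + n)).card : ℝ) *
      (Fintype.card F : ℝ)⁻¹ ^ (n₀ + n) * 2) atTop (nhds 0) := by
    simpa [add_comm] using ((GLChar.summable_card_supportedIn T).tendsto_atTop_zero.comp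
      (tendsto_add_atTop_nat n₀)).mul_const 2
  refine squeeze_zero (fun n => by positivity) (fun n => ?_) majorant
  have : 0 < Fintype.card F := Fintype.card_pos
  have card_irr : (Fintype.card F : ℝ) ^ (n₀ + n) ≤ 2 * Nat.card (Irr (GL (Fin (n₀ + n)) F)) := by
    exact_mod_cast card_pow_le_two_mul_card_irr (n₀ + n)
  calc _ ≤ ((GLChar.supportedIn T (n₀ + n)).card : ℝ) / ((Fintype.card F : ℝ) ^ (n₀ + n) / 2) := by
        gcongr
        · exact hT _ _
        · rw [div_le_iff₀' two_pos]
          exact card_irr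
    _ = _ := by rw [inv_pow]; field_simp

theorem ell_power_divisibility_of_character_values
    (ℓ : ℕ) (hℓ : ℓ.Prime) (hodd : Odd ℓ)
    (q : ℕ) (hq : IsPrimePow q) (hco : Nat.Coprime q ℓ)
    (F : Type) [Field F] [Fintype F] (hFq : Fintype.card F = q)
    (r n₀ : ℕ) (hr : 0 < r) (hn₀ : 0 < n₀) (g : GL (Fin n₀) F) :
    Filter.Tendsto
      (fun n : ℕ =>
        (Nat.card {χ : GL (Fin (n₀ + n)) F → ℂ //
            IsIrrChar _ χ ∧ ¬ NatDvdAlg (ℓ ^ r) (χ (glEmbed (Nat.le_add_right n₀ n) g))} : ℝ) /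
          (Nat.card {χ : GL (Fin (n₀ + n)) F → ℂ // IsIrrChar _ χ} : ℝ))
      Filter.atTop (nhds 0) :=
  ell_power_divisibility_of_character_values_general F (ℓ ^ r) (hFq ▸ hco.pow_right r) n₀ g
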